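/- Let q ≥ 25 be a prime power that is a perfect square and let ε > 0. Then for every N there exist an integer n ≥ N and an F_q-linear intersecting code C ⊆ F_q^n with dim_{F_q} C / n ≥ 1/2 − 1/(2(q^{1/2} − 1)) − ε. -/

import Mathlib

/-!
Write `q = s ^ 2` with `s` a prime power; then `s = 5` or `s ≥ 7`.

For `s = 5` the required rate is `3 / 8`, and a union bound over random generator matrices of size
`3 * j` by `8 * j` suffices (`exists_code_small`): a given pair of messages fails at all `8 * j` coordinates with
probability at most `(2 / 25) ^ (8 * j)`, there are at most `25 ^ (6 * j)` pairs, and `2 ^ 8 < 25 ^ 2`.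

For `s ≥ 7` the codes come from a Garcia–Stichtenoth tower
`x_{i+1} ^ s + x_{i+1} = x_i ^ s / (x_i ^ (s - 1) + 1)` over `F(X)`, `x_0 = X`, of height `m` and
degree `N = s ^ m`. It is realised inside the Laurent series field `F((t))`, starting from
`x_m = 1 / t` and solving for smaller indices by completeness (`exists_seq`). The `t`-adic valuation
is totally ramified over the pole of `X`, so every step has degree `s` (`step_deg`), and a multiple
of `t d/dt` is the derivation `D` extending `d/dX`.

Put `b = X ^ s + X`. The zeros of `X - α` with `b(α) ≠ 0` are rational (`Tower.rational`); there are
at most `n = (s ^ 2 - s) N` of them, the evaluation points. At all finite places the codifferent of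
the integral closure of `F[X]`, and the poles created by `D`, are bounded by `b ^ 2`
(`Tower.local_dual`, `Tower.local_deriv`). These bounds follow a place up the tower through four
states (`Tower.state`): unramified away from `b`; successive zeros of the `x_i`; poles mirroring
these zeros, still unramified; and finally total ramification. Trace-dual bases adapted to the place
at infinity give Riemann–Roch inequalities with a genus `g ≤ s N` (`Glob.riemann_roch`).

For a set `Y` of evaluation points let `A_Y` be the space of functions with only a pole at infinity,
of order at most `3 * n - 2`, which vanish on `Y` and vanish to order three at the other points. A degree
count gives `A_∅ = 0`. As long as the space `H` of elements of the codifferent vanishing twice on `Y`,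
with a suitable bound at infinity, has dimension at least two, `Y` can be enlarged by a point with `A_Y`
still zero (`Curve.exists_step`): otherwise, for every point `P` outside `Y`, some nonzero `f` in
`A_{Y ∪ P}` has order `k = 1` or `k = 2` at `P`, and the residue theorem shows that no element of `H`
has order exactly `2 - k` at `P` (`Curve.residue_contra`). Hence all Wronskians
`h₁ D h₂ - h₂ D h₁` of `H` vanish at every evaluation point. For `s ≥ 7` they then
have too many zeros and are identically zero, while `H` contains a pair with nonzero Wronskian
(`exists_wronskian`). In this way `Y` reaches `⌈g / 2⌉` points (`Curve.exists_Y`).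

The code consists of the functions with pole order at most `3 * n / 2 - 1` at infinity that vanish
outside `Y`, evaluated on `Y` and to first order outside `Y` (`Curve.exists_code`). If two codewords
have disjoint supports, the product of the functions lies in `A_Y = 0`. By Riemann–Roch the
dimension is at least `(n - s N) / 2`, which is the rate `1 / 2 - 1 / (2 (s - 1))`.
-/

/-- A linear code `C ⊆ Fⁿ` is intersecting if any two nonzero codewords have
intersecting supports. -/
def IsLinIntersecting {F : Type*} [Field F] {n : ℕ} (C : Submodule F (Fin n → F)) : Prop :=
  ∀ c ∈ C, c ≠ 0 → ∀ c' ∈ C, c' ≠ 0 → ∃ i : Fin n, c i ≠ 0 ∧ c' i ≠ 0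

set_option linter.unusedSectionVars false

open Polynomial
open scoped WithZero

/-! ### Artin–Schreier type extensions and their trace-dual bases -/

/-- `L'` is the Artin–Schreier-type extension of `L` of degree `s` generated by `ψ` with
`ψ ^ s + ψ = G`. -/
structure ASExt (L L' : Type*) [Field L] [Field L'] [Algebra L L'] (s : ℕ) (ψ : L') (G : L) :
    Prop where
  eq : ψ ^ s + ψ = algebraMap L L' G
  deg : Module.finrank L L' = s
  gen : Algebra.adjoin L {ψ} = ⊤

/-- The trace-dual family of `1, ψ, …, ψ ^ (s - 1)`. -/
noncomputable def asDual {L' : Type*} [Field L'] (s : ℕ) (ψ : L') (j : ℕ) : L' :=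
  if j = 0 then ψ ^ (s - 1) + 1 else ψ ^ (s - 1 - j)

namespace ASExt

variable {L L' : Type*} [Field L] [Field L'] [Algebra L L'] {s : ℕ} {ψ : L'} {G : L}

lemma monic_poly (hs : 2 ≤ s) (G : L) : (X ^ s + X - C G : L[X]).Monic := by
  have : (X ^ s + X - C G : L[X]) = X ^ s + (X - C G) := by ring
  rw [this]
  apply monic_X_pow_add
  rw [degree_X_sub_C]; exact_mod_cast hs

lemma natDegree_poly (hs : 2 ≤ s) (G : L) : (X ^ s + X - C G : L[X]).natDegree = s := by
  have : (X ^ s + X - C G : L[X]) = X ^ s + (X - C G) := by ring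
  rw [this, natDegree_add_eq_left_of_natDegree_lt] <;> simp
  omega

lemma finite (h : ASExt L L' s ψ G) (hs : 2 ≤ s) : FiniteDimensional L L' :=
  Module.finite_of_finrank_pos (by rw [h.deg]; omega)

lemma minpoly_eq (h : ASExt L L' s ψ G) (hs : 2 ≤ s) : minpoly L ψ = X ^ s + X - C G := by
  have := h.finite hs
  have h1 : IntermediateField.adjoin L {ψ} = ⊤ := by
    rw [← IntermediateField.toSubalgebra_inj,
      IntermediateField.adjoin_simple_toSubalgebra_of_isAlgebraic
      (Algebra.IsAlgebraic.isAlgebraic ψ), h.gen]; rfl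
  refine (eq_of_monic_of_dvd_of_natDegree_le (minpoly.monic (Algebra.IsIntegral.isIntegral ψ))
    (monic_poly hs G) (minpoly.dvd _ _ (by simp [h.eq])) ?_).symm
  rw [natDegree_poly hs, ← IntermediateField.adjoin.finrank (Algebra.IsIntegral.isIntegral ψ), h1,
      IntermediateField.finrank_top', h.deg]

lemma derivative_poly (hc : (s : L) = 0) (G : L) :
    derivative (X ^ s + X - C G : L[X]) = 1 := by
  rw [derivative_sub, derivative_add, derivative_X_pow, hc]; simp

lemma isSeparable_gen (h : ASExt L L' s ψ G) (hs : 2 ≤ s) (hc : (s : L) = 0) :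
    IsSeparable L ψ := by
  rw [IsSeparable, h.minpoly_eq hs, Polynomial.Separable, derivative_poly hc]
  exact isCoprime_one_right

lemma separable (h : ASExt L L' s ψ G) (hs : 2 ≤ s) (hc : (s : L) = 0) :
    Algebra.IsSeparable L L' := by
  have := h.finite hs
  have h1 : IntermediateField.adjoin L {ψ} = ⊤ := by
    rw [← IntermediateField.toSubalgebra_inj,
      IntermediateField.adjoin_simple_toSubalgebra_of_isAlgebraic
      (Algebra.IsAlgebraic.isAlgebraic ψ), h.gen]; rfl
  have h2 := (IntermediateField.isSeparable_adjoin_simple_iff_isSeparable L L').mpr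
    (h.isSeparable_gen hs hc)
  rw [h1] at h2
  exact AlgEquiv.Algebra.isSeparable (IntermediateField.topEquiv (F := L) (E := L'))

lemma coeff_minpolyDiv_eq (h : ASExt L L' s ψ G) (hs : 2 ≤ s) (j : ℕ) (hj : j < s) :
    (minpolyDiv L ψ).coeff j = asDual s ψ j := by
  have hI : IsIntegral L ψ := by
    have := h.finite hs
    exact Algebra.IsIntegral.isIntegral ψ
  have key : ∀ k, k < s - 1 → (minpolyDiv L ψ).coeff (s - 1 - k) = ψ ^ k := by
    intro k
    induction k with
    | zero =>
      intro _
      have h1 := minpolyDiv_monic hI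
      have h2 := natDegree_minpolyDiv (R := L) (x := ψ)
      rw [h.minpoly_eq hs, natDegree_poly hs] at h2
      rw [Nat.sub_zero, ← h2, pow_zero]; exact h1
    | succ k ih =>
      intro hk
      rw [coeff_minpolyDiv, h.minpoly_eq hs]
      have e1 : s - 1 - (k + 1) + 1 = s - 1 - k := by omega
      rw [e1, ih (by omega)]
      have e2 : s - 1 - k ≠ s := by omega
      have e3 : s - 1 - k ≠ 1 := by omega
      have e4 : s - 1 - k ≠ 0 := by omega
      simp [coeff_X_pow, coeff_X, coeff_C, e2, Ne.symm e3, e4, pow_succ]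
  rcases Nat.eq_zero_or_pos j with rfl | hj0
  · rw [coeff_minpolyDiv, h.minpoly_eq hs, asDual, if_pos rfl]
    have := key (s - 2) (by omega)
    rw [show s - 1 - (s - 2) = 1 by omega] at this
    rw [zero_add, this]
    have e2 : 1 ≠ s := by omega
    simp [coeff_X_pow, coeff_X, e2]
    rw [← pow_succ, show s - 2 + 1 = s - 1 by omega]; ring
  · rw [asDual, if_neg (by omega), ← key (s - 1 - j) (by omega)]
    congr 1; omega

/-- As `s = 0` in `L`, the minimal polynomial of `ψ` has derivative `1`, so the formula of Euler makes the
coefficients of `minpolyDiv` a dual basis without any denominator. -/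
lemma trace_dual (h : ASExt L L' s ψ G) (hs : 2 ≤ s) (hc : (s : L) = 0) (i j : ℕ)
    (hi : i < s) (hj : j < s) :
    Algebra.trace L L' (asDual s ψ i * ψ ^ j) = if j = i then 1 else 0 := by
  have := h.finite hs
  have := h.separable hs hc
  have hI : IsIntegral L ψ := Algebra.IsIntegral.isIntegral ψ
  let pb := PowerBasis.ofAdjoinEqTop' hI h.gen
  have hg : pb.gen = ψ := PowerBasis.ofAdjoinEqTop'_gen _ _
  have hd : pb.dim = s := by
    rw [← pb.finrank, h.deg]
  have h1 := Module.Basis.trace_traceDual_mul pb.basis ⟨i, hd ▸ hi⟩ ⟨j, hd ▸ hj⟩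
  rw [Module.Basis.traceDual_powerBasis_eq, pb.basis_eq_pow, hg, h.minpoly_eq hs,
    derivative_poly hc] at h1
  simp only [Fin.mk.injEq] at h1
  rw [← h1, coeff_minpolyDiv_eq h hs i hi]
  simp

lemma expand (h : ASExt L L' s ψ G) (hs : 2 ≤ s) (hc : (s : L) = 0) (f : L') :
    f = ∑ j ∈ Finset.range s,
      algebraMap L L' (Algebra.trace L L' (f * asDual s ψ j)) * ψ ^ j := by
  have := h.finite hs
  have := h.separable hs hc
  have hI : IsIntegral L ψ := Algebra.IsIntegral.isIntegral ψ
  let pb := PowerBasis.ofAdjoinEqTop' hI h.gen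
  have hg : pb.gen = ψ := PowerBasis.ofAdjoinEqTop'_gen _ _
  have hd : pb.dim = s := by
    rw [← pb.finrank, h.deg]
  have h2 : ∀ i, pb.basis.repr f i = Algebra.trace L L' (f * asDual s ψ i) := by
    intro i
    rw [← coeff_minpolyDiv_eq h hs i (hd ▸ i.2)]
    have := Module.Basis.traceDual_repr_apply pb.basis.traceDual f i
    rw [Module.Basis.traceDual_traceDual, Module.Basis.traceDual_powerBasis_eq, hg,
      h.minpoly_eq hs, derivative_poly hc] at this
    simpa using this
  have h1 := pb.basis.sum_repr f
  simp only [h2, pb.basis_eq_pow, hg] at h1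
  rw [Fin.sum_univ_eq_sum_range (fun j => Algebra.trace L L' (f * asDual s ψ j) • ψ ^ j), hd] at h1
  conv_lhs => rw [← h1]
  simp [Algebra.smul_def]

end ASExt

/-! ### Local integrality and approximation -/

section Local

lemma isIntegral_of_pow_eq {A L : Type*} [CommRing A] [Field L] [Algebra A L] {s : ℕ} (hs : 2 ≤ s)
    {y u w : L} (hu : IsIntegral A u) (hw : IsIntegral A w) (h : y ^ s + w * y = u) :
    IsIntegral A y := by
  have h1 : IsIntegral (integralClosure A L) y := by
    refine ⟨X ^ s + (C (⟨w, hw⟩ : integralClosure A L) * X - C (⟨u, hu⟩ : integralClosure A L)),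
      monic_X_pow_add ?_, ?_⟩
    · refine lt_of_le_of_lt (degree_sub_le _ _) (max_lt ?_ ?_)
      · refine lt_of_le_of_lt (degree_C_mul_X_le _) ?_
        exact_mod_cast hs
      · refine lt_of_le_of_lt degree_C_le ?_
        exact_mod_cast (by omega : 0 < s)
    · have e1 : algebraMap (integralClosure A L) L ⟨w, hw⟩ = w := rfl
      have e2 : algebraMap (integralClosure A L) L ⟨u, hu⟩ = u := rfl
      simp only [eval₂_add, eval₂_sub, eval₂_mul, eval₂_pow, eval₂_X, eval₂_C, e1, e2]
      linear_combination h
  exact isIntegral_trans y h1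

lemma val_le_one_of_isIntegral {A L Γ : Type*} [CommRing A] [Field L] [Algebra A L]
    [LinearOrderedCommGroupWithZero Γ] (v : Valuation L Γ) (hv : ∀ a : A, v (algebraMap A L a) ≤ 1)
    {r : L} (hr : IsIntegral A r) : v r ≤ 1 := by
  let φ : A →+* v.valuationSubring := (algebraMap A L).codRestrict v.valuationSubring.toSubring hv
  obtain ⟨P, hP, hr⟩ := hr
  have : IsIntegral v.valuationSubring r := ⟨P.map φ, hP.map φ, by
    rw [eval₂_map]; exact hr⟩
  obtain ⟨y, hy⟩ := IsIntegrallyClosed.isIntegral_iff.mp this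
  rw [← hy]; exact y.2

/-- Every `v`-integral element is a fraction of integral elements with `v`-unit denominator. -/
lemma exists_frac {A k L Γ : Type*} [CommRing A] [IsDedekindDomain A] [Field k] [Algebra A k]
    [IsFractionRing A k] [Field L] [Algebra A L] [Algebra k L] [IsScalarTower A k L]
    [FiniteDimensional k L] [Algebra.IsSeparable k L]
    [LinearOrderedCommGroupWithZero Γ] (v : Valuation L Γ) (hv : ∀ a : A, v (algebraMap A L a) ≤ 1)
    (f : L) (hf : v f ≤ 1) :
    ∃ r r' : L, IsIntegral A r ∧ IsIntegral A r' ∧ v r' = 1 ∧ f * r' = r := by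
  let R := integralClosure A L
  have : IsDedekindDomain R := integralClosure.isDedekindDomain A k L
  have : IsFractionRing R L := IsIntegralClosure.isFractionRing_of_finite_extension A k L R
  have hvR : ∀ r : R, v r ≤ 1 := fun r => val_le_one_of_isIntegral v hv r.2
  let P : Ideal R :=
    { carrier := {r | v r < 1}
      add_mem' := fun {a b} ha hb => lt_of_le_of_lt (v.map_add _ _) (max_lt ha hb)
      zero_mem' := by simp
      smul_mem' := fun c x hx => by
        have : v (c * x : L) < 1 := by
          rw [map_mul]; exact (mul_le_of_le_one_left' (hvR c)).trans_lt hx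
        exact this }
  have hmem : ∀ r : R, r ∈ P ↔ v (r : L) < 1 := fun r => Iff.rfl
  have hPp : P.IsPrime := by
    constructor
    · rw [Ideal.ne_top_iff_one, hmem]; simp
    · intro x y hxy
      by_contra hcon
      push Not at hcon
      simp only [hmem, not_lt] at hcon hxy
      have : v ((x * y : R) : L) = v x * v y := by simp
      rw [this] at hxy
      exact absurd hxy (not_lt.mpr (one_le_mul hcon.1 hcon.2))
  have hunit : ∀ r : R, r ∉ P → v (r : L) = 1 := fun r hr =>
    le_antisymm (hvR r) (not_lt.mp (by rwa [hmem] at hr))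
  by_cases hP0 : P = ⊥
  · obtain ⟨n, d, hd, e⟩ := IsFractionRing.div_surjective (A := R) f
    have hd0 : d ≠ 0 := nonZeroDivisors.ne_zero hd
    refine ⟨n, d, n.2, d.2, hunit d (by rw [hP0]; simpa using hd0), ?_⟩
    rw [← e]
    have : (algebraMap R L d) ≠ 0 := by simpa using hd0
    exact div_mul_cancel₀ _ this
  · let 𝔭 : IsDedekindDomain.HeightOneSpectrum R := ⟨P, hPp, hP0⟩
    obtain ⟨n, d, h⟩ :=
      IsDedekindDomain.HeightOneSpectrum.exists_primeCompl_mul_eq_or_mul_eq (v := 𝔭) f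
    have hd : v (d : L) = 1 := hunit d d.2
    rcases h with h | h
    · exact ⟨n, d, n.2, (d : R).2, hd, h⟩
    · have h : f * (n : L) = ((d : R) : L) := h
      refine ⟨(d : R), n, (d : R).2, n.2, ?_, h⟩
      have h3 : v f * v (n : L) = 1 := by rw [← map_mul, h, hd]
      refine le_antisymm (hvR n) ?_
      by_contra hcon
      push Not at hcon
      have := (mul_le_of_le_one_left' hf).trans_lt hcon
      exact absurd h3 this.ne

/-- `Approx S v z`: modulo `z`, every `v`-integral element is congruent to an element of `S`. -/
def Approx {L Γ : Type*} [Field L] [LinearOrderedCommGroupWithZero Γ] (S : Subfield L)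
    (v : Valuation L Γ) (z : L) : Prop :=
  v z < 1 ∧ ∀ f, v f ≤ 1 → ∃ g ∈ S, v (f - g) ≤ v z

/-- The ring of `v`-integral elements congruent modulo `z` to an element of `S`. -/
def approxSubring {L Γ : Type*} [Field L] [LinearOrderedCommGroupWithZero Γ] (S : Subfield L)
    (v : Valuation L Γ) (z : L) (hz : v z < 1) : Subring L where
  carrier := {f | v f ≤ 1 ∧ ∃ g ∈ S, v (f - g) ≤ v z}
  one_mem' := ⟨by simp, 1, S.one_mem, by simp⟩
  zero_mem' := ⟨by simp, 0, S.zero_mem, by simp⟩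
  add_mem' := by
    rintro a b ⟨ha, g, hg, hag⟩ ⟨hb, g', hg', hbg⟩
    refine ⟨(v.map_add _ _).trans (max_le ha hb), g + g', S.add_mem hg hg', ?_⟩
    rw [show a + b - (g + g') = (a - g) + (b - g') by ring]
    exact (v.map_add _ _).trans (max_le hag hbg)
  neg_mem' := by
    rintro a ⟨ha, g, hg, hag⟩
    refine ⟨by rwa [Valuation.map_neg], -g, S.neg_mem hg, ?_⟩
    rw [show -a - -g = -(a - g) by ring, Valuation.map_neg]
    exact hag
  mul_mem' := by
    rintro a b ⟨ha, g, hg, hag⟩ ⟨hb, g', hg', hbg⟩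
    refine ⟨by rw [map_mul]; exact mul_le_one' ha hb, g * g', S.mul_mem hg hg', ?_⟩
    have hg1 : v g ≤ 1 := by
      rw [show g = a - (a - g) by ring]
      exact (v.map_sub _ _).trans (max_le ha (hag.trans hz.le))
    rw [show a * b - g * g' = (a - g) * b + g * (b - g') by ring]
    refine (v.map_add _ _).trans (max_le ?_ ?_)
    · rw [map_mul]; exact mul_le_of_le_of_le_one hag hb
    · rw [map_mul]; exact mul_le_of_le_one_of_le hg1 hbg

lemma approxSubring_inv {L Γ : Type*} [Field L] [LinearOrderedCommGroupWithZero Γ]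
    {S : Subfield L} {v : Valuation L Γ} {z : L} {hz : v z < 1} {f : L}
    (hf : f ∈ approxSubring S v z hz) (hf1 : v f = 1) : f⁻¹ ∈ approxSubring S v z hz := by
  obtain ⟨_, g, hg, hfg⟩ := hf
  refine ⟨by simp [hf1], g⁻¹, S.inv_mem hg, ?_⟩
  have hg1 : v g = 1 := by
    rw [← hf1]
    apply Valuation.map_eq_of_sub_lt
    rw [Valuation.map_sub_swap, hf1]
    exact hfg.trans_lt hz
  have hf0 : f ≠ 0 := by rintro rfl; simp at hf1
  have hg0 : g ≠ 0 := by rintro rfl; simp at hg1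
  rw [show f⁻¹ - g⁻¹ = -(f - g) * (f⁻¹ * g⁻¹) by field_simp; ring]
  simpa [hf1, hg1, Valuation.map_sub_swap] using hfg

lemma mem_of_frac {A k L Γ : Type*} [CommRing A] [IsDedekindDomain A] [Field k] [Algebra A k]
    [IsFractionRing A k] [Field L] [Algebra A L] [Algebra k L] [IsScalarTower A k L]
    [FiniteDimensional k L] [Algebra.IsSeparable k L]
    [LinearOrderedCommGroupWithZero Γ] (v : Valuation L Γ) (hv : ∀ a : A, v (algebraMap A L a) ≤ 1)
    {S : Subfield L} {z : L} (hz : v z < 1)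
    (h : ∀ r, IsIntegral A r → r ∈ approxSubring S v z hz) : Approx S v z := by
  refine ⟨hz, fun f hf => ?_⟩
  obtain ⟨r, r', hr, hr', h1, e⟩ := exists_frac (A := A) (k := k) v hv f hf
  have : f = r * r'⁻¹ := by
    rw [← e]; field_simp [show r' ≠ 0 by rintro rfl; simp at h1]
  rw [this]
  exact (Subring.mul_mem _ (h r hr) (approxSubring_inv (h r' hr') h1)).2

end Local

/-! ### Unramified steps: codifferent and approximation -/

section Step

/-- `h` lies in the trace dual (codifferent) of the integral closure of `A` in `L`. -/
def InDual (A k : Type*) {L : Type*} [CommRing A] [Field k] [Algebra A k] [Field L] [Algebra A L]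
    [Algebra k L] (h : L) : Prop :=
  ∀ r : L, IsIntegral A r → ∃ a : A, algebraMap A k a = Algebra.trace k L (h * r)

/-- The codifferent is bounded by `C` at `v`. -/
def DualBound (A k : Type*) {L Γ : Type*} [CommRing A] [Field k] [Algebra A k] [Field L]
    [Algebra A L] [Algebra k L] [LinearOrderedCommGroupWithZero Γ] (v : Valuation L Γ) (C : Γ) :
    Prop :=
  ∀ h : L, InDual A k h → v h ≤ C

variable {A k L L' : Type*} [CommRing A] [IsDedekindDomain A] [Field k] [Algebra A k]
  [IsFractionRing A k] [Field L] [Algebra A L] [Algebra k L] [IsScalarTower A k L]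
  [FiniteDimensional k L] [Algebra.IsSeparable k L]
  [Field L'] [Algebra A L'] [Algebra k L'] [IsScalarTower A k L']
  [FiniteDimensional k L'] [Algebra.IsSeparable k L'] [Algebra L L'] [IsScalarTower k L L']
  [IsScalarTower A L L']

lemma inDual_trace {h β : L'} (hh : InDual A k h) (hβ : IsIntegral A β) :
    InDual A k (Algebra.trace L L' (h * β)) := by
  intro r hr
  obtain ⟨a, ha⟩ := hh (β * algebraMap L L' r) (hβ.mul (hr.map (IsScalarTower.toAlgHom A L L')))
  refine ⟨a, ha.trans ?_⟩
  have := FiniteDimensional.right k L L'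
  have : Algebra.trace L L' (h * β) * r = Algebra.trace L L' (h * (β * algebraMap L L' r)) := by
    rw [← mul_assoc, mul_comm (h * β), ← Algebra.smul_def, map_smul, smul_eq_mul, mul_comm]
  rw [this, Algebra.trace_trace]

variable {s : ℕ} {ψ : L'} {G : L} (hs : 2 ≤ s) (hc : (s : L) = 0) (hAS : ASExt L L' s ψ G)
  {Γ : Type*} [LinearOrderedCommGroupWithZero Γ] (v : Valuation L' Γ)
  (hv : ∀ a : A, v (algebraMap A L' a) ≤ 1)

include hv in
lemma comap_le_one (a : A) : (v.comap (algebraMap L L')) (algebraMap A L a) ≤ 1 := by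
  rw [Valuation.comap_apply, ← IsScalarTower.algebraMap_apply]; exact hv a

include hs hAS in
lemma val_gen_le_one (hG : v (algebraMap L L' G) ≤ 1) : v ψ ≤ 1 := by
  by_contra hcon
  push Not at hcon
  have h1 : v ψ < v (ψ ^ s) := by
    rw [map_pow]; exact lt_self_pow₀ hcon (by omega)
  have h2 := Valuation.map_add_eq_of_lt_left v (x := ψ ^ s) (y := ψ) h1
  rw [hAS.eq] at h2
  have := hcon.trans h1
  rw [← h2] at this
  exact absurd hG (not_le.mpr this)

include hs hAS hv k in
/-- At an unramified step, a `v`-unit multiple clears the denominators of the dual basis. -/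
lemma exists_clear (hG : v (algebraMap L L' G) ≤ 1) :
    ∃ a : L, IsIntegral A a ∧ v (algebraMap L L' a) = 1 ∧
      ∀ j, IsIntegral A (algebraMap L L' (a ^ (s - 1)) * asDual s ψ j) := by
  obtain ⟨r, a, hr, ha, ha1, e⟩ := exists_frac (A := A) (k := k) (v.comap (algebraMap L L'))
    (comap_le_one v hv) G hG
  refine ⟨a, ha, ha1, ?_⟩
  have hma : IsIntegral A (algebraMap L L' a) := ha.map (IsScalarTower.toAlgHom A L L')
  have hmr : IsIntegral A (algebraMap L L' r) := hr.map (IsScalarTower.toAlgHom A L L')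
  have h1 : IsIntegral A (algebraMap L L' a * ψ) := by
    refine isIntegral_of_pow_eq hs ((hma.pow (s - 1)).mul hmr) (hma.pow (s - 1)) ?_
    rw [← e, map_mul, ← hAS.eq, mul_pow]
    have : (algebraMap L L' a) ^ s = algebraMap L L' a ^ (s - 1) * algebraMap L L' a := by
      rw [← pow_succ]; congr 1; omega
    rw [this]; ring
  have h2 : ∀ e ≤ s - 1, IsIntegral A (algebraMap L L' (a ^ (s - 1)) * ψ ^ e) := by
    intro e he
    have : algebraMap L L' (a ^ (s - 1)) * ψ ^ e
        = (algebraMap L L' a) ^ (s - 1 - e) * (algebraMap L L' a * ψ) ^ e := by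
      rw [map_pow, mul_pow, ← mul_assoc, ← pow_add]; congr 2; omega
    rw [this]; exact (hma.pow _).mul (h1.pow _)
  intro j
  unfold asDual
  split_ifs
  · rw [mul_add, mul_one]
    refine (h2 _ le_rfl).add ?_
    rw [map_pow]; exact hma.pow _
  · exact h2 _ (by omega)

include hs hAS hv hc in
/-- The codifferent bound is unchanged at a step where the right-hand side is `v`-integral. -/
lemma dualBound_unram (hG : v (algebraMap L L' G) ≤ 1) {C : Γ}
    (h : DualBound A k (v.comap (algebraMap L L')) C) : DualBound A k v C := by
  obtain ⟨a, ha, ha1, hb⟩ := exists_clear (k := k) hs hAS v hv hG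
  intro f hf
  rw [hAS.expand hs hc f]
  refine v.map_sum_le fun j _ => ?_
  rw [map_mul, map_pow]
  refine (mul_le_of_le_one_right' (pow_le_one' (val_gen_le_one hs hAS v hG) j)).trans ?_
  have h1 := h _ (inDual_trace (L := L) hf (hb j))
  have e : Algebra.trace L L' (f * (algebraMap L L' (a ^ (s - 1)) * asDual s ψ j))
      = a ^ (s - 1) * Algebra.trace L L' (f * asDual s ψ j) := by
    rw [mul_left_comm, ← Algebra.smul_def, map_smul, smul_eq_mul]
  rw [e, map_mul, map_pow, Valuation.comap_apply, ha1, one_pow, one_mul] at h1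
  exact h1

include hs hAS hv hc k in
lemma coeff_unram (hG : v (algebraMap L L' G) ≤ 1) {r : L'} (hr : IsIntegral A r) (j : ℕ) :
    v (algebraMap L L' (Algebra.trace L L' (r * asDual s ψ j))) ≤ 1 := by
  obtain ⟨a, ha, ha1, hb⟩ := exists_clear (k := k) hs hAS v hv hG
  have := FiniteDimensional.right k L L'
  have h1 := val_le_one_of_isIntegral (v.comap (algebraMap L L')) (comap_le_one v hv)
    (Algebra.isIntegral_trace (L := L) (hr.mul (hb j)))
  have e : Algebra.trace L L' (r * (algebraMap L L' (a ^ (s - 1)) * asDual s ψ j))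
      = a ^ (s - 1) * Algebra.trace L L' (r * asDual s ψ j) := by
    rw [mul_left_comm, ← Algebra.smul_def, map_smul, smul_eq_mul]
  rw [e, map_mul, map_pow, Valuation.comap_apply, ha1, one_pow, one_mul] at h1
  exact h1

include hs hAS hv hc k in
lemma approx_unram (hG : v (algebraMap L L' G) ≤ 1) {S : Subfield L} {S' : Subfield L'}
    (hS : ∀ g ∈ S, algebraMap L L' g ∈ S') {z : L}
    (h : Approx S (v.comap (algebraMap L L')) z)
    (hψ : ∃ g ∈ S', v (ψ - g) ≤ v (algebraMap L L' z)) :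
    Approx S' v (algebraMap L L' z) := by
  refine mem_of_frac (A := A) (k := k) v hv h.1 fun r hr => ?_
  rw [hAS.expand hs hc r]
  refine Subring.sum_mem _ fun j _ => Subring.mul_mem _ ?_ (Subring.pow_mem _ ?_ _)
  · have h1 := coeff_unram (A := A) (k := k) hs hc hAS v hv hG hr j
    obtain ⟨g, hg, hg'⟩ := h.2 _ h1
    rw [Valuation.comap_apply, map_sub] at hg'
    exact ⟨h1, _, hS g hg, hg'⟩
  · exact ⟨val_gen_le_one hs hAS v hG, hψ⟩

end Step

/-! ### Totally ramified steps: codifferent and approximation -/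

/-- If the nonzero terms of a finite sum have pairwise distinct values, then every term is
bounded by the sum. -/
lemma val_term_le_sum {L Γ ι : Type*} [Field L] [LinearOrderedCommGroupWithZero Γ]
    (v : Valuation L Γ) (t : Finset ι) (f : ι → L)
    (h : ∀ i ∈ t, ∀ j ∈ t, f i ≠ 0 → v (f i) = v (f j) → i = j) (i : ι) (hi : i ∈ t) :
    v (f i) ≤ v (∑ j ∈ t, f j) := by
  classical
  obtain ⟨m, hm, hmax⟩ := t.exists_max_image (fun i => v (f i)) ⟨i, hi⟩
  refine (hmax i hi).trans ?_
  by_cases h0 : f m = 0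
  · simp [h0]
  rw [← Finset.add_sum_erase t f hm]
  refine le_of_eq (Valuation.map_add_eq_of_lt_left v ?_).symm
  refine Valuation.map_sum_lt v (by simpa using h0) fun j hj => ?_
  rw [Finset.mem_erase] at hj
  refine lt_of_le_of_ne (hmax j hj.2) fun e => hj.1 ?_
  exact (h m hm j hj.2 h0 e.symm).symm

section Step

variable {A k L L' : Type*} [CommRing A] [IsDedekindDomain A] [Field k] [Algebra A k]
  [IsFractionRing A k] [Field L] [Algebra A L] [Algebra k L] [IsScalarTower A k L]
  [FiniteDimensional k L] [Algebra.IsSeparable k L]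
  [Field L'] [Algebra A L'] [Algebra k L'] [IsScalarTower A k L']
  [FiniteDimensional k L'] [Algebra.IsSeparable k L'] [Algebra L L'] [IsScalarTower k L L']
  [IsScalarTower A L L']

variable {s : ℕ} {y : L'} {G : L} (hs : 2 ≤ s) (hc : (s : L) = 0) (hAS : ASExt L L' s y G)
  {Γ : Type*} [LinearOrderedCommGroupWithZero Γ] (v : Valuation L' Γ)
  (hv : ∀ a : A, v (algebraMap A L' a) ≤ 1)

include hs hAS in
lemma val_gen_ram (hG : 1 < v (algebraMap L L' G)) :
    1 < v y ∧ v (algebraMap L L' G) = v y ^ s := by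
  have h1 : 1 < v y := by
    by_contra hcon
    push Not at hcon
    refine absurd hG (not_lt.mpr ?_)
    rw [← hAS.eq]
    refine (v.map_add _ _).trans (max_le ?_ hcon)
    rw [map_pow]; exact pow_le_one' hcon s
  refine ⟨h1, ?_⟩
  rw [← hAS.eq, Valuation.map_add_eq_of_lt_left v, map_pow]
  rw [map_pow]; exact lt_self_pow₀ h1 (by omega)

include hs hAS hv hc in
/-- At a totally ramified step the codifferent bound grows by the exponent `2 (s - 1)`. -/
lemma dualBound_ram (hG : 1 < v (algebraMap L L' G)) {C : Γ}
    (h : DualBound A k (v.comap (algebraMap L L')) C) :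
    DualBound A k v (C * v y ^ (2 * s - 2)) := by
  obtain ⟨hy1, hyG⟩ := val_gen_ram hs hAS v hG
  have hy0 : v y ≠ 0 := (zero_lt_one.trans hy1).ne'
  have hG0 : G ≠ 0 := by rintro rfl; simp at hG
  obtain ⟨a, u, ha, hu, hu1, e⟩ := exists_frac (A := A) (k := k) (v.comap (algebraMap L L'))
    (comap_le_one v hv) G⁻¹ (by rw [map_inv₀]; exact inv_le_one_of_one_le₀ hG.le)
  have e1 : a * G = u := by rw [← e]; field_simp
  have hma : IsIntegral A (algebraMap L L' a) := ha.map (IsScalarTower.toAlgHom A L L')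
  have hmu : IsIntegral A (algebraMap L L' u) := hu.map (IsScalarTower.toAlgHom A L L')
  have hay : IsIntegral A (algebraMap L L' a * y) := by
    refine isIntegral_of_pow_eq hs ((hma.pow (s - 1)).mul hmu) (hma.pow (s - 1)) ?_
    rw [← e1, map_mul, ← hAS.eq, mul_pow]
    have : (algebraMap L L' a) ^ s = algebraMap L L' a ^ (s - 1) * algebraMap L L' a := by
      rw [← pow_succ]; congr 1; omega
    rw [this]; ring
  have h2 : ∀ i ≤ s - 1, IsIntegral A (algebraMap L L' a * y ^ i) := by
    intro i hi
    refine IsIntegral.of_pow (n := s) (by omega) ?_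
    have : (algebraMap L L' a * y ^ i) ^ s
        = algebraMap L L' a ^ (s - i) * (algebraMap L L' u - algebraMap L L' a * y) ^ i := by
      have e3 : algebraMap L L' u - algebraMap L L' a * y = algebraMap L L' a * y ^ s := by
        rw [← e1, map_mul, ← hAS.eq]; ring
      rw [e3, mul_pow, mul_pow, ← mul_assoc, ← pow_add, show s - i + i = s by omega,
        ← pow_mul, ← pow_mul, mul_comm i s]
    rw [this]
    exact (hma.pow _).mul ((hmu.sub hay).pow _)
  have h3 : ∀ j, IsIntegral A (algebraMap L L' a * asDual s y j) := by
    intro j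
    unfold asDual
    split_ifs
    · rw [mul_add, mul_one]
      exact (h2 _ le_rfl).add hma
    · exact h2 _ (by omega)
  have hva : v (algebraMap L L' a) * v y ^ s = 1 := by
    rw [← hyG, ← map_mul, ← map_mul, e1]; exact hu1
  intro f hf
  rw [hAS.expand hs hc f]
  refine v.map_sum_le fun j hj => ?_
  have hj : j < s := Finset.mem_range.mp hj
  rw [map_mul, map_pow]
  by_cases hjs : j = s - 1
  · have h4 := h _ (inDual_trace (L := L) hf (isIntegral_one (R := A)))
    have : asDual s y j = 1 := by
      rw [asDual, if_neg (by omega), hjs, Nat.sub_self, pow_zero]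
    rw [this]
    refine mul_le_mul' h4 ?_
    exact pow_le_pow_right₀ hy1.le (by omega)
  · have h4 := h _ (inDual_trace (L := L) hf (h3 j))
    have e : Algebra.trace L L' (f * (algebraMap L L' a * asDual s y j))
        = a * Algebra.trace L L' (f * asDual s y j) := by
      rw [mul_left_comm, ← Algebra.smul_def, map_smul, smul_eq_mul]
    rw [e, map_mul] at h4
    simp only [Valuation.comap_apply] at h4
    have h5 : v (algebraMap L L' (Algebra.trace L L' (f * asDual s y j))) ≤ C * v y ^ s := by
      calc _ = (v (algebraMap L L' a) *
          v (algebraMap L L' (Algebra.trace L L' (f * asDual s y j)))) * v y ^ s := by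
            rw [mul_right_comm, hva, one_mul]
        _ ≤ _ := mul_le_mul_left h4 _
    calc _ ≤ (C * v y ^ s) * v y ^ (s - 2) :=
          mul_le_mul' h5 (pow_le_pow_right₀ hy1.le (by omega))
      _ = _ := by rw [mul_assoc, ← pow_add]; congr 2; omega

include hs hAS hc in
/-- At a totally ramified step, `1 / y` is a uniformizer and no new residues appear. -/
lemma approx_ram {S : Subfield L} {S' : Subfield L'}
    (hS : ∀ g ∈ S, algebraMap L L' g ∈ S') {z : L}
    (hzG : v (algebraMap L L' z) * v (algebraMap L L' G) = 1)
    (hval : ∀ f : L, f ≠ 0 → ∃ n : ℤ, v (algebraMap L L' f) = v (algebraMap L L' z) ^ n)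
    (h : Approx S (v.comap (algebraMap L L')) z) : Approx S' v y⁻¹ := by
  have hz := h.1
  rw [Valuation.comap_apply] at hz
  have hG : 1 < v (algebraMap L L' G) := by
    by_contra hcon
    push Not at hcon
    have := (mul_le_of_le_one_right' (a := v (algebraMap L L' z)) hcon).trans_lt hz
    exact absurd hzG this.ne
  obtain ⟨hy1, hyG⟩ := val_gen_ram hs hAS v hG
  have hy0 : v y ≠ 0 := (zero_lt_one.trans hy1).ne'
  have hzy : v (algebraMap L L' z) = v y ^ (-(s : ℤ)) := by
    rw [hyG] at hzG
    rw [zpow_neg, zpow_natCast]; exact eq_inv_of_mul_eq_one_left hzG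
  -- the value of `c * y ^ j` is a power of `v y` with exponent congruent to `j` modulo `s`
  have hterm : ∀ c : L, c ≠ 0 → ∀ j : ℕ, ∃ n : ℤ,
      v (algebraMap L L' c * y ^ j) = v y ^ (j - s * n) := by
    intro c hc0 j
    obtain ⟨n, hn⟩ := hval c hc0
    refine ⟨n, ?_⟩
    rw [map_mul, hn, hzy, ← zpow_mul, map_pow, ← zpow_natCast (v y) j, ← zpow_add₀ hy0]
    congr 1; ring
  have hinj : ∀ c d : L, c ≠ 0 → ∀ i < s, ∀ j < s,
      v (algebraMap L L' c * y ^ i) = v (algebraMap L L' d * y ^ j) → i = j := by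
    intro c d hc0 i hi j hj e
    have hd0 : d ≠ 0 := by
      rintro rfl
      rw [map_zero, zero_mul, map_zero, map_mul, map_pow] at e
      simp [hc0, hy0] at e
    obtain ⟨n, hn⟩ := hterm c hc0 i
    obtain ⟨n', hn'⟩ := hterm d hd0 j
    rw [hn, hn'] at e
    have e2 := (zpow_right_injective₀ (zero_lt_one.trans hy1) hy1.ne') e
    have e3 : ((i : ℤ) - j) = s * (n - n') := by linarith
    have e4 : ((s : ℤ) ∣ (i : ℤ) - j) := ⟨_, e3⟩
    have e5 := Int.eq_zero_of_abs_lt_dvd e4 (by rw [abs_lt]; omega)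
    omega
  have hinvy : v y⁻¹ = v y ^ (-1 : ℤ) := by simp
  refine ⟨by rw [map_inv₀]; exact inv_lt_one_of_one_lt₀ hy1, fun f hf => ?_⟩
  set c : ℕ → L := fun j => Algebra.trace L L' (f * asDual s y j)
  have hexp : f = ∑ j ∈ Finset.range s, algebraMap L L' (c j) * y ^ j := hAS.expand hs hc f
  have hle : ∀ j < s, v (algebraMap L L' (c j) * y ^ j) ≤ 1 := by
    intro j hj
    refine le_trans ?_ hf
    conv_rhs => rw [hexp]
    refine val_term_le_sum v (Finset.range s) (fun j => algebraMap L L' (c j) * y ^ j) ?_ j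
      (Finset.mem_range.mpr hj)
    intro i hi j hj h0 e
    refine hinj (c i) (c j) ?_ i (Finset.mem_range.mp hi) j (Finset.mem_range.mp hj) e
    intro h00; simp [h00] at h0
  have hlt : ∀ j, 0 < j → j < s → v (algebraMap L L' (c j) * y ^ j) ≤ v y⁻¹ := by
    intro j hj0 hj
    by_cases hcj : c j = 0
    · simp [hcj]
    have h1 := hle j hj
    obtain ⟨n, hn⟩ := hterm (c j) hcj j
    rw [hinvy, hn]
    rw [hn, ← zpow_zero (v y), zpow_le_zpow_iff_right₀ hy1] at h1
    rw [zpow_le_zpow_iff_right₀ hy1]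
    have : (j : ℤ) - s * n ≠ 0 := by
      intro e
      have e4 : ((s : ℤ) ∣ (j : ℤ)) := ⟨n, by linarith⟩
      have := Int.le_of_dvd (by omega) e4
      omega
    omega
  have h0 : v (algebraMap L L' (c 0)) ≤ 1 := by simpa using hle 0 (by omega)
  obtain ⟨g, hg, hg'⟩ := h.2 (c 0) h0
  rw [Valuation.comap_apply, map_sub, Valuation.comap_apply] at hg'
  refine ⟨_, hS g hg, ?_⟩
  have : f - algebraMap L L' g = (algebraMap L L' (c 0) - algebraMap L L' g) +
      ∑ j ∈ Finset.range (s - 1), algebraMap L L' (c (j + 1)) * y ^ (j + 1) := by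
    conv_lhs => rw [hexp]
    rw [show s = (s - 1) + 1 by omega, Finset.sum_range_succ']
    simp; ring
  rw [this]
  refine (v.map_add _ _).trans (max_le (hg'.trans ?_) (v.map_sum_le fun j hj => hlt _ (by omega) ?_))
  · rw [hzy, hinvy, zpow_le_zpow_iff_right₀ hy1]; omega
  · have := Finset.mem_range.mp hj
    omega

/-- If modulo `z` every integral element is a `p`-th power, then `z` is a uniformizer. -/
lemma val_eq_zpow_of_approx {L : Type*} [Field L] {p : ℕ} [Fact p.Prime] [CharP L p]
    (v : Valuation L ℤᵐ⁰) {z : L} (hz0 : z ≠ 0) (h : Approx (frobenius L p).fieldRange v z)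
    (f : L) (hf : f ≠ 0) : ∃ n : ℤ, v f = v z ^ n := by
  have hexp : ∀ g : L, g ≠ 0 → ∃ n : ℤ, v g = WithZero.exp n := fun g hg =>
    ⟨WithZero.log (v g), (WithZero.exp_log (by simpa using hg)).symm⟩
  obtain ⟨hz1, hap⟩ := h
  obtain ⟨e, he⟩ := hexp z hz0
  have hp := (Fact.out : p.Prime).two_le
  -- descent: a value strictly between `v z` and `1` is the `p`-th power of another such value
  have key : ∀ d : ℕ, ∀ g : L, v g = WithZero.exp (-(d : ℤ)) → 0 < d → e < -(d : ℤ) → False := by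
    intro d
    induction d using Nat.strong_induction_on with
    | _ d ih =>
      intro g hg hd hde
      obtain ⟨_, ⟨u, rfl⟩, hu⟩ := hap g (by
        rw [hg, ← WithZero.exp_zero, WithZero.exp_le_exp]; omega)
      have h1 : v (frobenius L p u) = v g := by
        apply Valuation.map_eq_of_sub_lt
        rw [Valuation.map_sub_swap]
        refine hu.trans_lt ?_
        rw [he, hg, WithZero.exp_lt_exp]; exact hde
      have hu0 : u ≠ 0 := by
        rintro rfl
        rw [map_zero, map_zero, hg] at h1
        exact WithZero.exp_ne_zero h1.symm
      obtain ⟨n, hn⟩ := hexp u hu0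
      rw [frobenius_def, map_pow, hn, hg, ← WithZero.exp_nsmul, WithZero.exp_inj,
        nsmul_eq_mul] at h1
      have hn0 : n < 0 := by
        by_contra hcon
        push Not at hcon
        have : (0 : ℤ) ≤ p * n := by positivity
        omega
      have hlt : -(d : ℤ) < n := by
        rw [← h1]
        have : (2 : ℤ) ≤ p := by exact_mod_cast hp
        nlinarith
      refine ih (-n).toNat (by omega) u ?_ (by omega) (by omega)
      rw [hn]; congr 1; omega
  obtain ⟨n, hn⟩ := hexp f hf
  have he0 : e < 0 := by rwa [he, ← WithZero.exp_zero, WithZero.exp_lt_exp] at hz1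
  refine ⟨-(n / -e) - if n % -e = 0 then 0 else 1, ?_⟩
  have hdiv := Int.emod_add_mul_ediv n (-e)
  have hm1 := Int.emod_nonneg n (b := -e) (by omega)
  have hm2 := Int.emod_lt_of_pos n (b := -e) (by omega)
  split_ifs with h0
  · rw [hn, he, ← WithZero.exp_zsmul, WithZero.exp_inj, smul_eq_mul]
    rw [h0] at hdiv; linarith
  · exfalso
    -- here `f * z ^ (n / -e + 1)` has value strictly between `v z` and `1`
    refine key (-e - n % -e).toNat (f * z ^ (n / -e + 1)) ?_ (by omega) (by omega)
    rw [map_mul, map_zpow₀, hn, he, ← WithZero.exp_zsmul, ← WithZero.exp_add, WithZero.exp_inj,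
      smul_eq_mul, Int.toNat_of_nonneg (by omega)]
    linarith

end Step

/-! ### Steps inside a fixed field -/

lemma ASExt.shift {L L' : Type*} [Field L] [Field L'] [Algebra L L'] {p a s : ℕ} [Fact p.Prime]
    [CharP L' p] (hsp : s = p ^ a) {y : L'} {G : L} (h : ASExt L L' s y G) (η : L) :
    ASExt L L' s (y - algebraMap L L' η) (G - η ^ s - η) where
  eq := by
    have := h.eq
    rw [hsp, sub_pow_char_pow] at *
    simp only [map_sub, map_pow]
    linear_combination this
  deg := h.deg
  gen := by
    rw [eq_top_iff, ← h.gen]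
    refine Algebra.adjoin_le ?_
    rw [Set.singleton_subset_iff]
    have h1 : y - algebraMap L L' η ∈ Algebra.adjoin L {y - algebraMap L L' η} :=
      Algebra.subset_adjoin rfl
    have h2 := Subalgebra.add_mem _ h1 (Subalgebra.algebraMap_mem _ η)
    simpa using h2

section Fields

variable {A k K : Type*} [CommRing A] [IsDedekindDomain A] [Field k] [Algebra A k]
  [IsFractionRing A k] [Field K] [Algebra A K] [Algebra k K] [IsScalarTower A k K]
  [FiniteDimensional k K] [Algebra.IsSeparable k K]

/-- The extension `L(y)`, as a subfield over the same base as `L`. -/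
def stepField (L : IntermediateField k K) (y : K) : IntermediateField k K :=
  (IntermediateField.adjoin L {y}).restrictScalars k

lemma le_stepField (L : IntermediateField k K) (y : K) : L ≤ stepField L y := by
  intro x hx
  exact (IntermediateField.adjoin L {y}).algebraMap_mem ⟨x, hx⟩

lemma mem_stepField (L : IntermediateField k K) (y : K) : y ∈ stepField L y :=
  IntermediateField.mem_adjoin_simple_self L y

noncomputable instance (L : IntermediateField k K) (y : K) : Algebra L (stepField L y) :=
  inferInstanceAs (Algebra L (IntermediateField.adjoin L {y}))

instance (L : IntermediateField k K) (y : K) : IsScalarTower k L (stepField L y) :=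
  IsScalarTower.of_algebraMap_eq fun _ => rfl

instance (L : IntermediateField k K) (y : K) : IsScalarTower A L (stepField L y) :=
  IsScalarTower.of_algebraMap_eq fun _ => rfl

/-- The degree of `L(y)` over `L`. -/
noncomputable def stepDeg (L : IntermediateField k K) (y : K) : ℕ := Module.finrank L (stepField L y)

/-- The codifferent bound at a subfield `L` of `K`. -/
def DB (A : Type*) {k K : Type*} [CommRing A] [Field k] [Algebra A k] [Field K] [Algebra A K]
    [Algebra k K] [IsScalarTower A k K] (L : IntermediateField k K) (v : Valuation K ℤᵐ⁰)
    (C : ℤᵐ⁰) : Prop :=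
  DualBound A k (v.comap (algebraMap L K)) C

/-- Every `v`-integral element of `L` is a `p`-th power modulo `z`. -/
def AP {k K : Type*} [Field k] [Field K] [Algebra k K] (p : ℕ) [Fact p.Prime] [CharP K p]
    (L : IntermediateField k K) (v : Valuation K ℤᵐ⁰) (z : K) : Prop :=
  ∃ hz : z ∈ L, Approx (frobenius L p).fieldRange
    (v.comap (algebraMap L K)) ⟨z, hz⟩

variable {p a s : ℕ} [Fact p.Prime] [CharP K p]

lemma asExt_stepField (L : IntermediateField k K) {y : K} {G : L} (hy : y ^ s + y = G)
    (hdeg : Module.finrank L (stepField L y) = s) :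
    ASExt L (stepField L y) s ⟨y, mem_stepField L y⟩ G where
  eq := by
    apply Subtype.ext
    exact hy
  deg := hdeg
  gen := by
    have hI : IsIntegral L y := (Algebra.IsIntegral.isIntegral (R := k) y).tower_top
    have := (IntermediateField.adjoin.powerBasis hI).adjoin_gen_eq_top
    rw [IntermediateField.adjoin.powerBasis_gen] at this
    exact this

variable (L : IntermediateField k K) {y : K} {G : L} (hs : 2 ≤ s) (hsp : s = p ^ a)
  (v : Valuation K ℤᵐ⁰) (hv : ∀ a : A, v (algebraMap A K a) ≤ 1)
  (hdeg : Module.finrank L (stepField L y) = s)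

include hs hsp in
lemma cast_s_eq_zero : (s : L) = 0 := by
  rw [hsp, Nat.cast_pow, CharP.cast_eq_zero, zero_pow]
  rintro rfl
  simp at hsp; omega

include hs hsp hv hdeg in
lemma DB.unram {C : ℤᵐ⁰} (h : DB A L v C) {η : K} (hη : η ∈ L) (hG : y ^ s + y ∈ L)
    (hv1 : v (y ^ s + y - η ^ s - η) ≤ 1) : DB A (stepField L y) v C := by
  have h1 := (asExt_stepField L (G := ⟨_, hG⟩) rfl hdeg).shift hsp ⟨η, hη⟩
  exact dualBound_unram (A := A) (k := k) hs (cast_s_eq_zero L hs hsp) h1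
    (v.comap (algebraMap (stepField L y) K)) (fun a => hv a) hv1 h

include hs hsp hv hdeg in
lemma AP.unram {z : K} (h : AP p L v z) {η : K} (hη : η ∈ L) (hG : y ^ s + y ∈ L)
    (hv1 : v (y ^ s + y - η ^ s - η) ≤ 1) : AP p (stepField L y) v z := by
  have h1 := (asExt_stepField L (G := ⟨_, hG⟩) rfl hdeg).shift hsp ⟨η, hη⟩
  obtain ⟨hz, h⟩ := h
  refine ⟨le_stepField L y hz, ?_⟩
  refine approx_unram (A := A) (k := k) hs (cast_s_eq_zero L hs hsp) h1
    (v.comap (algebraMap (stepField L y) K)) (fun a => hv a) hv1 ?_ h ?_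
  · rintro _ ⟨u, rfl⟩
    exact ⟨algebraMap L (stepField L y) u, by simp [frobenius_def]⟩
  · -- `ψ = G' - ψ ^ s`, where `G'` is a `p`-th power modulo `z` and `ψ ^ s` is a `p`-th power
    obtain ⟨_, ⟨g, rfl⟩, hg⟩ := h.2 (⟨_, hG⟩ - ⟨η, hη⟩ ^ s - ⟨η, hη⟩) hv1
    have ha : a ≠ 0 := by rintro rfl; simp at hsp; omega
    obtain ⟨b, rfl⟩ := Nat.exists_eq_succ_of_ne_zero ha
    refine ⟨_, ⟨algebraMap L (stepField L y) g -
      (⟨y, mem_stepField L y⟩ - algebraMap L (stepField L y) ⟨η, hη⟩) ^ p ^ b, rfl⟩, ?_⟩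
    refine le_of_eq_of_le ?_ hg
    rw [Valuation.comap_apply, Valuation.comap_apply]
    congr 1
    have e := congrArg (algebraMap (stepField L y) K) h1.eq
    simp only [map_sub, map_add, map_pow, frobenius_def] at e ⊢
    rw [← sub_pow_char (p := p) (algebraMap (stepField L y) K ⟨y, mem_stepField L y⟩),
      ← pow_mul, ← pow_succ', ← hsp]
    have e2 : ∀ t : L, algebraMap (stepField L y) K (algebraMap L (stepField L y) t)
      = algebraMap L K t := fun _ => rfl
    simp only [e2] at e ⊢
    linear_combination e

include hs hsp hv hdeg in
lemma DB.ram {C : ℤᵐ⁰} (h : DB A L v C) (hG : y ^ s + y ∈ L)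
    (hv1 : 1 < v (y ^ s + y)) : DB A (stepField L y) v (C * v y ^ (2 * s - 2)) := by
  have h1 := (asExt_stepField L (G := ⟨_, hG⟩) rfl hdeg)
  exact dualBound_ram (A := A) (k := k) hs (cast_s_eq_zero L hs hsp) h1
    (v.comap (algebraMap (stepField L y) K)) (fun a => hv a) hv1 h

include hs hsp hdeg in
lemma AP.ram {z : K} (h : AP p L v z) (hG : y ^ s + y ∈ L)
    (hv1 : v z * v (y ^ s + y) = 1) : AP p (stepField L y) v y⁻¹ := by
  have h1 := (asExt_stepField L (G := ⟨_, hG⟩) rfl hdeg)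
  obtain ⟨hz, h⟩ := h
  refine ⟨(stepField L y).inv_mem (mem_stepField L y), ?_⟩
  refine approx_ram (S := (frobenius L p).fieldRange) hs (cast_s_eq_zero L hs hsp) h1
    (v.comap (algebraMap (stepField L y) K)) ?_ hv1 ?_ h
  · rintro _ ⟨u, rfl⟩
    exact ⟨algebraMap L (stepField L y) u, by simp [frobenius_def]⟩
  · refine val_eq_zpow_of_approx _ ?_ h
    intro e
    have : z = 0 := congrArg Subtype.val e
    simp [this] at hv1

end Fields

/-! ### The additive polynomial `Y ^ s + Y` over the field with `s ^ 2` elements -/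

section FF
variable {F : Type*} [Field F] [Fintype F] [DecidableEq F] {p a s : ℕ} [Fact p.Prime] [CharP F p]
  (hs : 2 ≤ s) (hsp : s = p ^ a) (hF : Fintype.card F = s ^ 2)

/-- The additive map `β ↦ β ^ s + β`; on `F_{s²}` it is the trace to `F_s`. -/
def nHom (F : Type*) [Field F] {p : ℕ} (a : ℕ) [Fact p.Prime] [CharP F p] : F →+ F where
  toFun β := β ^ p ^ a + β
  map_zero' := by simp [(Fact.out : p.Prime).ne_zero]
  map_add' x y := by rw [add_pow_char_pow]; ring

lemma card_filter_poly_le {L : Type*} [Field L] [DecidableEq L] (P : L[X]) (hP : P ≠ 0)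
    (t : Finset L) (ht : ∀ β ∈ t, P.eval β = 0) : t.card ≤ P.natDegree := by
  have : t ⊆ P.roots.toFinset := fun β hβ => by
    rw [Multiset.mem_toFinset, mem_roots hP]; exact ht β hβ
  exact (Finset.card_le_card this).trans ((Multiset.toFinset_card_le _).trans (card_roots' P))

lemma natDegree_aux {L : Type*} [Field L] (hs : 2 ≤ s) (u c : L) :
    (X ^ s + (C u * X - C c) : L[X]).natDegree = s ∧ (X ^ s + (C u * X - C c) : L[X]).Monic := by
  have h : (C u * X - C c : L[X]).degree < s := by
    refine lt_of_le_of_lt (degree_sub_le _ _) (max_lt ?_ ?_)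
    · exact lt_of_le_of_lt (degree_C_mul_X_le _) (by exact_mod_cast hs)
    · exact lt_of_le_of_lt degree_C_le (by exact_mod_cast (by omega : 0 < s))
  refine ⟨?_, monic_X_pow_add h⟩
  rw [natDegree_add_eq_left_of_degree_lt (by rwa [degree_X_pow]), natDegree_X_pow]

include hs hsp hF in
lemma card_fiber (c : F) (hc : c ^ s = c) :
    (Finset.univ.filter fun β : F => β ^ s + β = c).card = s := by
  set T := nHom (p := p) F a
  have hT : ∀ β, T β = β ^ s + β := fun β => by rw [hsp]; rfl
  have hle : ∀ c : F, (Finset.univ.filter fun β : F => β ^ s + β = c).card ≤ s := by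
    intro c
    have h := natDegree_aux (s := s) hs (1 : F) c
    calc _ ≤ _ := card_filter_poly_le _ h.2.ne_zero _ (fun β hβ => by
          rw [Finset.mem_filter] at hβ
          simp; linear_combination hβ.2)
      _ = s := h.1
  have hfix : (Finset.univ.filter fun d : F => d ^ s = d).card ≤ s := by
    have h := natDegree_aux (s := s) hs (-1 : F) 0
    calc _ ≤ _ := card_filter_poly_le _ h.2.ne_zero _ (fun β hβ => by
          rw [Finset.mem_filter] at hβ
          simp; linear_combination hβ.2)
      _ = s := h.1
  have hmap : ∀ β ∈ (Finset.univ : Finset F),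
      β ^ s + β ∈ (Finset.univ.filter fun d : F => d ^ s = d) := by
    intro β _
    rw [Finset.mem_filter]
    refine ⟨Finset.mem_univ _, ?_⟩
    have h1 : β ^ (s * s) = β := by
      have := FiniteField.pow_card β
      rwa [hF, sq] at this
    have h2 : (β ^ s + β) ^ s = (β ^ s) ^ s + β ^ s := by
      conv_lhs => rw [hsp, add_pow_char_pow]
      rw [← hsp]
    rw [h2, ← pow_mul, h1]; ring
  have hsum := Finset.card_eq_sum_card_fiberwise hmap
  rw [Finset.card_univ, hF] at hsum
  by_contra hne
  have hlt : (Finset.univ.filter fun β : F => β ^ s + β = c).card < s :=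
    lt_of_le_of_ne (hle c) hne
  have : ∑ b ∈ Finset.univ.filter (fun d : F => d ^ s = d),
      (Finset.univ.filter fun β : F => β ^ s + β = b).card
      < ∑ b ∈ Finset.univ.filter (fun d : F => d ^ s = d), s :=
    Finset.sum_lt_sum (fun b _ => hle b) ⟨c, by simp [hc], hlt⟩
  rw [← hsum, Finset.sum_const, smul_eq_mul] at this
  nlinarith

include hs hsp hF in
/-- The polynomial `Y ^ s + Y - c` with `c ∈ F_s` splits into distinct linear factors over
`F = F_{s²}`. -/
lemma prod_fiber {K : Type*} [Field K] [Algebra F K] (c : F) (hc : c ^ s = c) (y : K) :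
    y ^ s + y - algebraMap F K c =
      ∏ β ∈ Finset.univ.filter (fun β : F => β ^ s + β = c), (y - algebraMap F K β) := by
  have h := natDegree_aux (s := s) hs (1 : F) c
  set P : F[X] := X ^ s + (C 1 * X - C c)
  have hsub : (Finset.univ.filter fun β : F => β ^ s + β = c).val ≤ P.roots := by
    rw [Finset.val_le_iff_val_subset]
    intro β hβ
    rw [mem_roots h.2.ne_zero]
    have hβ : β ^ s + β = c := by simpa using hβ
    simp [P]; linear_combination hβ
  have hroots : (Finset.univ.filter fun β : F => β ^ s + β = c).val = P.roots := by
    refine Multiset.eq_of_le_of_card_le hsub ?_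
    rw [Finset.card_val, card_fiber hs hsp hF c hc, ← h.1]
    exact card_roots' P
  have h2 := prod_multiset_X_sub_C_of_monic_of_roots_card_eq h.2 (by
    rw [← hroots, Finset.card_val, card_fiber hs hsp hF c hc, h.1])
  rw [← hroots] at h2
  have h3 := congrArg (aeval y) h2
  have h4 : (Multiset.map (fun a => X - C a)
    (Finset.univ.filter fun β : F => β ^ s + β = c).val).prod =
    ∏ β ∈ Finset.univ.filter (fun β : F => β ^ s + β = c), (X - C β) := rfl
  rw [h4, map_prod] at h3
  simp only [map_sub, aeval_X, aeval_C] at h3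
  rw [h3]
  simp [P]; ring

include hs hsp hF in
lemma card_good : (Finset.univ.filter fun β : F => β ^ s + β ≠ 0).card = s ^ 2 - s := by
  have h1 := card_fiber hs hsp hF (0 : F) (by simp; omega)
  have h2 := Finset.card_filter_add_card_filter_not (s := (Finset.univ : Finset F))
    (fun β : F => β ^ s + β = 0)
  rw [h1, Finset.card_univ, hF] at h2
  have : (Finset.univ.filter fun β : F => β ^ s + β ≠ 0) =
    (Finset.univ.filter fun β : F => ¬ (β ^ s + β = 0)) := rfl
  rw [this]; omega

end FF

/-! ### The tower and its base level -/

/-- The right-hand side `u ^ s / (u ^ (s - 1) + 1)` of the tower recursion. -/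
noncomputable def phi {K : Type*} [Field K] (s : ℕ) (u : K) : K := u ^ s / (u ^ (s - 1) + 1)

/-- The quotient whose square is the derivative of `phi s` at `u`. -/
noncomputable def Aq {K : Type*} [Field K] (s : ℕ) (u : K) : K := u ^ (s - 1) / (u ^ (s - 1) + 1)

section ValLemmas

variable {K Γ : Type*} [Field K] [LinearOrderedCommGroupWithZero Γ] (v : Valuation K Γ) {s : ℕ}
  (hs : 2 ≤ s) {u : K}

include hs

lemma N_eq : u ^ s + u = u * (u ^ (s - 1) + 1) := by
  rw [mul_add, ← pow_succ', show s - 1 + 1 = s by omega, mul_one]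

lemma phi_eq : phi s u = u * Aq s u := by
  rw [phi, Aq, mul_div_assoc', ← pow_succ', show s - 1 + 1 = s by omega]

lemma val_A_of_lt (h : v u < 1) : v (u ^ (s - 1) + 1) = 1 := by
  rw [Valuation.map_add_eq_of_lt_right] <;> rw [map_one]
  rw [map_pow]; exact pow_lt_one₀ zero_le h (by omega)

lemma val_A_of_gt (h : 1 < v u) : v (u ^ (s - 1) + 1) = v u ^ (s - 1) := by
  rw [Valuation.map_add_eq_of_lt_left] <;> rw [map_pow]
  rw [map_one]; exact one_lt_pow₀ h (by omega)

lemma val_N_of_lt (h : v u < 1) : v (u ^ s + u) = v u := by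
  rw [N_eq hs, map_mul, val_A_of_lt v hs h, mul_one]

lemma val_Aq_of_lt (h : v u < 1) : v (Aq s u) = v u ^ (s - 1) := by
  rw [Aq, map_div₀, val_A_of_lt v hs h, div_one, map_pow]

lemma val_Aq_of_gt (h : 1 < v u) : v (Aq s u) = 1 := by
  rw [Aq, map_div₀, val_A_of_gt v hs h, map_pow, div_self]
  exact pow_ne_zero _ (zero_lt_one.trans h).ne'

lemma val_phi_of_lt (h : v u < 1) : v (phi s u) = v u ^ s := by
  rw [phi_eq hs, map_mul, val_Aq_of_lt v hs h, ← pow_succ', show s - 1 + 1 = s by omega]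

lemma val_phi_of_gt (h : 1 < v u) : v (phi s u) = v u := by
  rw [phi_eq hs, map_mul, val_Aq_of_gt v hs h, mul_one]

lemma val_Aq_of_one (h : v u = 1) : v (Aq s u) = (v (u ^ s + u))⁻¹ := by
  rw [Aq, map_div₀, map_pow, N_eq hs, map_mul, h, one_pow, one_mul, one_div]

lemma val_phi_of_one (h : v u = 1) : v (phi s u) = (v (u ^ s + u))⁻¹ := by
  rw [phi_eq hs, map_mul, val_Aq_of_one v hs h, h, one_mul]

lemma val_le_one_of_N (h : v (u ^ s + u) ≤ 1) : v u ≤ 1 := by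
  by_contra hcon
  push Not at hcon
  rw [N_eq hs, map_mul, val_A_of_gt v hs hcon, ← pow_succ', show s - 1 + 1 = s by omega] at h
  exact absurd h (not_le.mpr (one_lt_pow₀ hcon (by omega)))

lemma val_one_of_N (h : v (u ^ s + u) = 1) : v u = 1 := by
  have h1 := val_le_one_of_N v hs h.le
  by_contra hcon
  have := lt_of_le_of_ne h1 hcon
  rw [val_N_of_lt v hs this] at h
  exact hcon h

end ValLemmas

lemma deriv_phi {F K : Type*} [Field F] [Field K] [Algebra F K] (D : Derivation F K K) {s : ℕ}
    (hs : 2 ≤ s) (hc : (s : K) = 0) (u : K) :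
    D (phi s u) = Aq s u ^ 2 * D u := by
  by_cases hu : u ^ (s - 1) + 1 = 0
  · simp [phi, Aq, hu]
  have h1 : D (phi s u * (u ^ (s - 1) + 1)) = D (u ^ s) := by
    rw [phi, div_mul_cancel₀ _ hu]
  have hpow : ∀ n : ℕ, D (u ^ n) = n * u ^ (n - 1) * D u := by
    intro n
    rw [Derivation.leibniz_pow, smul_eq_mul, nsmul_eq_mul, mul_assoc]
  have hc1 : ((s - 1 : ℕ) : K) = -1 := by
    rw [Nat.cast_sub (by omega), hc]; simp
  rw [Derivation.leibniz, map_add, hpow, hpow, hc, hc1] at h1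
  simp only [smul_eq_mul, Derivation.map_one_eq_zero] at h1
  have h2 : (u ^ (s - 1) + 1) * D (phi s u) = phi s u * u ^ (s - 1 - 1) * D u := by
    linear_combination h1
  have h3 : phi s u * u ^ (s - 1 - 1) = (u ^ (s - 1)) ^ 2 / (u ^ (s - 1) + 1) := by
    rw [phi, div_mul_eq_mul_div, ← pow_add, ← pow_mul]
    congr 2; omega
  rw [h3] at h2
  rw [Aq]
  field_simp at h2 ⊢
  linear_combination h2

/-- The data of the tower `x (i + 1) ^ s + x (i + 1) = phi s (x i)` of height `m` over `F(X)`: its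
generators and levels, the place at infinity and the derivation extending `d/dX`. -/
structure Tower (F K : Type*) [Field F] [Field K] [Algebra F K] [Algebra F[X] K]
    [Algebra (RatFunc F) K] (s m : ℕ) where
  x : ℕ → K
  L : ℕ → IntermediateField (RatFunc F) K
  vinf : Valuation K ℤᵐ⁰
  D : Derivation F K K
  x_zero : x 0 = algebraMap F[X] K X
  x_rec : ∀ i < m, x (i + 1) ^ s + x (i + 1) = phi s (x i)
  L_zero : L 0 = ⊥
  L_succ : ∀ i < m, L (i + 1) = stepField (L i) (x (i + 1))
  L_top : L m = ⊤
  deg : ∀ i < m, stepDeg (L i) (x (i + 1)) = s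
  vinf_x : ∀ i ≤ m, vinf (x i) = WithZero.exp ((s : ℤ) ^ (m - i))
  vinf_const : ∀ c : F, c ≠ 0 → vinf (algebraMap F K c) = 1
  residue : ∀ f, vinf f ≤ 1 → ∃ c : F, vinf (f - algebraMap F K c) < 1
  D_x : D (x 0) = 1
  vinf_D : ∀ f, vinf (D f) ≤ vinf f * WithZero.exp (-1)

section Base

variable {F K : Type*} [Field F] [Fintype F] [Field K] [Algebra F[X] K]
    [Algebra (RatFunc F) K] [IsScalarTower F[X] (RatFunc F) K]
    [FiniteDimensional (RatFunc F) K] [Algebra.IsSeparable (RatFunc F) K]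
    {p : ℕ} [Fact p.Prime] [CharP F p] [CharP K p]
    (v : Valuation K ℤᵐ⁰) (hv : ∀ a : F[X], v (algebraMap F[X] K a) ≤ 1)

include hv in
lemma DB.base : DB F[X] (⊥ : IntermediateField (RatFunc F) K) v 1 := by
  intro h hh
  obtain ⟨a, ha⟩ := hh 1 isIntegral_one
  obtain ⟨⟩ := h
  rename_i h hmem
  obtain ⟨c, rfl⟩ := IntermediateField.mem_bot.mp hmem
  have : (⟨algebraMap (RatFunc F) K c, hmem⟩ : (⊥ : IntermediateField (RatFunc F) K)) =
    algebraMap (RatFunc F) _ c := rfl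
  rw [mul_one, this, Algebra.trace_algebraMap, IntermediateField.finrank_bot, one_smul] at ha
  rw [Valuation.comap_apply]
  change v (algebraMap (RatFunc F) K c) ≤ 1
  rw [← ha, ← IsScalarTower.algebraMap_apply]
  exact hv a

lemma exists_pth_root_mod (P : F[X]) (hP : Irreducible P) (f : F[X]) :
    ∃ g : F[X], P ∣ f - g ^ p := by
  have hmax : (Ideal.span {P}).IsMaximal := PrincipalIdealRing.isMaximal_of_irreducible hP
  let Q := F[X] ⧸ Ideal.span {P}
  have hmon : Finite Q := by
    have : Module.Finite F (AdjoinRoot P) :=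
      (AdjoinRoot.powerBasis hP.ne_zero).finite
    exact Module.finite_of_finite F (M := AdjoinRoot P)
  have : IsDomain Q := Ideal.Quotient.isDomain _
  have : CharP Q p := charP_of_injective_algebraMap (algebraMap F Q).injective p
  have hsurj : Function.Surjective (frobenius Q p) :=
    Finite.surjective_of_injective (frobenius_inj Q p)
  obtain ⟨g, hg⟩ := hsurj (Ideal.Quotient.mk _ f)
  obtain ⟨g, rfl⟩ := Ideal.Quotient.mk_surjective g
  refine ⟨g, ?_⟩
  rw [← Ideal.mem_span_singleton, ← Ideal.Quotient.eq, ← hg, map_pow]; rfl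

lemma isIntegral_bot {r : (⊥ : IntermediateField (RatFunc F) K)} (hr : IsIntegral F[X] r) :
    ∃ f : F[X], (r : K) = algebraMap F[X] K f := by
  obtain ⟨r, hmem⟩ := r
  obtain ⟨c, rfl⟩ := IntermediateField.mem_bot.mp hmem
  have h1 : IsIntegral F[X] c := by
    have : IsScalarTower F[X] (⊥ : IntermediateField (RatFunc F) K) K :=
      IsScalarTower.of_algebraMap_eq fun _ => rfl
    have h2 : IsIntegral F[X] (algebraMap (RatFunc F) K c) :=
      hr.map (IsScalarTower.toAlgHom F[X] (⊥ : IntermediateField (RatFunc F) K) K)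
    exact (isIntegral_algebraMap_iff (algebraMap (RatFunc F) K).injective).mp h2
  obtain ⟨f, hf⟩ := IsIntegrallyClosed.isIntegral_iff.mp h1
  exact ⟨f, by rw [IsScalarTower.algebraMap_apply F[X] (RatFunc F) K, hf]⟩

include hv in
lemma AP.base (P : F[X]) (hP : Irreducible P) (hP1 : v (algebraMap F[X] K P) < 1) :
    AP p (⊥ : IntermediateField (RatFunc F) K) v (algebraMap F[X] K P) := by
  have hmem : ∀ f : F[X], algebraMap F[X] K f ∈ (⊥ : IntermediateField (RatFunc F) K) := by
    intro f
    rw [IsScalarTower.algebraMap_apply F[X] (RatFunc F) K]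
    exact IntermediateField.algebraMap_mem _ _
  refine ⟨hmem P, ?_⟩
  refine mem_of_frac (A := F[X]) (k := RatFunc F)
    (v.comap (algebraMap (⊥ : IntermediateField (RatFunc F) K) K)) (fun a => hv a) hP1 fun r hr => ?_
  refine ⟨val_le_one_of_isIntegral
    (v.comap (algebraMap (⊥ : IntermediateField (RatFunc F) K) K)) (fun a => hv a) hr, ?_⟩
  obtain ⟨f, hf⟩ := isIntegral_bot hr
  obtain ⟨g, h, hg⟩ := exists_pth_root_mod (p := p) P hP f
  refine ⟨_, ⟨⟨algebraMap F[X] K g, hmem g⟩, rfl⟩, ?_⟩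
  change v ((r : K) - (algebraMap F[X] K g) ^ p) ≤ v (algebraMap F[X] K P)
  rw [hf, ← map_pow, ← map_sub, hg, map_mul, map_mul]
  exact mul_le_of_le_one_right' (hv h)

end Base

/-! ### Constants and derivations at a finite place -/

section Transfer

variable {F K : Type*} [Field F] [Field K] [Algebra F K] [Algebra F[X] K] [IsScalarTower F F[X] K]
    (v : Valuation K ℤᵐ⁰) (hv : ∀ a : F[X], v (algebraMap F[X] K a) ≤ 1)

include hv

lemma val_const_le (c : F) : v (algebraMap F K c) ≤ 1 := by
  rw [IsScalarTower.algebraMap_apply F F[X] K]; exact hv _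

lemma val_const {c : F} (hc : c ≠ 0) : v (algebraMap F K c) = 1 := by
  refine le_antisymm (val_const_le v hv c) ?_
  have h := val_const_le v hv c⁻¹
  rw [map_inv₀, map_inv₀] at h
  have h0 : v (algebraMap F K c) ≠ 0 := by simpa using hc
  exact (inv_le_one₀ (zero_lt_iff.mpr h0)).mp h

/-- If `y ^ s + y` is close to an element `c` of `F_s`, then `y` is equally close to one of the
preimages of `c` in `F`. -/
lemma exists_root_val [Fintype F] [DecidableEq F] {p a s : ℕ} [Fact p.Prime] [CharP F p]
    (hs : 2 ≤ s) (hsp : s = p ^ a)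
    (hF : Fintype.card F = s ^ 2) {c : F} (hc : c ^ s = c) {y : K}
    (h : v (y ^ s + y - algebraMap F K c) < 1) :
    ∃ β : F, β ^ s + β = c ∧ v (y - algebraMap F K β) = v (y ^ s + y - algebraMap F K c) := by
  rw [prod_fiber hs hsp hF c hc y, map_prod] at h
  have : ∃ β ∈ Finset.univ.filter (fun β : F => β ^ s + β = c), v (y - algebraMap F K β) < 1 := by
    by_contra hcon
    push Not at hcon
    exact absurd h (not_lt.mpr (Finset.one_le_prod' hcon))
  obtain ⟨β, hβ, hlt⟩ := this
  refine ⟨β, (Finset.mem_filter.mp hβ).2, ?_⟩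
  rw [prod_fiber hs hsp hF c hc y, map_prod, ← Finset.mul_prod_erase _ _ hβ,
    Finset.prod_eq_one, mul_one]
  intro β' hβ'
  have h1 : v (algebraMap F K β - algebraMap F K β') = 1 := by
    rw [← map_sub]
    exact val_const v hv (sub_ne_zero.mpr (Finset.ne_of_mem_erase hβ').symm)
  have h2 : y - algebraMap F K β' = (y - algebraMap F K β) +
    (algebraMap F K β - algebraMap F K β') := by ring
  rw [h2, Valuation.map_add_eq_of_lt_right _ (by rwa [h1]), h1]

end Transfer

section DerivBound

variable {F K : Type*} [Field F] [Field K] [Algebra F K] [Algebra F[X] K] [IsScalarTower F F[X] K]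
    [Algebra (RatFunc F) K] [IsScalarTower F[X] (RatFunc F) K]
    [FiniteDimensional (RatFunc F) K] [Algebra.IsSeparable (RatFunc F) K]
    {p : ℕ} [Fact p.Prime] [CharP K p]
    (v : Valuation K ℤᵐ⁰) (hv : ∀ a : F[X], v (algebraMap F[X] K a) ≤ 1)
    (D : Derivation F K K) (hD : D (algebraMap F[X] K X) = 1)

include hD in
lemma D_poly (f : F[X]) : D (algebraMap F[X] K f) = algebraMap F[X] K (derivative f) := by
  have h1 : ∀ g : F[X], algebraMap F[X] K g = aeval (algebraMap F[X] K X) g := by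
    intro g
    have := aeval_algebraMap_apply K (X : F[X]) g
    rw [aeval_X_left_apply] at this
    exact this.symm
  rw [h1 f, h1 (derivative f), Derivation.map_aeval, hD, smul_eq_mul, mul_one]

include hv hD in
lemma D_bounded : ∃ B : ℤᵐ⁰, ∀ f, v f ≤ 1 → v (D f) ≤ B := by
  let R := integralClosure F[X] K
  have : Module.Finite F[X] R := IsIntegralClosure.finite F[X] (RatFunc F) K R
  obtain ⟨n, ρ, hρ⟩ := Module.Finite.exists_fin (R := F[X]) (M := R)
  have hvR : ∀ r : K, IsIntegral F[X] r → v r ≤ 1 :=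
    fun r hr => val_le_one_of_isIntegral v hv hr
  let B := (Finset.univ.sup fun i => v (D (ρ i))) ⊔ 1
  refine ⟨B, ?_⟩
  have hR : ∀ r : K, IsIntegral F[X] r → v (D r) ≤ B := by
    intro r hr
    have : (⟨r, hr⟩ : R) ∈ Submodule.span F[X] (Set.range ρ) := by rw [hρ]; trivial
    obtain ⟨c, hc⟩ := (Submodule.mem_span_range_iff_exists_fun F[X]).mp this
    have hc' : r = ∑ i, algebraMap F[X] K (c i) * (ρ i : K) := by
      have := congrArg (algebraMap R K) hc
      simp only [map_sum, Algebra.smul_def, map_mul] at this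
      exact this.symm
    rw [hc', map_sum]
    refine Valuation.map_sum_le _ fun i _ => ?_
    rw [Derivation.leibniz, D_poly D hD, smul_eq_mul, smul_eq_mul]
    refine (v.map_add _ _).trans (max_le ?_ ?_)
    · rw [map_mul]
      refine (mul_le_of_le_one_left' (hv _)).trans ?_
      exact le_sup_of_le_left (Finset.le_sup (f := fun i => v (D (ρ i))) (Finset.mem_univ i))
    · rw [map_mul]
      exact le_sup_of_le_right (mul_le_one' (hvR _ (ρ i).2) (hv _))
  intro f hf
  obtain ⟨r, r', hr, hr', h1, e⟩ := exists_frac (A := F[X]) (k := RatFunc F) v hv f hf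
  have h2 : r' * D f = D r - f * D r' := by
    rw [← e, Derivation.leibniz, smul_eq_mul, smul_eq_mul]; ring
  have h3 : v (D f) = v (D r - f * D r') := by rw [← h2, map_mul, h1, one_mul]
  rw [h3]
  refine (v.map_sub _ _).trans (max_le (hR _ hr) ?_)
  rw [map_mul]
  exact (mul_le_of_le_one_left' hf).trans (hR _ hr')

include hv hD in
/-- If every integral element is a `p`-th power modulo `z`, then iterating `f = g ^ p + z f₁` bounds
`D f` by `D z` up to terms `z ^ n D fₙ`, which are eventually negligible. -/
lemma val_D_le {z : K} (h : AP p (⊤ : IntermediateField (RatFunc F) K) v z) {E : ℤᵐ⁰} (hE : E ≠ 0)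
    (hz : v (D z) ≤ E) (f : K) (hf : v f ≤ 1) : v (D f) ≤ E := by
  obtain ⟨B, hB⟩ := D_bounded v hv D hD
  obtain ⟨hz', hz1, h⟩ := h
  change v z < 1 at hz1
  have hchar : (p : K) = 0 := CharP.cast_eq_zero K p
  have key : ∀ n : ℕ, ∀ f, v f ≤ 1 → v (D f) ≤ max E (v z ^ n * B) := by
    intro n
    induction n with
    | zero => intro f hf; simpa using Or.inr (hB f hf)
    | succ n ih =>
      intro f hf
      obtain ⟨_, ⟨g, rfl⟩, hg⟩ := h ⟨f, trivial⟩ hf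
      replace hg : v (f - (g : K) ^ p) ≤ v z := hg
      by_cases hz0 : z = 0
      · have hf1 : f = (g : K) ^ p := by
          rw [hz0, map_zero] at hg
          exact sub_eq_zero.mp ((map_eq_zero v).mp (le_zero_iff.mp hg))
        rw [hf1, Derivation.leibniz_pow, nsmul_eq_mul, hchar, zero_mul, map_zero]
        exact zero_le
      set f1 := (f - (g : K) ^ p) / z with hf1
      have e : f = (g : K) ^ p + z * f1 := by rw [hf1]; field_simp; ring
      have hvf1 : v f1 ≤ 1 := by
        rw [hf1, map_div₀]; exact div_le_one_of_le₀ hg zero_le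
      rw [e, map_add, Derivation.leibniz_pow, nsmul_eq_mul, hchar, zero_mul, zero_add,
        Derivation.leibniz, smul_eq_mul, smul_eq_mul]
      refine (v.map_add _ _).trans (max_le ?_ ?_)
      · rw [map_mul]
        refine (mul_le_mul_right (ih f1 hvf1) _).trans ?_
        rcases le_total E (v z ^ n * B) with h | h
        · rw [max_eq_right h, ← mul_assoc, ← pow_succ']; exact le_max_right _ _
        · rw [max_eq_left h]; exact (mul_le_of_le_one_left' hz1.le).trans (le_max_left _ _)
      · rw [map_mul]
        exact (mul_le_of_le_one_left' hvf1).trans (hz.trans (le_max_left _ _))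
  by_cases hB0 : B = 0
  · have := hB f hf
    rw [hB0] at this
    exact this.trans zero_le
  obtain ⟨n, hn⟩ := exists_pow_lt₀ hz1 (Units.mk0 (E / B) (div_ne_zero hE hB0))
  have h1 := key n f hf
  have h2 : v z ^ n * B ≤ E := by
    have := mul_le_mul_left hn.le B
    simpa [div_mul_cancel₀ _ hB0] using this
  exact h1.trans (max_le le_rfl h2)

lemma DB.top {C : ℤᵐ⁰} (h : DB F[X] (⊤ : IntermediateField (RatFunc F) K) v C) (f : K)
    (hf : InDual F[X] (RatFunc F) f) : v f ≤ C := by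
  refine h ⟨f, trivial⟩ fun r hr => ?_
  have : IsScalarTower F[X] (⊤ : IntermediateField (RatFunc F) K) K :=
      IsScalarTower.of_algebraMap_eq fun _ => rfl
  obtain ⟨a, ha⟩ := hf r (hr.map
    (IsScalarTower.toAlgHom F[X] (⊤ : IntermediateField (RatFunc F) K) K))
  refine ⟨a, ha.trans ?_⟩
  rw [← Algebra.trace_eq_of_algEquiv (IntermediateField.topEquiv (F := RatFunc F) (E := K))]
  rfl

end DerivBound

/-! ### The tower at its finite places -/

section States

variable {F K : Type*} [Field F] [Fintype F] [DecidableEq F] [Field K] [Algebra F K]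
    [Algebra F[X] K] [IsScalarTower F F[X] K]
    [Algebra (RatFunc F) K] [IsScalarTower F[X] (RatFunc F) K]
    [FiniteDimensional (RatFunc F) K] [Algebra.IsSeparable (RatFunc F) K]
    {p a s m : ℕ} [Fact p.Prime] [CharP F p] [CharP K p]
    (T : Tower F K s m) (hs : 2 ≤ s) (hsp : s = p ^ a) (hF : Fintype.card F = s ^ 2)
    (v : Valuation K ℤᵐ⁰) (hv : ∀ a : F[X], v (algebraMap F[X] K a) ≤ 1)

namespace Tower

lemma L_le {i j : ℕ} (hij : i ≤ j) (hj : j ≤ m) : T.L i ≤ T.L j := by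
  induction j, hij using Nat.le_induction with
  | base => exact le_rfl
  | succ j _ ih =>
    rw [T.L_succ j (by omega)]
    exact (ih (by omega)).trans (le_stepField _ _)

lemma x_mem {i j : ℕ} (hij : i ≤ j) (hj : j ≤ m) : T.x i ∈ T.L j := by
  refine T.L_le hij hj ?_
  cases i with
  | zero =>
    rw [T.x_zero, T.L_zero, IsScalarTower.algebraMap_apply F[X] (RatFunc F) K]
    exact IntermediateField.algebraMap_mem _ _
  | succ i => rw [T.L_succ i (by omega)]; exact mem_stepField _ _

lemma const_mem (L : IntermediateField (RatFunc F) K) (c : F) : algebraMap F K c ∈ L := by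
  rw [IsScalarTower.algebraMap_apply F F[X] K, IsScalarTower.algebraMap_apply F[X] (RatFunc F) K]
  exact IntermediateField.algebraMap_mem _ _

lemma phi_mem (L : IntermediateField (RatFunc F) K) {u : K} (hu : u ∈ L) : phi s u ∈ L :=
  L.div_mem (pow_mem hu _) (L.add_mem (pow_mem hu _) L.one_mem)

include hs hsp in
lemma cast_s : (s : K) = 0 := by
  rw [hsp, Nat.cast_pow, CharP.cast_eq_zero, zero_pow]
  rintro rfl
  simp at hsp; omega

include hs hsp in
lemma D_succ {i : ℕ} (hi : i < m) : T.D (T.x (i + 1)) = T.D (phi s (T.x i)) := by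
  rw [← T.x_rec i hi, map_add, Derivation.leibniz_pow, nsmul_eq_mul, cast_s (K := K) hs hsp]
  simp

include hs hsp in
lemma D_phi (u : K) : T.D (phi s u) = Aq s u ^ 2 * T.D u := deriv_phi T.D hs (cast_s hs hsp) u

include hsp in
lemma sub_N (y η : K) : (y - η) ^ s + (y - η) = y ^ s + y - η ^ s - η := by
  rw [hsp, sub_pow_char_pow]; ring

include hs hsp hv in
lemma unram_step {i : ℕ} (hi : i < m) {C : ℤᵐ⁰} {z η : K} (hDB : DB F[X] (T.L i) v C)
    (hAP : AP p (T.L i) v z) (hη : η ∈ T.L i) (h : v (phi s (T.x i) - η ^ s - η) ≤ 1) :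
    DB F[X] (T.L (i + 1)) v C ∧ AP p (T.L (i + 1)) v z := by
  rw [T.L_succ i hi]
  have hG : T.x (i + 1) ^ s + T.x (i + 1) ∈ T.L i := by
    rw [T.x_rec i hi]; exact phi_mem _ (T.x_mem le_rfl hi.le)
  rw [← T.x_rec i hi] at h
  exact ⟨DB.unram _ hs hsp v hv (T.deg i hi) hDB hη hG h,
    AP.unram (A := F[X]) _ hs hsp v hv (T.deg i hi) hAP hη hG h⟩

/-- Unramified and regular so far. -/
structure Good (p : ℕ) [Fact p.Prime] [CharP K p] (i : ℕ) : Prop where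
  x : v (T.x i ^ s + T.x i) = 1
  db : DB F[X] (T.L i) v 1
  ap : ∃ z, AP p (T.L i) v z ∧ v (T.D z) ≤ 1

/-- All of `x 0, …, x i` have zeros. -/
structure StZ (p : ℕ) [Fact p.Prime] [CharP K p] (i : ℕ) : Prop where
  lt : v (T.x 0) < 1
  x : ∀ j ≤ i, v (T.x j) = v (T.x 0) ^ s ^ j
  db : DB F[X] (T.L i) v 1
  ap : AP p (T.L i) v (T.x 0)
  d : v (T.D (T.x i)) = (v (T.x i) * (v (T.x 0))⁻¹) ^ 2

/-- `x 0, …, x (t - 1)` have zeros, `x t` specializes to a nonzero root `ω` of `ω ^ s + ω = 0`, and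
`x (t + 1), …, x i` have poles mirroring the earlier zeros. -/
structure StW (p : ℕ) [Fact p.Prime] [CharP K p] (t i : ℕ) (ω : F) : Prop where
  lt : v (T.x 0) < 1
  pos : 1 ≤ t
  le : t ≤ i
  le' : i ≤ 2 * t
  x : ∀ j < t, v (T.x j) = v (T.x 0) ^ s ^ j
  root : ω ^ s + ω = 0
  ne : ω ≠ 0
  xt : v (T.x t - algebraMap F K ω) = v (T.x t ^ s + T.x t)
  xt' : v (T.x t ^ s + T.x t) < 1
  mirror : ∀ j, t < j → j ≤ i → v (T.x j - algebraMap F K (ω ^ (s + 1)) / T.x (2 * t - j)) ≤ 1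
  db : DB F[X] (T.L i) v 1
  ap : AP p (T.L i) v (T.x 0)
  d : v (T.D (phi s (T.x i))) ≤ ((v (T.x 0))⁻¹) ^ 2

/-- The ramified state: the next steps are totally ramified. -/
structure StR (p : ℕ) [Fact p.Prime] [CharP K p] (i : ℕ) : Prop where
  lt : 1 < v (phi s (T.x i))
  ex : ∃ C z, DB F[X] (T.L i) v C ∧ AP p (T.L i) v z ∧ v z * v (phi s (T.x i)) = 1 ∧
    C * v (phi s (T.x i)) ^ 2 ≤ ((v (T.x 0 ^ s + T.x 0))⁻¹) ^ 2 ∧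
    v (T.D z) ≤ ((v (T.x 0 ^ s + T.x 0))⁻¹) ^ 2
  d : v (T.D (phi s (T.x i))) ≤ ((v (T.x 0 ^ s + T.x 0))⁻¹) ^ 2

variable {T v} {i : ℕ}

include hs hsp hv in
lemma Good.step (hi : i < m) (h : T.Good v p i) : T.Good v p (i + 1) := by
  obtain ⟨z, hz, hDz⟩ := h.ap
  have hx := val_one_of_N v hs h.x
  have hphi : v (phi s (T.x i)) = 1 := by rw [val_phi_of_one v hs hx, h.x, inv_one]
  obtain ⟨h1, h2⟩ := T.unram_step hs hsp v hv hi h.db hz (T.L i).zero_mem (by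
    rw [zero_pow (by omega), sub_zero, sub_zero, hphi])
  exact ⟨by rw [T.x_rec i hi, hphi], h1, z, h2, hDz⟩

include hs hsp hF hv in
lemma StZ.step (hx0 : T.x 0 ≠ 0) (hi : i < m) (h : T.StZ v p i) :
    T.StZ v p (i + 1) ∨ ∃ ω, T.StW v p (i + 1) (i + 1) ω := by
  have hne : v (T.x 0) ≠ 0 := (Valuation.ne_zero_iff v).mpr hx0
  have hxi : v (T.x i) < 1 := by
    rw [h.x i le_rfl]; exact pow_lt_one₀ zero_le h.lt (pow_ne_zero _ (by omega))
  have hxi0 : v (T.x i) ≠ 0 := by rw [h.x i le_rfl]; exact pow_ne_zero _ hne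
  have hphi : v (phi s (T.x i)) = v (T.x 0) ^ s ^ (i + 1) := by
    rw [val_phi_of_lt v hs hxi, h.x i le_rfl, ← pow_mul, pow_succ]
  have hlt : v (T.x (i + 1) ^ s + T.x (i + 1)) < 1 := by
    rw [T.x_rec i hi, hphi]; exact pow_lt_one₀ zero_le h.lt (pow_ne_zero _ (by omega))
  obtain ⟨h1, h2⟩ := T.unram_step hs hsp v hv hi h.db h.ap (T.L i).zero_mem (by
    rw [zero_pow (by omega), sub_zero, sub_zero, ← T.x_rec i hi]; exact hlt.le)
  obtain ⟨ω, hω, hvω⟩ := exists_root_val v hv hs hsp hF (c := (0 : F)) (zero_pow (by omega))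
    (y := T.x (i + 1)) (by rwa [map_zero, sub_zero])
  rw [map_zero, sub_zero] at hvω
  have hd : v (T.D (T.x (i + 1))) = (v (phi s (T.x i)) * (v (T.x 0))⁻¹) ^ 2 := by
    rw [T.D_succ hs hsp hi, T.D_phi hs hsp, map_mul, map_pow, h.d, phi_eq hs, map_mul]
    rw [← mul_pow]; congr 1; rw [← mul_assoc, mul_comm (v (Aq s _))]
  by_cases hω0 : ω = 0
  · left
    rw [hω0, map_zero, sub_zero] at hvω
    refine ⟨h.lt, ?_, h1, h2, ?_⟩
    · intro j hj
      rcases Nat.lt_or_ge j (i + 1) with hj' | hj'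
      · exact h.x j (by omega)
      · obtain rfl : j = i + 1 := by omega
        rw [hvω, T.x_rec i hi, hphi]
    · rw [hd, hvω, T.x_rec i hi]
  · right
    refine ⟨ω, h.lt, by omega, le_rfl, by omega, fun j hj => h.x j (by omega), hω, hω0, hvω, hlt,
      fun j hj hj' => by omega, h1, h2, ?_⟩
    have hx1 : v (T.x (i + 1)) = 1 := by
      have : T.x (i + 1) = (T.x (i + 1) - algebraMap F K ω) + algebraMap F K ω := by ring
      rw [this, Valuation.map_add_eq_of_lt_right _ (by rw [val_const v hv hω0, hvω]; exact hlt),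
        val_const v hv hω0]
    rw [T.D_phi hs hsp, map_mul, map_pow, hd, val_Aq_of_one v hs hx1, T.x_rec i hi, ← mul_pow,
      ← mul_assoc, inv_mul_cancel₀, one_mul]
    rw [hphi]; exact pow_ne_zero _ hne

include hs hsp hv in
lemma StR.step (hi : i < m) (h : T.StR v p i) : T.StR v p (i + 1) := by
  obtain ⟨C, z, hDB, hAP, hz, hC, hDz⟩ := h.ex
  have hG : T.x (i + 1) ^ s + T.x (i + 1) ∈ T.L i := by
    rw [T.x_rec i hi]; exact phi_mem _ (T.x_mem le_rfl hi.le)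
  have hlt := h.lt
  rw [← T.x_rec i hi] at hlt hz hC
  have hy : 1 < v (T.x (i + 1)) := by
    by_contra hcon
    push Not at hcon
    refine absurd hlt (not_lt.mpr ((v.map_add _ _).trans (max_le ?_ hcon)))
    rw [map_pow]; exact pow_le_one' hcon _
  have hy0 : v (T.x (i + 1)) ≠ 0 := (zero_lt_one.trans hy).ne'
  have hys : v (T.x (i + 1) ^ s + T.x (i + 1)) = v (T.x (i + 1)) ^ s := by
    rw [N_eq hs, map_mul, val_A_of_gt v hs hy, ← pow_succ', show s - 1 + 1 = s by omega]
  have hphi := val_phi_of_gt v hs hy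
  have hdy : v (T.D (T.x (i + 1))) ≤ ((v (T.x 0 ^ s + T.x 0))⁻¹) ^ 2 := by
    rw [T.D_succ hs hsp hi]; exact h.d
  refine ⟨by rwa [hphi], ⟨C * v (T.x (i + 1)) ^ (2 * s - 2), (T.x (i + 1))⁻¹, ?_, ?_, ?_, ?_, ?_⟩,
    ?_⟩
  · rw [T.L_succ i hi]
    exact DB.ram _ hs hsp v hv (T.deg i hi) hDB hG hlt
  · rw [T.L_succ i hi]
    exact AP.ram _ hs hsp v (T.deg i hi) hAP hG hz
  · rw [hphi, map_inv₀, inv_mul_cancel₀ hy0]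
  · rw [hphi, mul_assoc, ← pow_add, show 2 * s - 2 + 2 = s * 2 by omega, pow_mul, ← hys]
    exact hC
  · rw [Derivation.leibniz_inv, smul_eq_mul, map_mul, Valuation.map_neg, map_pow, map_inv₀]
    refine le_trans (mul_le_of_le_one_left' (pow_le_one' ?_ _)) hdy
    exact inv_le_one_of_one_le₀ hy.le
  · rw [T.D_phi hs hsp, map_mul, map_pow, val_Aq_of_gt v hs hy, one_pow, one_mul]
    exact hdy

variable {t : ℕ} {ω : F}

include hs in
lemma StW.val_lt (h : T.StW v p t i ω) {j : ℕ} (hj : j < t) : v (T.x j) < 1 := by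
  rw [h.x j hj]
  exact pow_lt_one₀ zero_le h.lt (pow_ne_zero _ (by omega))

lemma StW.val_ne (hx0 : T.x 0 ≠ 0) (h : T.StW v p t i ω) {j : ℕ} (hj : j < t) : T.x j ≠ 0 := by
  rw [← Valuation.ne_zero_iff v, h.x j hj]
  exact pow_ne_zero _ ((Valuation.ne_zero_iff v).mpr hx0)

include hs hv in
lemma StW.val_mirror (hx0 : T.x 0 ≠ 0) (h : T.StW v p t i ω) {j : ℕ} (hj : j < t) {y : K}
    (hy : v (y - algebraMap F K (ω ^ (s + 1)) / T.x j) ≤ 1) : v y = (v (T.x j))⁻¹ ∧ 1 < v y := by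
  have h1 : 1 < (v (T.x j))⁻¹ := by
    rw [one_lt_inv₀ (zero_lt_iff.mpr ((Valuation.ne_zero_iff v).mpr (h.val_ne hx0 hj)))]
    exact h.val_lt hs hj
  have h2 : v (algebraMap F K (ω ^ (s + 1)) / T.x j) = (v (T.x j))⁻¹ := by
    rw [map_div₀, val_const v hv (pow_ne_zero _ h.ne), one_div]
  have h3 : v y = (v (T.x j))⁻¹ := by
    rw [show y = (y - algebraMap F K (ω ^ (s + 1)) / T.x j) +
      algebraMap F K (ω ^ (s + 1)) / T.x j by ring, Valuation.map_add_eq_of_lt_right, h2]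
    rw [h2]; exact hy.trans_lt h1
  exact ⟨h3, h3 ▸ h1⟩

include hsp hF in
lemma pow_frob (h : ω ^ s + ω = 0) : (ω ^ (s + 1)) ^ s = ω ^ (s + 1) := by
  have : ω ^ s = -ω := by linear_combination h
  have h2 : (ω ^ s) ^ s = ω := by
    rw [← pow_mul, ← sq, ← hF]; exact FiniteField.pow_card ω
  rw [pow_succ, mul_pow, h2, mul_comm]

include hs hsp hF hv in
lemma StW.step (hx0 : T.x 0 ≠ 0) (hi : i < m) (h : T.StW v p t i ω) (hit : i < 2 * t) :
    T.StW v p t (i + 1) ω := by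
  set c := algebraMap F K (ω ^ (s + 1)) with hc
  have hc1 : v c = 1 := val_const v hv (pow_ne_zero _ h.ne)
  have hcs : c ^ s = c := by rw [hc, ← map_pow, pow_frob hsp hF h.root]
  have htl := h.le
  have hlt : 2 * t - i - 1 < t := by omega
  set w := T.x (2 * t - i - 1) with hw
  have hw0 : w ≠ 0 := h.val_ne hx0 hlt
  have hw1 : v w < 1 := h.val_lt hs hlt
  have hwA : w ^ (s - 1) + 1 ≠ 0 := by
    rw [← Valuation.ne_zero_iff v, val_A_of_lt v hs hw1]; exact one_ne_zero
  set u := T.x (2 * t - i) with hu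
  have huw : u ^ s + u = phi s w := by
    have := T.x_rec (2 * t - i - 1) (by omega)
    rwa [show 2 * t - i - 1 + 1 = 2 * t - i by omega] at this
  have hphi0 : phi s w ≠ 0 := div_ne_zero (pow_ne_zero _ hw0) hwA
  have hη : (c / w) ^ s + c / w = c / (u ^ s + u) := by
    rw [div_pow, hcs, huw, phi]
    have : w ^ s = w ^ (s - 1) * w := by rw [← pow_succ, show s - 1 + 1 = s by omega]
    rw [this]
    field_simp
    ring
  have hG : v (phi s (T.x i) - (c / w) ^ s - c / w) ≤ 1 := by
    rw [sub_sub, hη]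
    rcases Nat.lt_or_ge t i with hlt' | hge
    · have hui : 2 * t - i < t := by omega
      have hu1 : v u < 1 := h.val_lt hs hui
      have hu0 : u ≠ 0 := h.val_ne hx0 hui
      have hm := h.mirror i hlt' le_rfl
      have hxi := (h.val_mirror hs hv hx0 hui hm).2
      have hxA : T.x i ^ (s - 1) + 1 ≠ 0 := by
        rw [← Valuation.ne_zero_iff v, val_A_of_gt v hs hxi]
        exact pow_ne_zero _ (zero_lt_one.trans hxi).ne'
      have huA : u ^ (s - 1) + 1 ≠ 0 := by
        rw [← Valuation.ne_zero_iff v, val_A_of_lt v hs hu1]; exact one_ne_zero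
      have e1 : phi s (T.x i) = T.x i - T.x i / (T.x i ^ (s - 1) + 1) := by
        have : T.x i ^ s = T.x i ^ (s - 1) * T.x i := by
          rw [← pow_succ, show s - 1 + 1 = s by omega]
        rw [phi, this]; field_simp; ring
      have e2 : c / (u ^ s + u) = c / u - c * u ^ (s - 2) / (u ^ (s - 1) + 1) := by
        have : u ^ (s - 1) = u ^ (s - 2) * u := by
          rw [← pow_succ, show s - 2 + 1 = s - 1 by omega]
        rw [N_eq hs]; field_simp; rw [this]; ring
      rw [e1, e2, show T.x i - T.x i / (T.x i ^ (s - 1) + 1) -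
        (c / u - c * u ^ (s - 2) / (u ^ (s - 1) + 1)) = (T.x i - c / u) -
          T.x i / (T.x i ^ (s - 1) + 1) + c * u ^ (s - 2) / (u ^ (s - 1) + 1) by ring]
      refine (v.map_add _ _).trans (max_le ((v.map_sub _ _).trans (max_le hm ?_)) ?_)
      · rw [map_div₀, val_A_of_gt v hs hxi]
        refine div_le_one_of_le₀ ?_ zero_le
        exact le_self_pow₀ hxi.le (by omega)
      · rw [map_div₀, val_A_of_lt v hs hu1, div_one, map_mul, hc1, one_mul, map_pow]
        exact pow_le_one' hu1.le _
    · have hit' : i = t := by omega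
      have hui : 2 * t - i = t := by omega
      have hN0 : u ^ s + u ≠ 0 := by rw [huw]; exact hphi0
      have hxu : T.x i = u := by rw [hu, hui, hit']
      have e1 : phi s u = u ^ (s + 1) / (u ^ s + u) := by
        have hA : u ^ (s - 1) + 1 ≠ 0 := fun h => hN0 (by rw [N_eq hs, h, mul_zero])
        have hu0 : u ≠ 0 := fun h => hN0 (by rw [N_eq hs, h, zero_mul])
        rw [phi, N_eq hs, pow_succ]; field_simp
      have hxt := h.xt
      rw [← hit', hxu] at hxt
      rw [hxu, e1, ← sub_div, map_div₀, ← hxt]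
      refine div_le_one_of_le₀ ?_ zero_le
      rw [hc, map_pow]
      have hu1 : v u ≤ 1 := by
        refine val_le_one_of_N v hs ?_
        rw [← hxu, hit']; exact h.xt'.le
      have := (Commute.all u (algebraMap F K ω)).mul_geom_sum₂ (s + 1)
      rw [← this, map_mul]
      refine mul_le_of_le_one_right' (Valuation.map_sum_le _ fun j _ => ?_)
      rw [map_mul, map_pow, map_pow]
      exact mul_le_one' (pow_le_one' hu1 _) (pow_le_one' (val_const_le v hv _) _)
  have hcw : c / w ∈ T.L i :=
    (T.L i).div_mem (const_mem _ _) (T.x_mem (by omega) hi.le)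
  obtain ⟨h1, h2⟩ := T.unram_step hs hsp v hv hi h.db h.ap hcw hG
  have hm : v (T.x (i + 1) - c / w) ≤ 1 := by
    refine val_le_one_of_N v hs ?_
    rw [sub_N hsp, T.x_rec i hi]; exact hG
  have hy := (h.val_mirror hs hv hx0 hlt hm).2
  refine ⟨h.lt, h.pos, by omega, by omega, h.x, h.root, h.ne, h.xt, h.xt', ?_, h1, h2, ?_⟩
  · intro j hj hj'
    rcases Nat.lt_or_ge i j with h3 | h3
    · obtain rfl : j = i + 1 := by omega
      rw [show 2 * t - (i + 1) = 2 * t - i - 1 by omega]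
      exact hm
    · exact h.mirror j hj h3
  · rw [T.D_phi hs hsp, map_mul, map_pow, val_Aq_of_gt v hs hy, one_pow, one_mul,
      T.D_succ hs hsp hi]
    exact h.d

include hs hsp hv in
/-- After the mirroring, `x (2 * t)` has a pole of the same order as the zero of `x 0`. -/
lemma StW.toR (hx0 : T.x 0 ≠ 0) (h : T.StW v p t (2 * t) ω) : T.StR v p (2 * t) := by
  have hpos := h.pos
  have hm := h.mirror (2 * t) (by omega) le_rfl
  rw [show 2 * t - 2 * t = 0 by omega] at hm
  obtain ⟨h1, h2⟩ := h.val_mirror hs hv hx0 (by omega) hm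
  have hne : v (T.x 0) ≠ 0 := (Valuation.ne_zero_iff v).mpr hx0
  have hphi := val_phi_of_gt v hs h2
  have hb : v (T.x 0 ^ s + T.x 0) = v (T.x 0) := val_N_of_lt v hs h.lt
  have hinv : 1 ≤ (v (T.x 0))⁻¹ := (one_le_inv₀ (zero_lt_iff.mpr hne)).mpr h.lt.le
  refine ⟨by rwa [hphi], ⟨1, T.x 0, h.db, h.ap, ?_, ?_, ?_⟩, ?_⟩
  · rw [hphi, h1, mul_inv_cancel₀ hne]
  · rw [hphi, h1, one_mul, hb]
  · rw [T.D_x, map_one, hb]; exact one_le_pow₀ hinv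
  · rw [hb]; exact h.d

/-- Bounds by `b ^ 2`, where `b = X ^ s + X`, for the codifferent at level `i` and for the derivative
of an element `z` modulo which all integral elements are `p`-th powers. -/
structure Fin (T : Tower F K s m) (v : Valuation K ℤᵐ⁰) (p : ℕ) [Fact p.Prime] [CharP K p]
    (i : ℕ) : Prop where
  ex : ∃ C z, DB F[X] (T.L i) v C ∧ AP p (T.L i) v z ∧
    C ≤ ((v (T.x 0 ^ s + T.x 0))⁻¹) ^ 2 ∧ v (T.D z) ≤ ((v (T.x 0 ^ s + T.x 0))⁻¹) ^ 2

include hv in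
lemma val_b_le (T : Tower F K s m) : v (T.x 0 ^ s + T.x 0) ≤ 1 := by
  rw [T.x_zero, ← map_pow, ← map_add]; exact hv _

include hs hsp hF hv in
/-- Above a finite place of `F(X)`, every level of the tower is in one of the four states. -/
lemma state (hx0 : T.x 0 ≠ 0) (hb0 : T.x 0 ^ s + T.x 0 ≠ 0)
    (hnt : ∃ P : F[X], Irreducible P ∧ v (algebraMap F[X] K P) < 1) (i : ℕ) (hi : i ≤ m) :
    T.Good v p i ∨ T.StZ v p i ∨ (∃ t ω, T.StW v p t i ω ∧ i < 2 * t) ∨ T.StR v p i := by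
  induction i with
  | zero =>
    have hDP : ∀ P : F[X], T.D (algebraMap F[X] K P) = algebraMap F[X] K (derivative P) :=
      D_poly T.D (by rw [← T.x_zero]; exact T.D_x)
    have hdb : DB F[X] (T.L 0) v 1 := by rw [T.L_zero]; exact DB.base v hv
    rcases (val_b_le hv T).lt_or_eq with hlt | heq
    · obtain ⟨ω, hω, hvω⟩ := exists_root_val v hv hs hsp hF (c := (0 : F)) (zero_pow (by omega))
        (y := T.x 0) (by rwa [map_zero, sub_zero])
      rw [map_zero, sub_zero] at hvω
      have hX : T.x 0 - algebraMap F K ω = algebraMap F[X] K (X - C ω) := by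
        rw [map_sub, T.x_zero, IsScalarTower.algebraMap_apply F F[X] K]; rfl
      have hap : AP p (T.L 0) v (T.x 0 - algebraMap F K ω) := by
        rw [hX, T.L_zero]
        refine AP.base v hv _ (irreducible_X_sub_C ω) ?_
        rw [← hX, hvω]; exact hlt
      by_cases hω0 : ω = 0
      · rw [hω0, map_zero, sub_zero] at hvω hap
        right; left
        refine ⟨hvω ▸ hlt, fun j hj => ?_, hdb, hap, ?_⟩
        · obtain rfl : j = 0 := by omega
          simp
        · rw [mul_inv_cancel₀ ((Valuation.ne_zero_iff v).mpr hx0), T.D_x]; simp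
      · right; right; right
        have hx1 : v (T.x 0) = 1 := by
          have : T.x 0 = (T.x 0 - algebraMap F K ω) + algebraMap F K ω := by ring
          rw [this, Valuation.map_add_eq_of_lt_right _ (by rw [val_const v hv hω0, hvω]; exact hlt),
            val_const v hv hω0]
        have hvb0 : v (T.x 0 ^ s + T.x 0) ≠ 0 := (Valuation.ne_zero_iff v).mpr hb0
        have hinv : 1 < (v (T.x 0 ^ s + T.x 0))⁻¹ := (one_lt_inv₀ (zero_lt_iff.mpr hvb0)).mpr hlt
        refine ⟨?_, ⟨1, _, hdb, hap, ?_, ?_, ?_⟩, ?_⟩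
        · rwa [val_phi_of_one v hs hx1]
        · rw [hvω, val_phi_of_one v hs hx1, mul_inv_cancel₀ hvb0]
        · rw [val_phi_of_one v hs hx1, one_mul]
        · rw [map_sub, T.D_x, Derivation.map_algebraMap, sub_zero, map_one]
          exact one_le_pow₀ hinv.le
        · rw [T.D_phi hs hsp, T.D_x, mul_one, map_pow, val_Aq_of_one v hs hx1]
    · left
      obtain ⟨P, hP, hvP⟩ := hnt
      refine ⟨heq, hdb, _, by rw [T.L_zero]; exact AP.base v hv P hP hvP, ?_⟩
      rw [hDP]; exact hv _
  | succ i ih =>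
    have hi' : i < m := by omega
    rcases ih (by omega) with h | h | ⟨t, ω, h, hit⟩ | h
    · exact Or.inl (h.step hs hsp hv hi')
    · rcases h.step hs hsp hF hv hx0 hi' with h | ⟨ω, h⟩
      · exact Or.inr (Or.inl h)
      · exact Or.inr (Or.inr (Or.inl ⟨_, _, h, by omega⟩))
    · have h' := h.step hs hsp hF hv hx0 hi' hit
      rcases h'.le'.lt_or_eq with hlt | heq
      · exact Or.inr (Or.inr (Or.inl ⟨_, _, h', hlt⟩))
      · rw [heq] at h' ⊢
        exact Or.inr (Or.inr (Or.inr (h'.toR hs hsp hv hx0)))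
    · exact Or.inr (Or.inr (Or.inr (h.step hs hsp hv hi')))

include hs hsp hF hv in
lemma fin_of_state (hx0 : T.x 0 ≠ 0) (hb0 : T.x 0 ^ s + T.x 0 ≠ 0)
    (hnt : ∃ P : F[X], Irreducible P ∧ v (algebraMap F[X] K P) < 1) (i : ℕ) (hi : i ≤ m) :
    T.Fin v p i := by
  have hvb0 : v (T.x 0 ^ s + T.x 0) ≠ 0 := (Valuation.ne_zero_iff v).mpr hb0
  have hinv : 1 ≤ (v (T.x 0 ^ s + T.x 0))⁻¹ ^ 2 :=
    one_le_pow₀ ((one_le_inv₀ (zero_lt_iff.mpr hvb0)).mpr (val_b_le hv T))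
  rcases state hs hsp hF hv hx0 hb0 hnt i hi with h | h | ⟨t, ω, h, hit⟩ | h
  · obtain ⟨z, hz, hz'⟩ := h.ap
    exact ⟨1, z, h.db, hz, hinv, hz'.trans hinv⟩
  · exact ⟨1, _, h.db, h.ap, hinv, by rw [T.D_x, map_one]; exact hinv⟩
  · exact ⟨1, _, h.db, h.ap, hinv, by rw [T.D_x, map_one]; exact hinv⟩
  · obtain ⟨C, z, h1, h2, h3, h4, h5⟩ := h.ex
    refine ⟨C, z, h1, h2, le_trans ?_ h4, h5⟩
    exact le_mul_of_one_le_right' (one_le_pow₀ h.lt.le)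

include hs hsp hF hv in
/-- The codifferent has poles of order at most that of `b ^ 2`, where `b = X ^ s + X`. -/
lemma local_dual (hb0 : T.x 0 ^ s + T.x 0 ≠ 0)
    (hnt : ∃ P : F[X], Irreducible P ∧ v (algebraMap F[X] K P) < 1) {h : K}
    (hh : InDual F[X] (RatFunc F) h) : v h * v (T.x 0 ^ s + T.x 0) ^ 2 ≤ 1 := by
  have hx0 : T.x 0 ≠ 0 := by
    intro h; rw [h, zero_pow (by omega), zero_add] at hb0; exact hb0 rfl
  obtain ⟨C, z, h1, h2, h3, h4⟩ := fin_of_state (p := p) hs hsp hF hv hx0 hb0 hnt m le_rfl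
  rw [T.L_top] at h1
  have := (DB.top v h1 h hh).trans h3
  have hvb0 : v (T.x 0 ^ s + T.x 0) ≠ 0 := (Valuation.ne_zero_iff v).mpr hb0
  rw [inv_pow] at this
  have h6 := mul_le_mul_left this (v (T.x 0 ^ s + T.x 0) ^ 2)
  rwa [inv_mul_cancel₀ (pow_ne_zero _ hvb0)] at h6

include hs hsp hF hv in
/-- The derivation creates poles of order at most that of `b ^ 2`, where `b = X ^ s + X`. -/
lemma local_deriv (hb0 : T.x 0 ^ s + T.x 0 ≠ 0)
    (hnt : ∃ P : F[X], Irreducible P ∧ v (algebraMap F[X] K P) < 1) {f : K}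
    (hf : v f ≤ 1) : v (T.D f) * v (T.x 0 ^ s + T.x 0) ^ 2 ≤ 1 := by
  have hx0 : T.x 0 ≠ 0 := by
    intro h; rw [h, zero_pow (by omega), zero_add] at hb0; exact hb0 rfl
  obtain ⟨C, z, h1, h2, h3, h4⟩ := fin_of_state (p := p) hs hsp hF hv hx0 hb0 hnt m le_rfl
  rw [T.L_top] at h2
  have hvb0 : v (T.x 0 ^ s + T.x 0) ≠ 0 := (Valuation.ne_zero_iff v).mpr hb0
  have := val_D_le v hv T.D (by rw [← T.x_zero]; exact T.D_x) h2
    (pow_ne_zero _ (inv_ne_zero hvb0)) h4 f hf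
  rw [inv_pow] at this
  have h6 := mul_le_mul_left this (v (T.x 0 ^ s + T.x 0) ^ 2)
  rwa [inv_mul_cancel₀ (pow_ne_zero _ hvb0)] at h6

end Tower

end States

/-! ### Rational places -/

section Rational

variable {F K : Type*} [Field F] [Fintype F] [DecidableEq F] [Field K] [Algebra F K]
    [Algebra F[X] K] [IsScalarTower F F[X] K]
    [Algebra (RatFunc F) K] [IsScalarTower F[X] (RatFunc F) K]
    [FiniteDimensional (RatFunc F) K] [Algebra.IsSeparable (RatFunc F) K]
    {p a s m : ℕ} [Fact p.Prime] [CharP F p] [CharP K p]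
    {T : Tower F K s m} (hs : 2 ≤ s) (hsp : s = p ^ a) (hF : Fintype.card F = s ^ 2)
    {v : Valuation K ℤᵐ⁰} (hv : ∀ a : F[X], v (algebraMap F[X] K a) ≤ 1)

/-- Every `v`-integral element of `L` is congruent modulo `z` to a constant. -/
def AF (F : Type*) [Field F] {k K : Type*} [Field k] [Field K] [Algebra k K] [Algebra F K]
    (L : IntermediateField k K) (v : Valuation K ℤᵐ⁰) (z : K) : Prop :=
  ∃ hz : z ∈ L, Approx ((algebraMap F K).fieldRange.comap (algebraMap L K))
    (v.comap (algebraMap L K)) ⟨z, hz⟩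

include hv in
lemma AF.base (α : F) (h : v (algebraMap F[X] K (X - C α)) < 1) :
    AF F (⊥ : IntermediateField (RatFunc F) K) v (algebraMap F[X] K (X - C α)) := by
  have hmem : ∀ f : F[X], algebraMap F[X] K f ∈ (⊥ : IntermediateField (RatFunc F) K) := by
    intro f
    rw [IsScalarTower.algebraMap_apply F[X] (RatFunc F) K]
    exact IntermediateField.algebraMap_mem _ _
  refine ⟨hmem _, ?_⟩
  refine mem_of_frac (A := F[X]) (k := RatFunc F)
    (v.comap (algebraMap (⊥ : IntermediateField (RatFunc F) K) K)) (fun a => hv a) h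
    fun r hr => ?_
  refine ⟨val_le_one_of_isIntegral
    (v.comap (algebraMap (⊥ : IntermediateField (RatFunc F) K) K)) (fun a => hv a) hr, ?_⟩
  obtain ⟨f, hf⟩ := isIntegral_bot hr
  obtain ⟨g, hg⟩ := X_sub_C_dvd_sub_C_eval (p := f) (a := α)
  refine ⟨⟨algebraMap F[X] K (C (f.eval α)), hmem _⟩, ?_, ?_⟩
  · exact ⟨f.eval α, by rw [IsScalarTower.algebraMap_apply F F[X] K]; rfl⟩
  · change v ((r : K) - algebraMap F[X] K (C (f.eval α))) ≤ v (algebraMap F[X] K (X - C α))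
    rw [hf, ← map_sub, hg, map_mul, map_mul]
    exact mul_le_of_le_one_right' (hv g)

include hs hsp hv in
lemma AF.step {i : ℕ} (hi : i < m) {z : K} (h : AF F (T.L i) v z)
    (h1 : v (phi s (T.x i)) ≤ 1) {β : F} (hβ : v (T.x (i + 1) - algebraMap F K β) ≤ v z) :
    AF F (T.L (i + 1)) v z := by
  rw [T.L_succ i hi]
  have hG : T.x (i + 1) ^ s + T.x (i + 1) ∈ T.L i := by
    rw [T.x_rec i hi]; exact Tower.phi_mem _ (T.x_mem le_rfl hi.le)
  rw [← T.x_rec i hi] at h1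
  have h2 := asExt_stepField (T.L i) (G := ⟨_, hG⟩) rfl (T.deg i hi)
  obtain ⟨hz, h⟩ := h
  refine ⟨le_stepField _ _ hz, ?_⟩
  refine approx_unram (A := F[X]) (k := RatFunc F) hs (cast_s_eq_zero _ hs hsp) h2
    (v.comap (algebraMap (stepField (T.L i) (T.x (i + 1))) K)) (fun a => hv a) h1 ?_ h ?_
  · intro g hg; exact hg
  · exact ⟨⟨algebraMap F K β, Tower.const_mem _ _⟩, ⟨β, rfl⟩, hβ⟩

include hs hsp hF hv in
/-- Above `X = α` with `α ^ s + α ≠ 0`, every `x i` specializes to a constant `β` with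
`β ^ s + β ≠ 0`: the equation `Y ^ s + Y = c` splits completely over `F` for `c` in the subfield
with `s` elements, and `phi s β` is such a `c`. -/
lemma Tower.rational {α : F} (hα : α ^ s + α ≠ 0) (h : v (T.x 0 - algebraMap F K α) < 1) (i : ℕ)
    (hi : i ≤ m) : AF F (T.L i) v (T.x 0 - algebraMap F K α) ∧
      ∃ β : F, β ^ s + β ≠ 0 ∧ v (T.x i - algebraMap F K β) ≤ v (T.x 0 - algebraMap F K α) := by
  have hX : T.x 0 - algebraMap F K α = algebraMap F[X] K (X - C α) := by
    rw [map_sub, T.x_zero, IsScalarTower.algebraMap_apply F F[X] K]; rfl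
  induction i with
  | zero =>
    refine ⟨?_, α, hα, le_rfl⟩
    rw [T.L_zero, hX]
    exact AF.base hv α (hX ▸ h)
  | succ i ih =>
    obtain ⟨hAF, β, hβ, hvβ⟩ := ih (by omega)
    have hi' : i < m := by omega
    have hβ1 : v (T.x i - algebraMap F K β) < 1 := hvβ.trans_lt h
    have hA : β ^ (s - 1) + 1 ≠ 0 := fun h => hβ (by rw [N_eq hs, h, mul_zero])
    have hβ0 : β ≠ 0 := fun h => hβ (by rw [N_eq hs, h, zero_mul])
    have hxi : v (T.x i) ≤ 1 := by
      rw [show T.x i = (T.x i - algebraMap F K β) + algebraMap F K β by ring]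
      exact (v.map_add _ _).trans (max_le hβ1.le (val_const_le v hv _))
    set B := algebraMap F K β with hB
    have hd0 : ∀ u w : K, u ^ s - w ^ s = (u - w) ^ s := fun u w => by rw [hsp, sub_pow_char_pow]
    have hd := hd0 (T.x i) B
    have hd' : v (T.x i ^ s + T.x i - (B ^ s + B)) < 1 := by
      rw [show T.x i ^ s + T.x i - (B ^ s + B) = (T.x i - B) ^ s + (T.x i - B) by
        rw [← hd]; ring]
      refine (v.map_add _ _).trans_lt (max_lt ?_ hβ1)
      rw [map_pow]; exact pow_lt_one₀ zero_le hβ1 (by omega)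
    have hNB : v (B ^ s + B) = 1 := by
      rw [hB, ← map_pow, ← map_add]; exact val_const v hv hβ
    have hNx : v (T.x i ^ s + T.x i) = 1 := by
      rw [show T.x i ^ s + T.x i = (T.x i ^ s + T.x i - (B ^ s + B)) + (B ^ s + B) by ring,
        Valuation.map_add_eq_of_lt_right _ (by rwa [hNB]), hNB]
    have hx1 : v (T.x i) = 1 := val_one_of_N v hs hNx
    have hphi : v (phi s (T.x i)) = 1 := by rw [val_phi_of_one v hs hx1, hNx, inv_one]
    have hxA1 : v (T.x i ^ (s - 1) + 1) = 1 := by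
      rw [N_eq hs, map_mul, hx1, one_mul] at hNx; exact hNx
    have hxA : T.x i ^ (s - 1) + 1 ≠ 0 := by
      rw [← Valuation.ne_zero_iff v, hxA1]; exact one_ne_zero
    have hBA1 : v (B ^ (s - 1) + 1) = 1 := by
      rw [hB, ← map_pow, ← map_one (algebraMap F K), ← map_add]; exact val_const v hv hA
    have hBA : B ^ (s - 1) + 1 ≠ 0 := by
      rw [← Valuation.ne_zero_iff v, hBA1]; exact one_ne_zero
    have hc : (phi s β) ^ s = phi s β := by
      have h2 : (β ^ s) ^ s = β := by
        rw [← pow_mul, ← sq, ← hF]; exact FiniteField.pow_card β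
      have e1 : phi s β = (β ^ s * β) / (β ^ s + β) := by
        rw [phi, N_eq hs]; field_simp
      rw [e1, div_pow, mul_pow, h2]
      have : (β ^ s + β) ^ s = β ^ s + β := by
        rw [hsp, add_pow_char_pow, ← hsp, h2, add_comm]
      rw [this, mul_comm]
    have hphiB : algebraMap F K (phi s β) = phi s B := by simp [phi, hB]
    have hdiff : v (T.x (i + 1) ^ s + T.x (i + 1) - algebraMap F K (phi s β)) ≤
        v (T.x i - B) := by
      rw [T.x_rec i hi', hphiB]
      have e : phi s (T.x i) - phi s B = ((T.x i * B) ^ (s - 1) * (T.x i - B) + (T.x i - B) ^ s) /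
          ((T.x i ^ (s - 1) + 1) * (B ^ (s - 1) + 1)) := by
        rw [← hd, phi, phi]
        have e1 : ∀ u : K, u ^ s = u ^ (s - 1) * u := fun u => by
          rw [← pow_succ, show s - 1 + 1 = s by omega]
        rw [e1, e1 B]
        field_simp
        ring
      rw [e, map_div₀, map_mul v (_ + 1), hxA1, hBA1, mul_one, div_one]
      refine (v.map_add _ _).trans (max_le ?_ ?_)
      · rw [map_mul, map_pow, map_mul]
        exact mul_le_of_le_one_left' (pow_le_one' (mul_le_one' hxi (val_const_le v hv _)) _)
      · rw [map_pow]
        exact pow_le_of_le_one zero_le hβ1.le (by omega)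
    obtain ⟨β', hβ', hvβ'⟩ := exists_root_val v hv hs hsp hF hc (hdiff.trans_lt hβ1)
    have hle : v (T.x (i + 1) - algebraMap F K β') ≤ v (T.x 0 - algebraMap F K α) := by
      rw [hvβ']; exact hdiff.trans hvβ
    refine ⟨hAF.step hs hsp hv hi' hphi.le hle, β', ?_, hle⟩
    rw [hβ', phi]
    exact div_ne_zero (pow_ne_zero _ hβ0) hA

include hs hsp hF hv in
lemma Tower.local_residue {α : F} (hα : α ^ s + α ≠ 0) (h : v (T.x 0 - algebraMap F K α) < 1)
    {f : K} (hf : v f ≤ 1) : ∃ c : F, v (f - algebraMap F K c) ≤ v (T.x 0 - algebraMap F K α) := by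
  have := (Tower.rational hs hsp hF hv hα h m le_rfl).1
  rw [T.L_top] at this
  obtain ⟨_, h1⟩ := this
  obtain ⟨g, ⟨c, hc⟩, hg⟩ := h1.2 ⟨f, trivial⟩ hf
  refine ⟨c, ?_⟩
  rw [hc]; exact hg

end Rational

/-! ### Trace-dual bases adapted to infinity -/

/-- `L` has a basis of length `N` over the base field, with a trace-dual basis, whose valuations are
the multiples `0, c, …, (N - 1) c` (in increasing, respectively decreasing order). -/
structure HasDualBasis {k K : Type*} [Field k] [Field K] [Algebra k K]
    (L : IntermediateField k K) (v : Valuation K ℤᵐ⁰) (N c : ℕ) (e e' : ℕ → L) : Prop where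
  dual : ∀ r < N, ∀ t < N, Algebra.trace k L (e r * e' t) = if r = t then 1 else 0
  val : ∀ r < N, v (e r) = WithZero.exp ((r * c : ℕ) : ℤ)
  val' : ∀ r < N, v (e' r) = WithZero.exp (((N - 1 - r) * c : ℕ) : ℤ)
  zero : e 0 = 1
  rank : Module.finrank k L = N

section Basis

variable {k K : Type*} [Field k] [Field K] [Algebra k K] [FiniteDimensional k K]
  [Algebra.IsSeparable k K]

lemma HasDualBasis.base (v : Valuation K ℤᵐ⁰) (c : ℕ) :
    HasDualBasis (⊥ : IntermediateField k K) v 1 c (fun _ => 1) (fun _ => 1) where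
  dual := by
    intro r hr t ht
    obtain rfl : r = 0 := by omega
    obtain rfl : t = 0 := by omega
    have := Algebra.trace_algebraMap (R := k) (S := (⊥ : IntermediateField k K)) 1
    rw [map_one, IntermediateField.finrank_bot, one_smul] at this
    simp [this]
  val := by
    intro r hr
    obtain rfl : r = 0 := by omega
    simp
  val' := by
    intro r hr
    obtain rfl : r = 0 := by omega
    simp
  zero := rfl
  rank := IntermediateField.finrank_bot

/-- Products of the given dual bases with `1, y, …, y ^ (s - 1)` and its trace-dual family. -/
lemma HasDualBasis.step {p : ℕ} [Fact p.Prime] [CharP K p] {L : IntermediateField k K}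
    {v : Valuation K ℤᵐ⁰} {N c : ℕ} {e e' : ℕ → L} {s : ℕ} (hs : 2 ≤ s)
    (hc0 : (s : L) = 0) (hc : 0 < c) (h : HasDualBasis L v N (s * c) e e')
    {y : K} (hG : y ^ s + y ∈ L) (hdeg : stepDeg L y = s) (hy : v y = WithZero.exp (c : ℤ)) :
    HasDualBasis (stepField L y) v (N * s) c
      (fun r => algebraMap L _ (e (r / s)) * ⟨y, mem_stepField L y⟩ ^ (r % s))
      (fun r => algebraMap L _ (e' (r / s)) * asDual s ⟨y, mem_stepField L y⟩ (r % s)) := by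
  have h1 := asExt_stepField (k := k) L (G := ⟨_, hG⟩) rfl hdeg
  have hs0 : 0 < s := by omega
  have hlt : ∀ r < N * s, r / s < N := fun r hr => Nat.div_lt_of_lt_mul (by rwa [mul_comm])
  have hexp : ∀ n j : ℕ, (WithZero.exp (n : ℤ)) * WithZero.exp (c : ℤ) ^ j =
      WithZero.exp ((n + j * c : ℕ) : ℤ) := by
    intro n j
    rw [← WithZero.exp_nsmul, ← WithZero.exp_add]; congr 1
  have hy1 : 1 < v y := by
    rw [hy, ← WithZero.exp_zero, WithZero.exp_lt_exp]; exact_mod_cast hc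
  refine ⟨?_, ?_, ?_, ?_, ?_⟩
  · intro r hr t ht
    have e1 : (algebraMap L (stepField L y) (e (r / s)) * ⟨y, mem_stepField L y⟩ ^ (r % s)) *
        (algebraMap L (stepField L y) (e' (t / s)) * asDual s ⟨y, mem_stepField L y⟩ (t % s)) =
        (e (r / s) * e' (t / s)) • (asDual s ⟨y, mem_stepField L y⟩ (t % s) *
          ⟨y, mem_stepField L y⟩ ^ (r % s)) := by
      rw [Algebra.smul_def, map_mul]; ring
    have : FiniteDimensional L (stepField L y) := FiniteDimensional.right k L _
    rw [e1, ← Algebra.trace_trace (S := L), map_smul,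
      h1.trace_dual hs hc0 _ _ (Nat.mod_lt _ hs0) (Nat.mod_lt _ hs0), smul_eq_mul, mul_ite,
      mul_one, mul_zero]
    have h2 := h.dual _ (hlt r hr) _ (hlt t ht)
    by_cases hrt : r = t
    · subst hrt; simp [h2]
    · rw [if_neg hrt]
      split_ifs with h3
      · rw [h2, if_neg]
        intro h4
        exact hrt (by rw [← Nat.div_add_mod r s, ← Nat.div_add_mod t s, h3, h4])
      · exact map_zero _
  · intro r hr
    change v ((e (r / s) : K) * y ^ (r % s)) = _
    rw [map_mul, map_pow, h.val _ (hlt r hr), hy, hexp]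
    congr 2
    conv_rhs => rw [← Nat.div_add_mod r s]
    ring
  · intro r hr
    have hb : v ((asDual s (⟨y, mem_stepField L y⟩ : stepField L y) (r % s) : stepField L y) : K) =
        WithZero.exp (c : ℤ) ^ (s - 1 - r % s) := by
      rw [asDual]
      split_ifs with h0
      · change v (y ^ (s - 1) + 1) = _
        rw [val_A_of_gt v hs hy1, hy, h0, Nat.sub_zero]
      · change v (y ^ (s - 1 - r % s)) = _
        rw [map_pow, hy]
    change v ((e' (r / s) : K) * ((asDual s (⟨y, mem_stepField L y⟩ : stepField L y) (r % s) :
      stepField L y) : K)) = _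
    rw [map_mul, hb, h.val' _ (hlt r hr), hexp]
    congr 2
    have h3 := hlt r hr
    have h4 := Nat.mod_lt r hs0
    have h5 := Nat.div_add_mod r s
    rw [← mul_assoc, ← add_mul]
    congr 1
    obtain ⟨d, hd⟩ := Nat.exists_eq_add_of_lt h3
    have : N - 1 - r / s = d := by omega
    rw [this, hd]
    have h6 : (r / s + d + 1) * s = s * (r / s) + d * s + s := by ring
    rw [h6]; omega
  · simp [h.zero]
  · rw [← Module.finrank_mul_finrank k L (stepField L y), h.rank]
    congr 1

end Basis

section TowerBasis

variable {F K : Type*} [Field F] [Fintype F] [DecidableEq F] [Field K] [Algebra F K]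
    [Algebra F[X] K] [IsScalarTower F F[X] K]
    [Algebra (RatFunc F) K] [IsScalarTower F[X] (RatFunc F) K]
    [FiniteDimensional (RatFunc F) K] [Algebra.IsSeparable (RatFunc F) K]
    {p a s m : ℕ} [Fact p.Prime] [CharP K p]
    (T : Tower F K s m) (hs : 2 ≤ s) (hsp : s = p ^ a)

include hs hsp in
lemma Tower.dualBasis_level (i : ℕ) (hi : i ≤ m) :
    ∃ e e', HasDualBasis (T.L i) T.vinf (s ^ i) (s ^ (m - i)) e e' := by
  induction i with
  | zero => rw [T.L_zero, pow_zero]; exact ⟨_, _, HasDualBasis.base _ _⟩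
  | succ i ih =>
    obtain ⟨e, e', h⟩ := ih (by omega)
    rw [T.L_succ i (by omega), pow_succ]
    rw [show m - i = (m - (i + 1)) + 1 by omega, pow_succ'] at h
    have hv := T.vinf_x (i + 1) hi
    refine ⟨_, _, h.step (p := p) hs (cast_s_eq_zero _ hs hsp) (by positivity) ?_
      (T.deg i (by omega)) (by rw [hv]; norm_cast)⟩
    rw [T.x_rec i (by omega)]
    exact (T.L i).div_mem (pow_mem (T.x_mem le_rfl (by omega)) _)
      ((T.L i).add_mem (pow_mem (T.x_mem le_rfl (by omega)) _) (T.L i).one_mem)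

include hs hsp in
/-- A trace-dual pair of bases of `K` adapted to the place at infinity. -/
lemma Tower.exists_dualBasis : ∃ e e' : ℕ → K,
    (∀ r < s ^ m, ∀ t < s ^ m, Algebra.trace (RatFunc F) K (e r * e' t) = if r = t then 1 else 0) ∧
    (∀ r < s ^ m, T.vinf (e r) = WithZero.exp (r : ℤ)) ∧
    (∀ r < s ^ m, T.vinf (e' r) = WithZero.exp ((s ^ m - 1 - r : ℕ) : ℤ)) ∧
    e 0 = 1 ∧ Module.finrank (RatFunc F) K = s ^ m := by
  have h := T.dualBasis_level (p := p) hs hsp m le_rfl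
  rw [T.L_top, Nat.sub_self, pow_zero] at h
  obtain ⟨e, e', h⟩ := h
  refine ⟨fun r => e r, fun r => e' r, ?_, ?_, ?_, ?_, ?_⟩
  · intro r hr t ht
    rw [← h.dual r hr t ht,
      ← Algebra.trace_eq_of_algEquiv (IntermediateField.topEquiv (F := RatFunc F) (E := K))]
    rfl
  · intro r hr; simpa using h.val r hr
  · intro r hr; simpa using h.val' r hr
  · simp [h.zero]
  · rw [← h.rank]; exact IntermediateField.finrank_top'.symm

end TowerBasis

/-! ### The place at infinity -/

lemma dual_expand {k K : Type*} [Field k] [Field K] [Algebra k K] [FiniteDimensional k K] {N : ℕ} {e e' : ℕ → K}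
    (h : ∀ r < N, ∀ t < N, Algebra.trace k K (e r * e' t) = if r = t then 1 else 0)
    (hrank : Module.finrank k K = N) (f : K) :
    f = ∑ r ∈ Finset.range N, algebraMap k K (Algebra.trace k K (f * e' r)) * e r := by
  have hcoef : ∀ c : Fin N → k, ∀ t : Fin N,
      Algebra.trace k K ((∑ r, c r • e r) * e' t) = c t := by
    intro c t
    rw [Finset.sum_mul, map_sum, Finset.sum_eq_single t]
    · rw [smul_mul_assoc, map_smul, h t t.2 t t.2, if_pos rfl, smul_eq_mul, mul_one]
    · intro r _ hrt
      rw [smul_mul_assoc, map_smul, h r r.2 t t.2, if_neg (fun h => hrt (Fin.ext h)), smul_zero]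
    · intro h; exact absurd (Finset.mem_univ _) h
  have hli : LinearIndependent k (fun r : Fin N => e r) := by
    rw [Fintype.linearIndependent_iff]
    intro c hc t
    have := hcoef c t
    rw [hc, zero_mul, map_zero] at this
    exact this.symm
  have hspan := hli.span_eq_top_of_card_eq_finrank' (by rw [Fintype.card_fin, hrank])
  have : f ∈ Submodule.span k (Set.range fun r : Fin N => e r) := by rw [hspan]; trivial
  obtain ⟨c, hc⟩ := (Submodule.mem_span_range_iff_exists_fun k).mp this
  rw [Finset.sum_range]
  conv_lhs => rw [← hc]
  refine Finset.sum_congr rfl fun r _ => ?_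
  rw [← hc, hcoef, Algebra.smul_def]

/-- The place at infinity of a finite extension of `F(X)` totally ramified over infinity with
residue field `F`, together with a trace-dual pair of bases adapted to it. -/
structure Glob {F K : Type*} [Field F] [Field K] [Algebra F K] [Algebra F[X] K]
    [Algebra (RatFunc F) K] (w : Valuation K ℤᵐ⁰) (N : ℕ) (e e' : ℕ → K) : Prop where
  pos : 0 < N
  const : ∀ c : F, c ≠ 0 → w (algebraMap F K c) = 1
  residue : ∀ f, w f ≤ 1 → ∃ c : F, w (f - algebraMap F K c) < 1
  val_X : w (algebraMap F[X] K X) = WithZero.exp (N : ℤ)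
  dual : ∀ r < N, ∀ t < N, Algebra.trace (RatFunc F) K (e r * e' t) = if r = t then 1 else 0
  val : ∀ r < N, w (e r) = WithZero.exp (r : ℤ)
  val' : ∀ r < N, w (e' r) = WithZero.exp ((N - 1 - r : ℕ) : ℤ)
  zero : e 0 = 1
  rank : Module.finrank (RatFunc F) K = N

namespace Glob

variable {F K : Type*} [Field F] [Field K] [Algebra F K]
    [Algebra F[X] K] [IsScalarTower F F[X] K]
    [Algebra (RatFunc F) K] [IsScalarTower F[X] (RatFunc F) K] [FiniteDimensional (RatFunc F) K]
    {w : Valuation K ℤᵐ⁰} {N : ℕ} {e e' : ℕ → K} (G : Glob (F := F) w N e e')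

include G

lemma const_le (c : F) : w (algebraMap F K c) ≤ 1 := by
  by_cases h : c = 0
  · simp [h]
  · exact (G.const c h).le

lemma val_poly {f : F[X]} (hf : f ≠ 0) :
    w (algebraMap F[X] K f) = WithZero.exp ((N : ℤ) * f.natDegree) := by
  have hpow : ∀ n : ℕ, w (algebraMap F[X] K X) ^ n = WithZero.exp ((N : ℤ) * n) := by
    intro n
    rw [G.val_X, ← WithZero.exp_nsmul, nsmul_eq_mul, mul_comm]
  have hmon : ∀ (c : F) (n : ℕ), c ≠ 0 → w (algebraMap F[X] K (C c * X ^ n)) =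
      WithZero.exp ((N : ℤ) * n) := by
    intro c n hc
    rw [map_mul, map_mul, map_pow, map_pow, hpow]
    have : algebraMap F[X] K (C c) = algebraMap F K c := by
      rw [IsScalarTower.algebraMap_apply F F[X] K]; rfl
    rw [this, G.const c hc, one_mul]
  have hlead := hmon f.leadingCoeff f.natDegree (leadingCoeff_ne_zero.mpr hf)
  rw [← f.eraseLead_add_C_mul_X_pow, map_add, Valuation.map_add_eq_of_lt_right, hlead,
    f.eraseLead_add_C_mul_X_pow]
  rw [hlead, f.eraseLead.as_sum_range_C_mul_X_pow, map_sum]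
  refine Valuation.map_sum_lt _ (WithZero.exp_ne_zero) fun i hi => ?_
  by_cases hc : f.eraseLead.coeff i = 0
  · rw [hc]; simp
  · rw [hmon _ _ hc, WithZero.exp_lt_exp]
    have h1 : i < f.natDegree := by
      have h2 := le_natDegree_of_ne_zero hc
      rcases Nat.lt_or_ge i f.natDegree with h3 | h3
      · exact h3
      · exfalso
        rcases h3.eq_or_lt with h4 | h4
        · rw [← h4, eraseLead_coeff_natDegree] at hc; exact hc rfl
        · have := eraseLead_natDegree_le f; omega
    have := G.pos
    exact mul_lt_mul_of_pos_left (by exact_mod_cast h1) (by exact_mod_cast this)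

lemma val_rat {c : RatFunc F} (hc : c ≠ 0) :
    ∃ z : ℤ, w (algebraMap (RatFunc F) K c) = WithZero.exp ((N : ℤ) * z) := by
  obtain ⟨f, g, hg, rfl⟩ := IsFractionRing.div_surjective (A := F[X]) c
  have hg0 : g ≠ 0 := nonZeroDivisors.ne_zero hg
  have hf0 : f ≠ 0 := by rintro rfl; simp at hc
  refine ⟨f.natDegree - g.natDegree, ?_⟩
  rw [map_div₀, map_div₀, ← IsScalarTower.algebraMap_apply, ← IsScalarTower.algebraMap_apply,
    G.val_poly hf0, G.val_poly hg0, ← WithZero.exp_sub]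
  congr 1; ring

lemma poly_injective : Function.Injective (algebraMap F[X] K) := by
  rw [injective_iff_map_eq_zero]
  intro f hf
  by_contra h
  have := G.val_poly h
  rw [hf, map_zero] at this
  exact WithZero.exp_ne_zero this.symm

lemma dual_symm : ∀ r < N, ∀ t < N,
    Algebra.trace (RatFunc F) K (e' r * e t) = if r = t then 1 else 0 := by
  intro r hr t ht
  rw [mul_comm, G.dual t ht r hr]
  by_cases h : r = t
  · simp [h]
  · rw [if_neg h, if_neg (Ne.symm h)]

lemma term_le (a : ℕ → RatFunc F) (r : ℕ) (hr : r < N) :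
    w (algebraMap (RatFunc F) K (a r) * e' r) ≤
      w (∑ t ∈ Finset.range N, algebraMap (RatFunc F) K (a t) * e' t) := by
  refine val_term_le_sum w (Finset.range N)
    (fun t => algebraMap (RatFunc F) K (a t) * e' t) ?_ r (Finset.mem_range.mpr hr)
  intro i hi j hj h0 heq
  rw [Finset.mem_range] at hi hj
  have hai : a i ≠ 0 := by
    intro h; rw [h] at h0; simp at h0
  have haj : a j ≠ 0 := by
    intro h
    rw [h, map_zero (algebraMap (RatFunc F) K), zero_mul, map_zero] at heq
    exact h0 ((map_eq_zero w).mp heq)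
  obtain ⟨z, hz⟩ := G.val_rat hai
  obtain ⟨z', hz'⟩ := G.val_rat haj
  rw [map_mul, map_mul, hz, hz', G.val' i hi, G.val' j hj, ← WithZero.exp_add, ← WithZero.exp_add,
    WithZero.exp_inj] at heq
  have h1 : ((N - 1 - i : ℕ) : ℤ) = N - 1 - i := by omega
  have h2 : ((N - 1 - j : ℕ) : ℤ) = N - 1 - j := by omega
  rw [h1, h2] at heq
  have h3 : (N : ℤ) * (z - z') = i - j := by linear_combination heq
  have h4 : (N : ℤ) ∣ (i : ℤ) - j := ⟨_, h3.symm⟩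
  have h5 := Int.eq_zero_of_abs_lt_dvd h4 (by rw [abs_lt]; constructor <;> omega)
  omega

/-- The trace lowers the pole order at infinity by the different exponent `N - 1`. -/
lemma trace_le (f : K) : w (algebraMap (RatFunc F) K (Algebra.trace (RatFunc F) K f)) *
    WithZero.exp ((N : ℤ) - 1) ≤ w f := by
  have h := dual_expand G.dual_symm G.rank f
  have h1 := G.term_le (fun r => Algebra.trace (RatFunc F) K (f * e r)) 0 G.pos
  rw [← h, map_mul, G.val' 0 G.pos, G.zero, mul_one] at h1
  convert h1 using 3
  have := G.pos
  omega

/-- Elements with pairwise distinct valuations are linearly independent over `F`. -/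
lemma linearIndependent {ι : Type*} [Fintype ι] (f : ι → K) (h0 : ∀ i, f i ≠ 0)
    (h : ∀ i j, w (f i) = w (f j) → i = j) : LinearIndependent F f := by
  rw [Fintype.linearIndependent_iff]
  intro c hc i
  by_contra hci
  have h1 := val_term_le_sum w Finset.univ (fun i => c i • f i) ?_ i (Finset.mem_univ _)
  · rw [hc, map_zero, Algebra.smul_def, map_mul, G.const _ hci, one_mul, le_zero_iff,
      map_eq_zero] at h1
    exact h0 i h1
  · intro i _ j _ hi heq
    have hci : c i ≠ 0 := by intro h; rw [h, zero_smul] at hi; exact hi rfl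
    rw [Algebra.smul_def, map_mul, G.const _ hci, one_mul, Algebra.smul_def, map_mul] at heq
    by_cases hcj : c j = 0
    · rw [hcj, map_zero, map_zero, zero_mul, map_eq_zero] at heq
      exact absurd heq (h0 i)
    · rw [G.const _ hcj, one_mul] at heq
      exact h i j heq

/-- Elements of pole order at most `k` at infinity. -/
def ball (_ : Glob (F := F) w N e e') (k : ℤ) : Submodule F K where
  carrier := {f | w f ≤ WithZero.exp k}
  zero_mem' := by simp
  add_mem' := fun ha hb => (w.map_add _ _).trans (max_le ha hb)
  smul_mem' := by
    intro c f hf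
    change w (c • f) ≤ _
    rw [Algebra.smul_def, map_mul]
    exact (mul_le_of_le_one_left' (by
      by_cases h : c = 0
      · simp [h]
      · exact (by rename_i G; exact (G.const c h).le))).trans hf

omit G in
lemma mem_ball (G : Glob (F := F) w N e e') {k : ℤ} {f : K} :
    f ∈ G.ball k ↔ w f ≤ WithZero.exp k := Iff.rfl

omit G in
lemma lt_exp_iff {x : ℤᵐ⁰} {k : ℤ} : x < WithZero.exp k ↔ x ≤ WithZero.exp (k - 1) := by
  by_cases h : x = 0
  · simp [h, WithZero.exp_ne_zero, zero_lt_iff]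
  · rw [← WithZero.exp_log h, WithZero.exp_lt_exp, WithZero.exp_le_exp]; omega

/-- Cutting a space of functions down by one pole order loses at most one dimension. -/
lemma finrank_step (V : Submodule F K) (k : ℤ)
    (hfin : FiniteDimensional F (V ⊓ G.ball (k - 1) : Submodule F K)) :
    FiniteDimensional F (V ⊓ G.ball k : Submodule F K) ∧
    Module.finrank F (V ⊓ G.ball k : Submodule F K) ≤
      Module.finrank F (V ⊓ G.ball (k - 1) : Submodule F K) + 1 := by
  by_cases h : V ⊓ G.ball k ≤ V ⊓ G.ball (k - 1)
  · exact ⟨Submodule.finiteDimensional_of_le h, (Submodule.finrank_mono h).trans (by omega)⟩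
  · obtain ⟨f, hf, hf'⟩ := SetLike.not_le_iff_exists.mp h
    have hfk : w f = WithZero.exp k := by
      refine le_antisymm hf.2 (not_lt.mp fun hlt => hf' ⟨hf.1, lt_exp_iff.mp hlt⟩)
    have hf0 : f ≠ 0 := by
      rintro rfl; rw [map_zero] at hfk; exact WithZero.exp_ne_zero hfk.symm
    have hle : V ⊓ G.ball k ≤ (V ⊓ G.ball (k - 1)) ⊔ Submodule.span F {f} := by
      intro g hg
      obtain ⟨c, hc⟩ := G.residue (g / f) (by
        rw [map_div₀, hfk]
        exact div_le_one_of_le₀ hg.2 zero_le)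
      rw [show g = (g - c • f) + c • f by ring]
      refine Submodule.add_mem_sup ⟨V.sub_mem hg.1 (V.smul_mem c hf.1), ?_⟩
        (Submodule.smul_mem _ _ (Submodule.mem_span_singleton_self f))
      change w (g - c • f) ≤ _
      rw [← lt_exp_iff, ← hfk, Algebra.smul_def,
        show g - algebraMap F K c * f = (g / f - algebraMap F K c) * f by field_simp, map_mul]
      exact mul_lt_of_lt_one_left (zero_lt_iff.mpr ((Valuation.ne_zero_iff w).mpr hf0)) hc
    refine ⟨Submodule.finiteDimensional_of_le hle, (Submodule.finrank_mono hle).trans ?_⟩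
    refine (Submodule.finrank_add_le_finrank_add_finrank _ _).trans ?_
    have := finrank_span_singleton (K := F) hf0
    omega

end Glob

/-! ### Integral elements and the trace dual -/

/-- A residue-type functional: it kills polynomials, and detects whether a rational function with
denominator dividing `S` is a polynomial. -/
lemma exists_functional {F : Type*} [Field F] {S : F[X]} (hS : S.Monic) (hd : 1 ≤ S.natDegree) :
    ∃ l : RatFunc F →ₗ[F] F, (∀ f : F[X], l (algebraMap F[X] (RatFunc F) f) = 0) ∧
      ∀ f : RatFunc F, (∃ P : F[X], algebraMap F[X] (RatFunc F) P = algebraMap F[X] _ S * f) →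
        (∀ j : ℕ, l (algebraMap F[X] _ (X ^ j) * f) = 0) →
        ∃ P : F[X], algebraMap F[X] (RatFunc F) P = f := by
  have hS0 : algebraMap F[X] (RatFunc F) S ≠ 0 := by
    rw [Ne, map_eq_zero_iff _ (IsFractionRing.injective F[X] (RatFunc F))]
    exact hS.ne_zero
  let i : F[X] →ₗ[F] RatFunc F :=
    (LinearMap.mulRight F (algebraMap F[X] (RatFunc F) S)⁻¹) ∘ₗ
      (IsScalarTower.toAlgHom F F[X] (RatFunc F)).toLinearMap
  have hi : ∀ P, i P = algebraMap F[X] (RatFunc F) P * (algebraMap F[X] (RatFunc F) S)⁻¹ :=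
    fun P => rfl
  have hinj : LinearMap.ker i = ⊥ := by
    rw [LinearMap.ker_eq_bot]
    intro P P' h
    rw [hi, hi] at h
    exact IsFractionRing.injective F[X] (RatFunc F) (mul_right_cancel₀ (inv_ne_zero hS0) h)
  obtain ⟨g, hg⟩ := LinearMap.exists_leftInverse_of_injective i hinj
  have hgi : ∀ P, g (i P) = P := fun P => LinearMap.congr_fun hg P
  let l : RatFunc F →ₗ[F] F :=
    (lcoeff F (S.natDegree - 1)) ∘ₗ (modByMonicHom S) ∘ₗ g
  have hl : ∀ P, l (i P) = (P %ₘ S).coeff (S.natDegree - 1) := by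
    intro P
    change ((g (i P)) %ₘ S).coeff _ = _
    rw [hgi]
  refine ⟨l, ?_, ?_⟩
  · intro f
    have : algebraMap F[X] (RatFunc F) f = i (S * f) := by
      rw [hi, map_mul]; field_simp
    rw [this, hl, self_mul_modByMonic hS, coeff_zero]
  · rintro f ⟨P, hP⟩ hj
    have hf : f = i P := by rw [hi, hP]; field_simp
    have hXj : ∀ j : ℕ, algebraMap F[X] (RatFunc F) (X ^ j) * f = i (X ^ j * P) := by
      intro j; rw [hf, hi, hi, map_mul]; ring
    by_cases h0 : P %ₘ S = 0
    · refine ⟨P /ₘ S, ?_⟩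
      rw [modByMonic_eq_zero_iff_dvd hS] at h0
      obtain ⟨P', rfl⟩ := h0
      rw [hf, hi, mul_divByMonic_cancel_left _ hS, map_mul]; field_simp
    · exfalso
      have hdeg : (P %ₘ S).natDegree < S.natDegree :=
        natDegree_modByMonic_lt _ hS (by rintro rfl; simp at hd)
      set e := (P %ₘ S).natDegree with he
      have h1 := hj (S.natDegree - 1 - e)
      rw [hXj, hl] at h1
      have h2 : (X ^ (S.natDegree - 1 - e) * P) %ₘ S = X ^ (S.natDegree - 1 - e) * (P %ₘ S) := by
        conv_lhs => rw [← modByMonic_add_div P S, mul_add]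
        rw [add_modByMonic, show X ^ (S.natDegree - 1 - e) * (S * (P /ₘ S)) =
          S * (X ^ (S.natDegree - 1 - e) * (P /ₘ S)) by ring, self_mul_modByMonic hS, add_zero]
        rw [modByMonic_eq_self_iff hS]
        apply degree_lt_degree
        rw [natDegree_X_pow_mul _ h0]
        omega
      rw [h2, show S.natDegree - 1 = e + (S.natDegree - 1 - e) by omega] at h1
      rw [show e + (S.natDegree - 1 - e) - e = (S.natDegree - 1 - e) by omega,
        coeff_X_pow_mul] at h1
      exact h0 (leadingCoeff_eq_zero.mp h1)

section
variable {F K : Type*} [Field F] [Field K] [Algebra F K]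
    [Algebra F[X] K] [IsScalarTower F F[X] K]
    [Algebra (RatFunc F) K] [IsScalarTower F[X] (RatFunc F) K] [FiniteDimensional (RatFunc F) K]

lemma smul_eq_polyC (c : F) (f : K) : c • f = algebraMap F[X] K (C c) * f := by
  rw [Algebra.smul_def, IsScalarTower.algebraMap_apply F F[X] K]; rfl

variable (F K) in
/-- The elements of `K` integral over `F[X]`, as an `F`-subspace. -/
def intSub : Submodule F K where
  carrier := {f | IsIntegral F[X] f}
  zero_mem' := isIntegral_zero
  add_mem' := fun ha hb => ha.add hb
  smul_mem' := by
    intro c f hf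
    rw [smul_eq_polyC]
    exact isIntegral_algebraMap.mul hf

lemma trace_poly_mul (P : F[X]) (f : K) : Algebra.trace (RatFunc F) K (algebraMap F[X] K P * f) =
    algebraMap F[X] (RatFunc F) P * Algebra.trace (RatFunc F) K f := by
  rw [IsScalarTower.algebraMap_apply F[X] (RatFunc F) K, ← Algebra.smul_def, map_smul, smul_eq_mul]

variable (F K) in
/-- The trace dual (inverse different) of the ring of integers, as an `F`-subspace. -/
def dualSub : Submodule F K where
  carrier := {h | InDual F[X] (RatFunc F) h}
  zero_mem' := fun r _ => ⟨0, by simp⟩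
  add_mem' := by
    intro a b ha hb r hr
    obtain ⟨P, hP⟩ := ha r hr
    obtain ⟨P', hP'⟩ := hb r hr
    exact ⟨P + P', by rw [map_add, hP, hP', add_mul, map_add]⟩
  smul_mem' := by
    intro c f hf r hr
    obtain ⟨P, hP⟩ := hf r hr
    refine ⟨C c * P, ?_⟩
    rw [map_mul, hP, smul_eq_polyC, mul_assoc, trace_poly_mul]

lemma mem_intSub {f : K} : f ∈ intSub F K ↔ IsIntegral F[X] f := Iff.rfl
lemma mem_dualSub {f : K} : f ∈ dualSub F K ↔ InDual F[X] (RatFunc F) f := Iff.rfl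

lemma trace_integral {f : K} (hf : IsIntegral F[X] f) :
    ∃ P : F[X], algebraMap F[X] (RatFunc F) P = Algebra.trace (RatFunc F) K f :=
  IsIntegrallyClosed.isIntegral_iff.mp (Algebra.isIntegral_trace hf)

end

namespace Glob

variable {F K : Type*} [Field F] [Field K] [Algebra F K]
    [Algebra F[X] K] [IsScalarTower F F[X] K]
    [Algebra (RatFunc F) K] [IsScalarTower F[X] (RatFunc F) K] [FiniteDimensional (RatFunc F) K]
    {w : Valuation K ℤᵐ⁰} {N : ℕ} {e e' : ℕ → K} (G : Glob (F := F) w N e e')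

include G

/-- A common denominator of the dual bases. -/
lemma exists_Q : ∃ Q : F[X], Q.Monic ∧ 1 ≤ Q.natDegree ∧ ∀ r < N,
    IsIntegral F[X] (algebraMap F[X] K Q * e r) ∧ IsIntegral F[X] (algebraMap F[X] K Q * e' r) := by
  classical
  obtain ⟨y, hy0, hy⟩ := exists_integral_multiples F[X] (RatFunc F)
    ((Finset.range N).image e ∪ (Finset.range N).image e')
  have hlc := leadingCoeff_ne_zero.mpr hy0
  have hm : (C y.leadingCoeff⁻¹ * y).Monic := by
    rw [mul_comm]; exact monic_mul_leadingCoeff_inv hy0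
  refine ⟨C y.leadingCoeff⁻¹ * y * X, hm.mul monic_X, ?_, ?_⟩
  · rw [hm.natDegree_mul monic_X, natDegree_X]; omega
  · intro r hr
    have key : ∀ z : K, IsIntegral F[X] (y • z) →
        IsIntegral F[X] (algebraMap F[X] K (C y.leadingCoeff⁻¹ * y * X) * z) := by
      intro z hz
      rw [map_mul, map_mul, show algebraMap F[X] K (C y.leadingCoeff⁻¹) * algebraMap F[X] K y *
        algebraMap F[X] K X * z = algebraMap F[X] K (C y.leadingCoeff⁻¹) * algebraMap F[X] K X *
        (algebraMap F[X] K y * z) by ring, ← Algebra.smul_def y z]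
      exact (isIntegral_algebraMap.mul isIntegral_algebraMap).mul hz
    exact ⟨key _ (hy _ (Finset.mem_union_left _ (Finset.mem_image_of_mem _ (Finset.mem_range.mpr hr)))),
      key _ (hy _ (Finset.mem_union_right _ (Finset.mem_image_of_mem _ (Finset.mem_range.mpr hr))))⟩

lemma eq_zero_of_lt_one {f : K} (hf : IsIntegral F[X] f) (hlt : w f < 1) : f = 0 := by
  obtain ⟨Q, hQ, hQ1, hQe⟩ := G.exists_Q
  -- a nonzero integral element has bounded order of vanishing at infinity
  have hbound : ∀ g : K, IsIntegral F[X] g → g ≠ 0 → 1 ≤ w g * w (algebraMap F[X] K Q) := by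
    intro g hg hg0
    have hexp := dual_expand G.dual_symm G.rank g
    obtain ⟨r, hr, hr0⟩ : ∃ r < N, Algebra.trace (RatFunc F) K (g * e r) ≠ 0 := by
      by_contra! h
      apply hg0
      rw [hexp]
      refine Finset.sum_eq_zero fun r hr => ?_
      rw [h r (Finset.mem_range.mp hr), map_zero, zero_mul]
    have h1 := G.term_le (fun r => Algebra.trace (RatFunc F) K (g * e r)) r hr
    rw [← hexp] at h1
    obtain ⟨P, hP⟩ := trace_integral (hg.mul (hQe r hr).1)
    rw [show g * (algebraMap F[X] K Q * e r) = algebraMap F[X] K Q * (g * e r) by ring,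
      trace_poly_mul] at hP
    have hP0 : P ≠ 0 := by
      rintro rfl
      rw [map_zero, zero_eq_mul, map_eq_zero_iff _ (IsFractionRing.injective F[X] (RatFunc F))] at hP
      exact hP.elim hQ.ne_zero hr0
    have h2 : 1 ≤ w (algebraMap F[X] K P) := by
      rw [G.val_poly hP0, ← WithZero.exp_zero, WithZero.exp_le_exp]; positivity
    have h3 : algebraMap F[X] K P = algebraMap F[X] K Q *
        algebraMap (RatFunc F) K (Algebra.trace (RatFunc F) K (g * e r)) := by
      rw [IsScalarTower.algebraMap_apply F[X] (RatFunc F) K P, hP, map_mul,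
        ← IsScalarTower.algebraMap_apply]
    have h4 : (1 : ℤᵐ⁰) ≤ w (e' r) := by
      rw [G.val' r hr, ← WithZero.exp_zero, WithZero.exp_le_exp]; positivity
    rw [h3, map_mul] at h2
    rw [map_mul] at h1
    calc (1 : ℤᵐ⁰) ≤ _ := h2
      _ = w (algebraMap (RatFunc F) K (Algebra.trace (RatFunc F) K (g * e r))) * 1 *
          w (algebraMap F[X] K Q) := by rw [mul_one, mul_comm]
      _ ≤ _ := by gcongr; exact (mul_le_mul_right h4 _).trans h1
  by_contra hf0
  have hQ0 : w (algebraMap F[X] K Q) ≠ 0 := by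
    rw [G.val_poly hQ.ne_zero]; exact WithZero.exp_ne_zero
  obtain ⟨n, hn⟩ := exists_pow_lt₀ hlt (Units.mk0 _ (inv_ne_zero hQ0))
  have h1 := hbound (f ^ n) (hf.pow n) (pow_ne_zero n hf0)
  have h2 : w (f ^ n) * w (algebraMap F[X] K Q) < 1 := by
    rw [map_pow]
    calc _ < (w (algebraMap F[X] K Q))⁻¹ * w (algebraMap F[X] K Q) :=
          mul_lt_mul_of_pos_right hn (zero_lt_iff.mpr hQ0)
      _ = 1 := inv_mul_cancel₀ hQ0
  exact absurd h1 (not_le.mpr h2)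

lemma int_neg {k : ℤ} (hk : k < 0) : intSub F K ⊓ G.ball k = ⊥ := by
  rw [eq_bot_iff]
  intro f hf
  refine G.eq_zero_of_lt_one hf.1 (lt_of_le_of_lt hf.2 ?_)
  rw [← WithZero.exp_zero, WithZero.exp_lt_exp]; exact hk

lemma int_finite (k : ℤ) : FiniteDimensional F (intSub F K ⊓ G.ball k : Submodule F K) := by
  rcases lt_or_ge k 0 with hk | hk
  · rw [G.int_neg hk]; infer_instance
  · obtain ⟨n, rfl⟩ := Int.eq_ofNat_of_zero_le hk
    induction n with
    | zero =>
      refine (G.finrank_step (intSub F K) _ ?_).1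
      rw [G.int_neg (by simp)]; infer_instance
    | succ n ih =>
      refine (G.finrank_step (intSub F K) _ ?_).1
      rw [show ((n + 1 : ℕ) : ℤ) - 1 = n by push_cast; ring]
      exact ih (by positivity)

end Glob

/-! ### Model lattices -/

namespace Glob

variable {F K : Type*} [Field F] [Field K] [Algebra F K]
    [Algebra F[X] K] [IsScalarTower F F[X] K]
    [Algebra (RatFunc F) K] [IsScalarTower F[X] (RatFunc F) K] [FiniteDimensional (RatFunc F) K]
    {w : Valuation K ℤᵐ⁰} {N : ℕ} {e e' : ℕ → K} (G : Glob (F := F) w N e e')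

include G

lemma val_X_pow (j : ℕ) : w (algebraMap F[X] K (X ^ j)) = WithZero.exp ((N : ℤ) * j) := by
  rw [G.val_poly (pow_ne_zero _ X_ne_zero), natDegree_X_pow]

/-- The subspace spanned by the functions `X ^ j * e r / Q` of pole order at most `l`. -/
lemma exists_big (Q : F[X]) (hQ : Q.Monic) (l : ℤ) :
    ∃ A : Submodule F K, FiniteDimensional F A ∧ A ≤ G.ball l ∧
      l + N * Q.natDegree + 1 ≤ Module.finrank F A ∧
      ∀ h ∈ A, ∃ c : ℕ → F[X], h * algebraMap F[X] K Q =
        ∑ r ∈ Finset.range N, algebraMap F[X] K (c r) * e r := by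
  set M := (l + N * Q.natDegree + 1).toNat with hM
  set f : Fin M → K := fun i => algebraMap F[X] K (X ^ (i.1 / N)) * e (i.1 % N) *
    (algebraMap F[X] K Q)⁻¹ with hf
  have hw : ∀ i, w (f i) = WithZero.exp ((i.1 : ℤ) - N * Q.natDegree) := by
    intro i
    rw [hf]
    simp only
    rw [map_mul, map_mul, G.val_X_pow, G.val _ (Nat.mod_lt _ G.pos), map_inv₀, G.val_poly hQ.ne_zero,
      ← WithZero.exp_neg, ← WithZero.exp_add, ← WithZero.exp_add]
    congr 1
    have := Nat.div_add_mod i.1 N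
    zify at this
    push_cast
    linarith
  have h0 : ∀ i, f i ≠ 0 := by
    intro i h
    have := hw i
    rw [h, map_zero] at this
    exact WithZero.exp_ne_zero this.symm
  have hli := G.linearIndependent f h0 (by
    intro i j h
    rw [hw, hw, WithZero.exp_inj] at h
    exact Fin.ext (by omega))
  have hQ0 : algebraMap F[X] K Q ≠ 0 := by
    rw [Ne, map_eq_zero_iff _ G.poly_injective]; exact hQ.ne_zero
  refine ⟨Submodule.span F (Set.range f), FiniteDimensional.span_of_finite F (Set.finite_range f), ?_, ?_, ?_⟩
  · rw [Submodule.span_le]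
    rintro _ ⟨i, rfl⟩
    rw [SetLike.mem_coe, G.mem_ball, hw, WithZero.exp_le_exp]
    have := i.2
    omega
  · rw [finrank_span_eq_card hli, Fintype.card_fin]
    omega
  · intro h hh
    induction hh using Submodule.span_induction with
    | mem x hx =>
      obtain ⟨i, rfl⟩ := hx
      refine ⟨fun r => if r = i.1 % N then X ^ (i.1 / N) else 0, ?_⟩
      rw [Finset.sum_eq_single (i.1 % N)]
      · simp only [if_pos, hf]; field_simp
      · intro r _ hr; simp only [if_neg hr, map_zero, zero_mul]
      · intro h; exact absurd (Finset.mem_range.mpr (Nat.mod_lt _ G.pos)) h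
    | zero => exact ⟨0, by simp⟩
    | add x y _ _ hx hy =>
      obtain ⟨c, hc⟩ := hx
      obtain ⟨c', hc'⟩ := hy
      refine ⟨c + c', ?_⟩
      rw [add_mul, hc, hc', ← Finset.sum_add_distrib]
      refine Finset.sum_congr rfl fun r _ => ?_
      rw [Pi.add_apply, map_add, add_mul]
    | smul a x _ hx =>
      obtain ⟨c, hc⟩ := hx
      refine ⟨fun r => C a * c r, ?_⟩
      rw [smul_eq_polyC, mul_assoc, hc, Finset.mul_sum]
      refine Finset.sum_congr rfl fun r _ => ?_
      rw [map_mul, mul_assoc]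

/-- The subspace spanned by the functions `Q * X ^ j * e' r` of pole order at most `k`. -/
lemma exists_small (Q : F[X]) (hQ : Q.Monic) (k : ℤ) :
    ∃ A : Submodule F K, FiniteDimensional F A ∧ A ≤ G.ball k ∧
      k - N * Q.natDegree + 1 ≤ Module.finrank F A ∧
      ∀ h ∈ A, ∃ c : ℕ → F[X], h =
        ∑ r ∈ Finset.range N, algebraMap F[X] K (c r) * (algebraMap F[X] K Q * e' r) := by
  set M := (k - N * Q.natDegree + 1).toNat with hM
  set f : Fin M → K := fun i => algebraMap F[X] K (X ^ (i.1 / N)) *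
    (algebraMap F[X] K Q * e' (N - 1 - i.1 % N)) with hf
  have hlt : ∀ i : ℕ, N - 1 - i % N < N := by
    intro i
    have := G.pos
    omega
  have hw : ∀ i, w (f i) = WithZero.exp ((i.1 : ℤ) + N * Q.natDegree) := by
    intro i
    rw [hf]
    simp only
    rw [map_mul, map_mul, G.val_X_pow, G.val' _ (hlt _), G.val_poly hQ.ne_zero,
      ← WithZero.exp_add, ← WithZero.exp_add]
    congr 1
    have := Nat.div_add_mod i.1 N
    have h2 := Nat.mod_lt i.1 G.pos
    rw [show N - 1 - (N - 1 - i.1 % N) = i.1 % N by omega]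
    zify at this
    push_cast
    linarith
  have h0 : ∀ i, f i ≠ 0 := by
    intro i h
    have := hw i
    rw [h, map_zero] at this
    exact WithZero.exp_ne_zero this.symm
  have hli := G.linearIndependent f h0 (by
    intro i j h
    rw [hw, hw, WithZero.exp_inj] at h
    exact Fin.ext (by omega))
  refine ⟨Submodule.span F (Set.range f), FiniteDimensional.span_of_finite F (Set.finite_range f), ?_, ?_, ?_⟩
  · rw [Submodule.span_le]
    rintro _ ⟨i, rfl⟩
    rw [SetLike.mem_coe, G.mem_ball, hw, WithZero.exp_le_exp]
    have := i.2
    omega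
  · rw [finrank_span_eq_card hli, Fintype.card_fin]
    omega
  · intro h hh
    induction hh using Submodule.span_induction with
    | mem x hx =>
      obtain ⟨i, rfl⟩ := hx
      refine ⟨fun r => if r = N - 1 - i.1 % N then X ^ (i.1 / N) else 0, ?_⟩
      rw [Finset.sum_eq_single (N - 1 - i.1 % N)]
      · simp only [if_pos, hf]
      · intro r _ hr; simp only [if_neg hr, map_zero, zero_mul]
      · intro h; exact absurd (Finset.mem_range.mpr (hlt _)) h
    | zero => exact ⟨0, by simp⟩
    | add x y _ _ hx hy =>
      obtain ⟨c, hc⟩ := hx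
      obtain ⟨c', hc'⟩ := hy
      refine ⟨c + c', ?_⟩
      rw [hc, hc', ← Finset.sum_add_distrib]
      refine Finset.sum_congr rfl fun r _ => ?_
      rw [Pi.add_apply, map_add, add_mul]
    | smul a x _ hx =>
      obtain ⟨c, hc⟩ := hx
      refine ⟨fun r => C a * c r, ?_⟩
      rw [smul_eq_polyC, hc, Finset.mul_sum]
      refine Finset.sum_congr rfl fun r _ => ?_
      rw [map_mul, mul_assoc]

/-- The pairing between the two model lattices is polynomial-valued. -/
lemma trace_model {Q : F[X]} {h s : K} {c c' : ℕ → F[X]}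
    (hh : h * algebraMap F[X] K Q = ∑ r ∈ Finset.range N, algebraMap F[X] K (c r) * e r)
    (hs : s = ∑ r ∈ Finset.range N, algebraMap F[X] K (c' r) * (algebraMap F[X] K Q * e' r)) :
    ∃ P : F[X], algebraMap F[X] (RatFunc F) P = Algebra.trace (RatFunc F) K (h * s) := by
  have h1 : h * s = ∑ r ∈ Finset.range N, ∑ t ∈ Finset.range N,
      algebraMap F[X] K (c r * c' t) * (e r * e' t) := by
    rw [hs, Finset.mul_sum, Finset.sum_comm]
    refine Finset.sum_congr rfl fun t _ => ?_
    rw [show h * (algebraMap F[X] K (c' t) * (algebraMap F[X] K Q * e' t)) =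
      (h * algebraMap F[X] K Q) * (algebraMap F[X] K (c' t) * e' t) by ring, hh, Finset.sum_mul]
    refine Finset.sum_congr rfl fun r _ => ?_
    rw [map_mul]; ring
  refine ⟨∑ r ∈ Finset.range N, c r * c' r, ?_⟩
  rw [h1, map_sum, map_sum]
  refine Finset.sum_congr rfl fun r hr => ?_
  rw [map_sum, Finset.sum_eq_single r]
  · rw [trace_poly_mul, G.dual r (Finset.mem_range.mp hr) r (Finset.mem_range.mp hr), if_pos rfl,
      mul_one]
  · intro t ht htr
    rw [trace_poly_mul, G.dual r (Finset.mem_range.mp hr) t (Finset.mem_range.mp ht),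
      if_neg (Ne.symm htr), mul_zero]
  · intro h; exact absurd hr h

lemma int_decomp {Q : F[X]} (hQ : Q.Monic) (hQ1 : 1 ≤ Q.natDegree)
    (hQe : ∀ r < N, IsIntegral F[X] (algebraMap F[X] K Q * e r) ∧
      IsIntegral F[X] (algebraMap F[X] K Q * e' r)) {f : K} (hf : IsIntegral F[X] f) :
    ∃ c : ℕ → F[X], ∃ f₁, IsIntegral F[X] f₁ ∧ w f₁ ≤ WithZero.exp ((N : ℤ) * Q.natDegree) ∧
      f = f₁ + ∑ r ∈ Finset.range N, algebraMap F[X] K (c r) * (algebraMap F[X] K Q * e' r) := by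
  have hP : ∀ r, ∃ P : F[X], r < N → algebraMap F[X] (RatFunc F) P =
      algebraMap F[X] (RatFunc F) Q * Algebra.trace (RatFunc F) K (f * e r) := by
    intro r
    by_cases hr : r < N
    · obtain ⟨P, hP⟩ := trace_integral (hf.mul (hQe r hr).1)
      refine ⟨P, fun _ => ?_⟩
      rw [hP, ← trace_poly_mul]; congr 1; ring
    · exact ⟨0, fun h => absurd h hr⟩
  choose P hP using hP
  have hQ0 : algebraMap F[X] K Q ≠ 0 := by
    rw [Ne, map_eq_zero_iff _ G.poly_injective]; exact hQ.ne_zero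
  have hQ2 : (Q ^ 2).Monic := hQ.pow 2
  have hexp := dual_expand G.dual_symm G.rank f
  have hcoef : ∀ r < N, algebraMap (RatFunc F) K (Algebra.trace (RatFunc F) K (f * e r)) =
      algebraMap F[X] K (P r) * (algebraMap F[X] K Q)⁻¹ := by
    intro r hr
    rw [IsScalarTower.algebraMap_apply F[X] (RatFunc F) K (P r), hP r hr, map_mul (algebraMap (RatFunc F) K),
      ← IsScalarTower.algebraMap_apply]
    field_simp
  have hf1 : f - ∑ r ∈ Finset.range N, algebraMap F[X] K (P r /ₘ Q ^ 2) *
      (algebraMap F[X] K Q * e' r) = ∑ r ∈ Finset.range N,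
        algebraMap F[X] K (P r %ₘ Q ^ 2) * (algebraMap F[X] K Q)⁻¹ * e' r := by
    conv_lhs => rw [hexp]
    rw [← Finset.sum_sub_distrib]
    refine Finset.sum_congr rfl fun r hr => ?_
    rw [hcoef r (Finset.mem_range.mp hr)]
    have hd := congrArg (algebraMap F[X] K) (modByMonic_add_div (P r) (Q ^ 2))
    rw [← hd, map_add, map_mul, map_pow]
    field_simp
    ring
  refine ⟨fun r => P r /ₘ Q ^ 2, f - ∑ r ∈ Finset.range N, algebraMap F[X] K (P r /ₘ Q ^ 2) *
      (algebraMap F[X] K Q * e' r), ?_, ?_, by ring⟩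
  · refine hf.sub (IsIntegral.sum _ fun r hr => isIntegral_algebraMap.mul ?_)
    exact (hQe r (Finset.mem_range.mp hr)).2
  · rw [hf1]
    refine Valuation.map_sum_le _ fun r hr => ?_
    rw [Finset.mem_range] at hr
    by_cases h0 : P r %ₘ Q ^ 2 = 0
    · rw [h0]; simp
    · rw [map_mul, map_mul, G.val_poly h0, map_inv₀, G.val_poly hQ.ne_zero, G.val' r hr,
        ← WithZero.exp_neg, ← WithZero.exp_add, ← WithZero.exp_add, WithZero.exp_le_exp]
      have h1 : (P r %ₘ Q ^ 2).natDegree < (Q ^ 2).natDegree :=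
        natDegree_modByMonic_lt _ hQ2 (by
          intro h; have := congrArg natDegree h; rw [natDegree_pow, natDegree_one] at this; omega)
      rw [natDegree_pow] at h1
      have h2 : ((P r %ₘ Q ^ 2).natDegree : ℤ) ≤ 2 * Q.natDegree - 1 := by omega
      have h3 := mul_le_mul_of_nonneg_left h2 (by positivity : (0 : ℤ) ≤ N)
      have h4 : ((N - 1 - r : ℕ) : ℤ) ≤ N := by omega
      linarith

end Glob

/-! ### Duality and the Riemann–Roch inequalities -/

namespace Glob

variable {F K : Type*} [Field F] [Field K] [Algebra F K]
    [Algebra F[X] K] [IsScalarTower F F[X] K]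
    [Algebra (RatFunc F) K] [IsScalarTower F[X] (RatFunc F) K] [FiniteDimensional (RatFunc F) K]
    {w : Valuation K ℤᵐ⁰} {N : ℕ} {e e' : ℕ → K} (G : Glob (F := F) w N e e')

include G

/-- The duality half of Riemann–Roch: the dimension of `R^∨_{≤ l}` is bounded below through the
pairing of a model lattice with `R_{≤ k}`. -/
lemma duality [IsScalarTower F (RatFunc F) K] : ∃ k₀ : ℤ, ∀ k ≥ k₀, ∀ l : ℤ,
    FiniteDimensional F (dualSub F K ⊓ G.ball l : Submodule F K) →
    l + k + 2 ≤ (Module.finrank F (dualSub F K ⊓ G.ball l : Submodule F K) : ℤ) +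
      Module.finrank F (intSub F K ⊓ G.ball k : Submodule F K) := by
  obtain ⟨Q, hQ, hQ1, hQe⟩ := G.exists_Q
  obtain ⟨ℓ, hℓ, hℓ'⟩ := exists_functional (hQ.pow 2) (by rw [natDegree_pow]; omega)
  refine ⟨N * Q.natDegree, fun k hk l hfd => ?_⟩
  obtain ⟨A, hA, hAl, hAdim, hAc⟩ := G.exists_big Q hQ l
  obtain ⟨S, hS, hSk, hSdim, hSc⟩ := G.exists_small Q hQ k
  have hSR : S ≤ intSub F K ⊓ G.ball k := by
    intro f hf
    refine ⟨?_, hSk hf⟩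
    obtain ⟨c, rfl⟩ := hSc f hf
    exact IsIntegral.sum _ fun r hr => isIntegral_algebraMap.mul (hQe r (Finset.mem_range.mp hr)).2
  have := G.int_finite k
  let V := (intSub F K ⊓ G.ball k : Submodule F K)
  let tr : K →ₗ[F] RatFunc F := (Algebra.trace (RatFunc F) K).restrictScalars F
  let B : K →ₗ[F] Module.Dual F K := (LinearMap.mul F K).compr₂ (ℓ ∘ₗ tr)
  have hB : ∀ x y, B x y = ℓ (Algebra.trace (RatFunc F) K (x * y)) := fun x y => rfl
  let Φ : A →ₗ[F] Module.Dual F V := (V.subtype.dualMap) ∘ₗ B ∘ₗ A.subtype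
  have hΦ : ∀ (h : A) (r : V), Φ h r = ℓ (Algebra.trace (RatFunc F) K (h.1 * r.1)) :=
    fun h r => rfl
  let S' : Submodule F V := S.comap V.subtype
  have hS' : Module.finrank F S' = Module.finrank F S :=
    (Submodule.comapSubtypeEquivOfLe hSR).finrank_eq
  have hrange : LinearMap.range Φ ≤ S'.dualAnnihilator := by
    rintro _ ⟨h, rfl⟩
    rw [Submodule.mem_dualAnnihilator]
    intro r hr
    rw [hΦ]
    obtain ⟨c, hc⟩ := hAc h h.2
    obtain ⟨c', hc'⟩ := hSc r.1 hr
    obtain ⟨P, hP⟩ := G.trace_model hc hc'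
    rw [← hP, hℓ]
  have hker : (LinearMap.ker Φ).map A.subtype ≤ dualSub F K ⊓ G.ball l := by
    rintro _ ⟨h, hh, rfl⟩
    refine ⟨?_, hAl h.2⟩
    obtain ⟨c, hc⟩ := hAc h h.2
    -- the functional vanishes on the traces of all integral elements
    have hall : ∀ r : K, IsIntegral F[X] r →
        ℓ (Algebra.trace (RatFunc F) K (h.1 * r)) = 0 := by
      intro r hr
      obtain ⟨c', f₁, hf₁, hwf₁, rfl⟩ := G.int_decomp hQ hQ1 hQe hr
      obtain ⟨P, hP⟩ := G.trace_model hc (s := ∑ r ∈ Finset.range N,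
        algebraMap F[X] K (c' r) * (algebraMap F[X] K Q * e' r)) rfl
      rw [mul_add, map_add, map_add, ← hP, hℓ, add_zero]
      have := LinearMap.congr_fun (LinearMap.mem_ker.mp hh) (⟨f₁, hf₁, hwf₁.trans
        (WithZero.exp_le_exp.mpr hk)⟩ : V)
      rwa [hΦ] at this
    intro r hr
    refine hℓ' _ ?_ ?_
    · have h_integral : IsIntegral F[X] (algebraMap F[X] K (Q ^ 2) * (h.1 * r)) := by
        rw [map_pow, show algebraMap F[X] K Q ^ 2 * (h.1 * r) =
          (algebraMap F[X] K Q * (h.1 * algebraMap F[X] K Q)) * r by ring, hc, Finset.mul_sum]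
        refine IsIntegral.mul (IsIntegral.sum _ fun t ht => ?_) hr
        rw [mul_left_comm]
        exact isIntegral_algebraMap.mul (hQe t (Finset.mem_range.mp ht)).1
      obtain ⟨P, hP⟩ := trace_integral h_integral
      exact ⟨P, by rw [hP, trace_poly_mul]; rfl⟩
    · intro j
      rw [← trace_poly_mul]
      have := hall (algebraMap F[X] K (X ^ j) * r) (isIntegral_algebraMap.mul hr)
      rw [← this]
      congr 2
      change _ * (h.1 * r) = _
      ring
  have h1 := LinearMap.finrank_range_add_finrank_ker Φ
  have h2 := Submodule.finrank_mono hrange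
  have h3 := Subspace.finrank_add_finrank_dualAnnihilator_eq S'
  have h4 := Submodule.finrank_mono hker
  rw [Submodule.finrank_map_subtype_eq] at h4
  change _ = Module.finrank F (intSub F K ⊓ G.ball k : Submodule F K) at h3
  change Module.finrank F (LinearMap.range Φ) ≤ Module.finrank F S'.dualAnnihilator at h2
  omega

/-- Multiplication by an element carrying the trace dual into the ring of integers. -/
lemma dual_le {B : K} {c : ℤ} (hB : w B = WithZero.exp c)
    (hdual : ∀ h, InDual F[X] (RatFunc F) h → IsIntegral F[X] (B * h)) (l : ℤ) :
    FiniteDimensional F (dualSub F K ⊓ G.ball l : Submodule F K) ∧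
    Module.finrank F (dualSub F K ⊓ G.ball l : Submodule F K) ≤
      Module.finrank F (intSub F K ⊓ G.ball (l + c) : Submodule F K) := by
  have hB0 : B ≠ 0 := by
    rintro rfl; rw [map_zero] at hB; exact WithZero.exp_ne_zero hB.symm
  have := G.int_finite (l + c)
  let φ : (dualSub F K ⊓ G.ball l : Submodule F K) →ₗ[F]
      (intSub F K ⊓ G.ball (l + c) : Submodule F K) :=
    (LinearMap.mulLeft F B).restrict (fun f hf => ⟨hdual f hf.1, by
      rw [SetLike.mem_coe, G.mem_ball, LinearMap.mulLeft_apply, map_mul, hB, mul_comm,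
        WithZero.exp_add]
      exact mul_le_mul_left hf.2 _⟩)
  have hφ : Function.Injective φ := by
    intro x y h
    have := congrArg Subtype.val h
    exact Subtype.ext (mul_left_cancel₀ hB0 this)
  exact ⟨FiniteDimensional.of_injective φ hφ, LinearMap.finrank_le_finrank_of_injective hφ⟩

/-- The Riemann–Roch inequalities, with `g` the genus. -/
theorem riemann_roch [IsScalarTower F (RatFunc F) K] {B : K} {γ : ℤ}
    (hB : w B = WithZero.exp (2 * γ))
    (hdual : ∀ h, InDual F[X] (RatFunc F) h → IsIntegral F[X] (B * h)) :
    ∃ g : ℤ, 0 ≤ g ∧ g ≤ γ ∧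
      (∀ k : ℤ, k + 1 - g ≤ Module.finrank F (intSub F K ⊓ G.ball k : Submodule F K)) ∧
      (∀ l : ℤ, l + 1 + g ≤ Module.finrank F (dualSub F K ⊓ G.ball l : Submodule F K)) := by
  obtain ⟨k₀, hk₀⟩ := G.duality
  set r : ℤ → ℤ := fun k => Module.finrank F (intSub F K ⊓ G.ball k : Submodule F K) with hr
  set d : ℤ → ℤ := fun k => Module.finrank F (dualSub F K ⊓ G.ball k : Submodule F K) with hd
  have h1 : ∀ k ≥ k₀, ∀ l, l + k + 2 ≤ d l + r k := fun k hk l =>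
    hk₀ k hk l (G.dual_le hB hdual l).1
  have h2 : ∀ l, d l ≤ r (l + 2 * γ) := fun l => by
    simp only [hr, hd]; exact_mod_cast (G.dual_le hB hdual l).2
  have hmono : Monotone fun k => k + 1 - r k := by
    refine monotone_int_of_le_succ fun k => ?_
    have h := (G.finrank_step (intSub F K) (k + 1) (G.int_finite _)).2
    rw [add_sub_cancel_right] at h
    have h' : r (k + 1) ≤ r k + 1 := by simp only [hr]; exact_mod_cast h
    linarith
  have hle : ∀ k, k + 1 - r k ≤ γ := by
    intro k
    refine (hmono (le_max_left k k₀)).trans ?_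
    have h3 := h1 _ (le_max_right k k₀) (max k k₀ - 2 * γ)
    have h4 := h2 (max k k₀ - 2 * γ)
    rw [sub_add_cancel] at h4
    simp only
    linarith
  have hneg : r (-1) = 0 := by
    simp only [hr]
    rw [G.int_neg (by norm_num)]; simp
  obtain ⟨g, ⟨k₁, hk₁⟩, hgmax⟩ := Int.exists_greatest_of_bdd
    (P := fun g => ∃ k : ℤ, k + 1 - r k = g) ⟨γ, by rintro z ⟨k, rfl⟩; exact hle k⟩ ⟨_, 0, rfl⟩
  refine ⟨g, ?_, ?_, ?_, ?_⟩
  · exact hgmax 0 ⟨-1, by rw [hneg]; norm_num⟩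
  · rw [← hk₁]; exact hle k₁
  · intro k
    have := hgmax _ ⟨k, rfl⟩
    change _ ≤ r k
    linarith
  · intro l
    have h3 := h1 _ (le_max_right k₁ k₀) l
    have h4 := hmono (le_max_left k₁ k₀)
    change _ ≤ d l
    simp only at h4
    linarith

end Glob

/-! ### Function field data and evaluation points -/

/-- The function field data used by the code construction: a set `ι` of places describing the
integral elements, the place at infinity `w`, a derivation `D = d/dX` and a polynomial `b` that
bounds the trace dual and the derivation at all finite places; the zeros of `X - α` with
`b(α) ≠ 0` are rational and unramified. -/
structure Curve {F K ι : Type*} [Field F] [Fintype F] [DecidableEq F] [Field K] [Algebra F K]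
    [Algebra F[X] K] [Algebra (RatFunc F) K] (v : ι → Valuation K ℤᵐ⁰) (w : Valuation K ℤᵐ⁰)
    (N s : ℕ) (e e' : ℕ → K) (D : Derivation F K K) (b : F[X]) : Prop where
  glob : Glob (F := F) w N e e'
  isIntegral : ∀ f, (∀ P, v P f ≤ 1) → IsIntegral F[X] f
  le_one : ∀ P f, IsIntegral F[X] f → v P f ≤ 1
  unif : ∀ P, ∃ π, v P π = WithZero.exp (-1)
  prufer : ∀ (u : K) (n : ℕ), 1 ≤ n → ∃ a c, IsIntegral F[X] a ∧ IsIntegral F[X] c ∧ u = a + c * u ^ n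
  dual_le : ∀ P h, InDual F[X] (RatFunc F) h → v P h * v P (algebraMap F[X] K b) ^ 2 ≤ 1
  deriv_le : ∀ P f, v P f ≤ 1 → v P (D f) * v P (algebraMap F[X] K b) ^ 2 ≤ 1
  residue_at : ∀ P (α : F), b.eval α ≠ 0 → v P (algebraMap F[X] K (X - C α)) < 1 →
    ∀ f, v P f ≤ 1 → ∃ c : F, v P (f - algebraMap F K c) ≤ v P (algebraMap F[X] K (X - C α))
  D_X : D (algebraMap F[X] K X) = 1
  w_D : ∀ f, w (D f) ≤ w f * WithZero.exp (-1)
  b_deg : b.natDegree = s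
  b_ne : b ≠ 0
  card_good : (Finset.univ.filter fun α : F => b.eval α ≠ 0).card = s ^ 2 - s
  places : ∀ α, b.eval α ≠ 0 → ∃ Tα : Finset ι, Tα.card ≤ N ∧
    ∀ P, v P (algebraMap F[X] K (X - C α)) < 1 → P ∈ Tα

section Cut

variable {F K ι : Type*} [Field F] [Field K] [Algebra F K]

/-- The leading coefficient along `t` is a linear functional on functions with `v f ≤ v t`. -/
lemma exists_coef (v : Valuation K ℤᵐ⁰) (hc : ∀ c : F, c ≠ 0 → v (algebraMap F K c) = 1)
    (hres : ∀ f, v f ≤ 1 → ∃ c : F, v (f - algebraMap F K c) < 1) (V : Submodule F K) {t : K}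
    (ht : t ≠ 0) (hV : ∀ f ∈ V, v f ≤ v t) :
    ∃ φ : V →ₗ[F] F, ∀ f : V, φ f = 0 ↔ v f.1 < v t := by
  have hvt : v t ≠ 0 := (Valuation.ne_zero_iff v).mpr ht
  have hex : ∀ f : V, ∃ c : F, v (f.1 / t - algebraMap F K c) < 1 := fun f => hres _ (by
    rw [map_div₀]; exact div_le_one_of_le₀ (hV f f.2) zero_le)
  have huniq : ∀ (z : K) (c c' : F), v (z - algebraMap F K c) < 1 → v (z - algebraMap F K c') < 1 →
      c = c' := by
    intro z c c' h h'
    by_contra hne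
    have h1 := hc (c - c') (sub_ne_zero.mpr hne)
    have h2 : v (algebraMap F K (c - c')) < 1 := by
      rw [map_sub, show algebraMap F K c - algebraMap F K c' =
        (z - algebraMap F K c') - (z - algebraMap F K c) by ring]
      exact (v.map_sub _ _).trans_lt (max_lt h' h)
    exact absurd h1 h2.ne
  choose φ hφ using hex
  refine ⟨{ toFun := φ, map_add' := ?_, map_smul' := ?_ }, ?_⟩
  · intro f g
    refine huniq ((f + g : V).1 / t) _ _ (hφ _) ?_
    rw [map_add, show (f + g : V).1 / t - (algebraMap F K (φ f) + algebraMap F K (φ g)) =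
      (f.1 / t - algebraMap F K (φ f)) + (g.1 / t - algebraMap F K (φ g)) by
        rw [Submodule.coe_add]; ring]
    exact (v.map_add _ _).trans_lt (max_lt (hφ f) (hφ g))
  · intro a f
    refine huniq ((a • f : V).1 / t) _ _ (hφ _) ?_
    rw [RingHom.id_apply, smul_eq_mul, map_mul, show (a • f : V).1 / t - algebraMap F K a *
      algebraMap F K (φ f) = algebraMap F K a * (f.1 / t - algebraMap F K (φ f)) by
        rw [Submodule.coe_smul, Algebra.smul_def]; ring, map_mul]
    refine lt_of_le_of_lt (mul_le_of_le_one_left' ?_) (hφ f)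
    by_cases ha : a = 0
    · simp [ha]
    · exact (hc a ha).le
  · intro f
    change φ f = 0 ↔ _
    rw [show v f.1 < v t ↔ v (f.1 / t) < 1 by rw [map_div₀, div_lt_one₀ (zero_lt_iff.mpr hvt)]]
    constructor
    · intro h
      have := hφ f
      rwa [h, map_zero, sub_zero] at this
    · intro h
      exact huniq (f.1 / t) _ _ (hφ f) (by rwa [map_zero, sub_zero])

/-- Imposing one more order of vanishing at each of `S.card` rational places costs at most
`S.card` dimensions. -/
lemma finrank_cut (v : ι → Valuation K ℤᵐ⁰) (S : Finset ι)
    (hc : ∀ P ∈ S, ∀ c : F, c ≠ 0 → v P (algebraMap F K c) = 1)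
    (hres : ∀ P ∈ S, ∀ f, v P f ≤ 1 → ∃ c : F, v P (f - algebraMap F K c) < 1)
    (V : Submodule F K) [FiniteDimensional F V] {t : K}
    (ht : t ≠ 0) (hV : ∀ P ∈ S, ∀ f ∈ V, v P f ≤ v P t) :
    ∃ V' : Submodule F K, (∀ f, f ∈ V' ↔ f ∈ V ∧ ∀ P ∈ S, v P f < v P t) ∧
      Module.finrank F V ≤ Module.finrank F V' + S.card := by
  have hex : ∀ P : S, ∃ φ : V →ₗ[F] F, ∀ f : V, φ f = 0 ↔ v P f.1 < v P t := fun P =>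
    exists_coef (v P) (hc P P.2) (hres P P.2) V ht (hV P P.2)
  choose φ hφ using hex
  refine ⟨(LinearMap.ker (LinearMap.pi φ)).map V.subtype, ?_, ?_⟩
  · intro f
    constructor
    · rintro ⟨g, hg, rfl⟩
      refine ⟨g.2, fun P hP => ?_⟩
      have := congrFun (LinearMap.mem_ker.mp hg) ⟨P, hP⟩
      exact (hφ ⟨P, hP⟩ g).mp this
    · rintro ⟨hf, hf'⟩
      refine ⟨⟨f, hf⟩, LinearMap.mem_ker.mpr (funext fun P => ?_), rfl⟩
      exact (hφ P ⟨f, hf⟩).mpr (hf' P P.2)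
  · rw [Submodule.finrank_map_subtype_eq]
    have h1 := LinearMap.finrank_range_add_finrank_ker (LinearMap.pi φ)
    have h2 := Submodule.finrank_le (LinearMap.range (LinearMap.pi φ))
    rw [Module.finrank_fintype_fun_eq_card, Fintype.card_coe] at h2
    omega

end Cut

namespace Curve

variable {F K ι : Type*} [Field F] [Fintype F] [DecidableEq F] [Field K] [Algebra F K]
    [Algebra F[X] K] [IsScalarTower F F[X] K]
    [Algebra (RatFunc F) K] [IsScalarTower F[X] (RatFunc F) K] [FiniteDimensional (RatFunc F) K]
    {v : ι → Valuation K ℤᵐ⁰} {w : Valuation K ℤᵐ⁰}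
    {N s : ℕ} {e e' : ℕ → K} {D : Derivation F K K} {b : F[X]}

/-- The polynomial whose zeros are the rational points used as evaluation points. -/
noncomputable def pp (b : F[X]) : F[X] := ∏ α ∈ Finset.univ.filter (fun α : F => b.eval α ≠ 0), (X - C α)

lemma pp_monic : (pp b).Monic := monic_prod_of_monic _ _ fun α _ => monic_X_sub_C α

lemma pp_coprime : IsCoprime (pp b) b := by
  refine IsCoprime.prod_left fun α hα => ?_
  rw [(irreducible_X_sub_C α).coprime_iff_not_dvd, dvd_iff_isRoot]
  exact (Finset.mem_filter.mp hα).2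

variable (Cv : Curve v w N s e e' D b)

include Cv

lemma pp_deg : (pp b).natDegree = s ^ 2 - s := by
  rw [pp, natDegree_prod_of_monic _ _ fun α _ => monic_X_sub_C α]
  simp only [natDegree_X_sub_C, Finset.sum_const, smul_eq_mul, mul_one]
  exact Cv.card_good

lemma poly_le (P : ι) (f : F[X]) : v P (algebraMap F[X] K f) ≤ 1 :=
  Cv.le_one P _ isIntegral_algebraMap

lemma algebraMap_C (c : F) : algebraMap F[X] K (C c) = algebraMap F K c := by
  rw [IsScalarTower.algebraMap_apply F F[X] K]; rfl

lemma val_const (P : ι) (c : F) (hc : c ≠ 0) : v P (algebraMap F K c) = 1 := by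
  have h1 : ∀ c, v P (algebraMap F K c) ≤ 1 := fun c => by
    rw [← Cv.algebraMap_C]; exact Cv.poly_le P _
  refine le_antisymm (h1 c) ?_
  by_contra! hlt
  have h2 : v P (algebraMap F K c) * v P (algebraMap F K c⁻¹) = 1 := by
    rw [← map_mul, ← map_mul, mul_inv_cancel₀ hc, map_one, map_one]
  have h3 : v P (algebraMap F K c) * v P (algebraMap F K c⁻¹) < 1 :=
    lt_of_le_of_lt (mul_le_of_le_one_right' (h1 _)) hlt
  exact absurd h2 h3.ne

/-- Places over a good point `α` are unramified with uniformizer `X - α`. -/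
lemma val_X_sub {P : ι} {α : F} (hα : b.eval α ≠ 0)
    (h : v P (algebraMap F[X] K (X - C α)) < 1) :
    v P (algebraMap F[X] K (X - C α)) = WithZero.exp (-1) := by
  refine le_antisymm ?_ ?_
  · have := (Glob.lt_exp_iff (k := 0)).mp (by rwa [WithZero.exp_zero])
    simpa using this
  · obtain ⟨π, hπ⟩ := Cv.unif P
    have hπ1 : v P π < 1 := by
      rw [hπ, ← WithZero.exp_zero, WithZero.exp_lt_exp]; norm_num
    obtain ⟨c, hc⟩ := Cv.residue_at P α hα h π hπ1.le
    have hc0 : c = 0 := by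
      by_contra hc0
      have h1 := Cv.val_const P c hc0
      have h2 : v P (algebraMap F K c) < 1 := by
        rw [show algebraMap F K c = π - (π - algebraMap F K c) by ring]
        exact ((v P).map_sub _ _).trans_lt (max_lt hπ1 (hc.trans_lt h))
      exact absurd h1 h2.ne
    rwa [hc0, map_zero, sub_zero, hπ] at hc

lemma val_eq_one_of_eval {P : ι} {α : F} (h : v P (algebraMap F[X] K (X - C α)) < 1) {f : F[X]}
    (hf : f.eval α ≠ 0) : v P (algebraMap F[X] K f) = 1 := by
  have h1 : v P (algebraMap F[X] K (f - C (f.eval α))) < 1 := by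
    obtain ⟨g, hg⟩ := X_sub_C_dvd_sub_C_eval (p := f) (a := α)
    rw [hg, map_mul, map_mul]
    exact lt_of_le_of_lt (mul_le_of_le_one_right' (Cv.poly_le P g)) h
  have h2 := Cv.val_const P _ hf
  rw [show f = (f - C (f.eval α)) + C (f.eval α) by ring, map_add, Cv.algebraMap_C,
    Valuation.map_add_eq_of_lt_right, h2]
  rwa [h2]

/-- The places where the evaluation polynomial vanishes: each lies over a good point, is
unramified and avoids `b`. -/
lemma at_point {P : ι} (h : v P (algebraMap F[X] K (pp b)) < 1) :
    ∃ α : F, b.eval α ≠ 0 ∧ v P (algebraMap F[X] K (X - C α)) = WithZero.exp (-1) ∧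
      v P (algebraMap F[X] K (pp b)) = WithZero.exp (-1) ∧ v P (algebraMap F[X] K b) = 1 := by
  obtain ⟨α, hα, hlt⟩ : ∃ α, b.eval α ≠ 0 ∧ v P (algebraMap F[X] K (X - C α)) < 1 := by
    by_contra! hcon
    apply h.ne
    rw [pp, map_prod, map_prod]
    refine Finset.prod_eq_one fun α hα => le_antisymm (Cv.poly_le P _) ?_
    exact hcon α (Finset.mem_filter.mp hα).2
  refine ⟨α, hα, Cv.val_X_sub hα hlt, ?_, Cv.val_eq_one_of_eval hlt hα⟩
  rw [pp, ← Finset.mul_prod_erase _ _ (Finset.mem_filter.mpr ⟨Finset.mem_univ α, hα⟩), map_mul,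
    map_mul, Cv.val_X_sub hα hlt, Cv.val_eq_one_of_eval hlt, mul_one]
  rw [eval_prod, Finset.prod_ne_zero_iff]
  intro β hβ
  rw [eval_sub, eval_X, eval_C]
  exact sub_ne_zero.mpr (Ne.symm (Finset.mem_erase.mp hβ).1)

/-- There are at most `(s ^ 2 - s) * N` evaluation points. -/
lemma exists_T : ∃ T : Finset ι, T.card ≤ (s ^ 2 - s) * N ∧
    ∀ P, P ∈ T ↔ v P (algebraMap F[X] K (pp b)) < 1 := by
  classical
  have h : ∀ α, ∃ Tα : Finset ι, b.eval α ≠ 0 → Tα.card ≤ N ∧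
      ∀ P, v P (algebraMap F[X] K (X - C α)) < 1 → P ∈ Tα := by
    intro α
    by_cases hα : b.eval α ≠ 0
    · obtain ⟨T, hT⟩ := Cv.places α hα
      exact ⟨T, fun _ => hT⟩
    · exact ⟨∅, fun h => absurd h hα⟩
  choose t ht using h
  refine ⟨((Finset.univ.filter fun α : F => b.eval α ≠ 0).biUnion t).filter
    (fun P => v P (algebraMap F[X] K (pp b)) < 1), ?_, ?_⟩
  · refine (Finset.card_filter_le _ _).trans (Finset.card_biUnion_le.trans ?_)
    rw [← Cv.card_good]
    refine (Finset.sum_le_card_nsmul _ _ N fun α hα => (ht α (Finset.mem_filter.mp hα).2).1).trans ?_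
    rw [smul_eq_mul]
  · intro P
    rw [Finset.mem_filter, and_iff_right_iff_imp]
    intro hP
    obtain ⟨α, hα, h1, -⟩ := Cv.at_point hP
    refine Finset.mem_biUnion.mpr ⟨α, Finset.mem_filter.mpr ⟨Finset.mem_univ _, hα⟩,
      (ht α hα).2 P ?_⟩
    rw [h1, ← WithZero.exp_zero, WithZero.exp_lt_exp]; norm_num

end Curve

/-! ### The residue theorem -/

namespace Curve

variable {F K ι : Type*} [Field F] [Fintype F] [DecidableEq F] [Field K] [Algebra F K]
    [Algebra F[X] K] [IsScalarTower F F[X] K]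
    [Algebra (RatFunc F) K] [IsScalarTower F[X] (RatFunc F) K] [FiniteDimensional (RatFunc F) K]
    {v : ι → Valuation K ℤᵐ⁰} {w : Valuation K ℤᵐ⁰}
    {N s : ℕ} {e e' : ℕ → K} {D : Derivation F K K} {b : F[X]}

/-- Functions of pole order at most `n` at infinity vanishing to order one on `Y` and to order
three at the other evaluation points. -/
def InA (v : ι → Valuation K ℤᵐ⁰) (w : Valuation K ℤᵐ⁰) (b : F[X]) (n : ℤ) (Y : Finset ι)
    (f : K) : Prop :=
  IsIntegral F[X] f ∧ w f ≤ WithZero.exp n ∧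
  ∀ P, v P (algebraMap F[X] K (pp b)) < 1 →
    v P f ≤ WithZero.exp (-1) ∧ (P ∉ Y → v P f ≤ WithZero.exp (-3))

/-- Elements of the trace dual with pole order at most `l` at infinity vanishing to order two
on `Y`. -/
def InH (v : ι → Valuation K ℤᵐ⁰) (w : Valuation K ℤᵐ⁰) (l : ℤ) (Y : Finset ι) (h : K) : Prop :=
  InDual F[X] (RatFunc F) h ∧ w h ≤ WithZero.exp l ∧ ∀ P ∈ Y, v P h ≤ WithZero.exp (-2)

variable (Cv : Curve v w N s e e' D b)

include Cv

lemma dual_le_one {P : ι} (hP : v P (algebraMap F[X] K (pp b)) < 1) {h : K}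
    (hh : InDual F[X] (RatFunc F) h) : v P h ≤ 1 := by
  obtain ⟨α, -, -, -, hb⟩ := Cv.at_point hP
  have := Cv.dual_le P h hh
  rwa [hb, one_pow, mul_one] at this

lemma pp_ne : algebraMap F[X] K (pp b) ≠ 0 := by
  rw [Ne, map_eq_zero_iff _ Cv.glob.poly_injective]; exact pp_monic.ne_zero

/-- The residue theorem: there are no `f`, `h` whose product, divided by the cube of the evaluation
polynomial, would have a single simple pole. -/
lemma residue_contra {n l : ℤ} (hn : n = 3 * ((s ^ 2 - s : ℕ) * N) - 2) (hl : l ≤ 0)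
    {Y : Finset ι} {P : ι} (hP : v P (algebraMap F[X] K (pp b)) < 1)
    {f h : K} (hf : ∀ Q ≠ P, v Q (algebraMap F[X] K (pp b)) < 1 →
      v Q f ≤ WithZero.exp (-1) ∧ (Q ∉ Y → v Q f ≤ WithZero.exp (-3)))
    (hfi : IsIntegral F[X] f) (hfw : w f ≤ WithZero.exp n)
    (hh : InH (F := F) v w l Y h) (hfh : v P (f * h) = WithZero.exp (-2)) :
    False := by
  obtain ⟨α, hα, hxα, hpP, hbP⟩ := Cv.at_point hP
  have hp0 := Cv.pp_ne
  set p := algebraMap F[X] K (pp b) with hp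
  set B := algebraMap F[X] K b with hB
  have hhd : InDual F[X] (RatFunc F) h := hh.1
  -- the function `r = b² f h / p³` has a simple pole at `P` and no other finite pole
  set r := B ^ 2 * (f * h) / p ^ 3 with hr
  have hrP : v P r = WithZero.exp 1 := by
    rw [hr, map_div₀, map_mul, map_pow, map_pow, hbP, hpP, hfh, one_pow, one_mul,
      ← WithZero.exp_nsmul, ← WithZero.exp_sub]
    congr 1
  have hrQ : ∀ Q ≠ P, v Q r ≤ 1 := by
    intro Q hQP
    have hb1 : v Q B ≤ 1 := Cv.poly_le Q b
    have hd := Cv.dual_le Q h hhd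
    have hf1 := Cv.le_one Q f hfi
    by_cases hQ : v Q p < 1
    · obtain ⟨-, -, -, hpQ, hbQ⟩ := Cv.at_point hQ
      have h1 : v Q (f * h) ≤ WithZero.exp (-3) := by
        rw [map_mul]
        by_cases hQY : Q ∈ Y
        · rw [show (-3 : ℤ) = -1 + -2 by norm_num, WithZero.exp_add]
          exact mul_le_mul' (hf Q hQP hQ).1 (hh.2.2 Q hQY)
        · exact (mul_le_of_le_one_right' (Cv.dual_le_one hQ hhd)).trans ((hf Q hQP hQ).2 hQY)
      rw [hr, map_div₀, map_mul, map_pow, map_pow, hbQ, hpQ, one_pow, one_mul,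
        ← WithZero.exp_nsmul]
      exact div_le_one_of_le₀ h1 zero_le
    · have hp1 : v Q p = 1 := le_antisymm (Cv.poly_le Q _) (not_lt.mp hQ)
      rw [hr, map_div₀, map_mul, map_pow, map_pow, hp1, one_pow, div_one, map_mul,
        show v Q B ^ 2 * (v Q f * v Q h) = v Q f * (v Q h * v Q B ^ 2) by rw [mul_comm, mul_assoc]]
      exact mul_le_one' hf1 hd
  -- its trace vanishes
  have htr : Algebra.trace (RatFunc F) K r = 0 := by
    set e₁ := algebraMap F[X] K (X - C α) * (f * h) / p ^ 3 with he₁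
    obtain ⟨P₁, hP₁⟩ := hhd (algebraMap F[X] K (X - C α) * f) (isIntegral_algebraMap.mul hfi)
    have hP₁' : algebraMap F[X] (RatFunc F) P₁ = algebraMap F[X] (RatFunc F) (pp b ^ 3) *
        Algebra.trace (RatFunc F) K e₁ := by
      rw [hP₁, ← trace_poly_mul, he₁, map_pow, ← hp]
      congr 1; field_simp
    have h_integral : IsIntegral F[X] (algebraMap F[X] K (b ^ 2) * e₁) := by
      refine Cv.isIntegral _ fun Q => ?_
      rw [show algebraMap F[X] K (b ^ 2) * e₁ = algebraMap F[X] K (X - C α) * r by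
        rw [he₁, hr, map_pow, ← hB]; field_simp, map_mul]
      by_cases hQP : Q = P
      · rw [hQP, hrP, hxα, ← WithZero.exp_add]; simp
      · exact mul_le_one' (Cv.poly_le Q _) (hrQ Q hQP)
    obtain ⟨P₂, hP₂⟩ := trace_integral h_integral
    rw [trace_poly_mul] at hP₂
    obtain ⟨a₁, a₂, ha⟩ := (pp_coprime (b := b)).pow (m := 3) (n := 2)
    have hpoly : algebraMap F[X] (RatFunc F) (a₁ * P₁ + a₂ * P₂) =
        Algebra.trace (RatFunc F) K e₁ := by
      rw [map_add, map_mul, map_mul, hP₁', hP₂, ← mul_assoc, ← mul_assoc, ← add_mul, ← map_mul,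
        ← map_mul, ← map_add, ha, map_one, one_mul]
    have hwe : w e₁ ≤ WithZero.exp ((N : ℤ) - 2) := by
      rw [he₁, map_div₀, map_mul, map_mul, map_pow, hp, Cv.glob.val_poly (X_sub_C_ne_zero α),
        Cv.glob.val_poly pp_monic.ne_zero, natDegree_X_sub_C, Cv.pp_deg]
      calc _ ≤ WithZero.exp ((N : ℤ) * (1 : ℕ)) * (WithZero.exp n * WithZero.exp l) /
            WithZero.exp ((N : ℤ) * (s ^ 2 - s : ℕ)) ^ 3 := by
            gcongr
            all_goals first | exact zero_le | exact hh.2.1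
        _ ≤ _ := by
            rw [← WithZero.exp_nsmul, ← WithZero.exp_add, ← WithZero.exp_add, ← WithZero.exp_sub,
              WithZero.exp_le_exp, hn]
            push_cast
            rw [nsmul_eq_mul]
            push_cast
            linarith
    have hz : a₁ * P₁ + a₂ * P₂ = 0 := by
      by_contra hne
      have h1 := (Cv.glob.trace_le e₁).trans hwe
      rw [← hpoly, ← IsScalarTower.algebraMap_apply, Cv.glob.val_poly hne, ← WithZero.exp_add,
        WithZero.exp_le_exp] at h1
      have : (0 : ℤ) ≤ N * (a₁ * P₁ + a₂ * P₂).natDegree := by positivity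
      linarith
    rw [hz, map_zero] at hpoly
    have h3 : algebraMap F[X] (RatFunc F) (X - C α) * Algebra.trace (RatFunc F) K r = 0 := by
      rw [← trace_poly_mul, show algebraMap F[X] K (X - C α) * r =
        algebraMap F[X] K (b ^ 2) * e₁ by rw [he₁, hr, map_pow, ← hB]; field_simp, trace_poly_mul,
        ← hpoly, mul_zero]
    refine (mul_eq_zero.mp h3).resolve_left ?_
    rw [map_eq_zero_iff _ (IsFractionRing.injective F[X] (RatFunc F))]
    exact X_sub_C_ne_zero α
  -- hence it lies in the trace dual, against the local bound at `P`
  have hrd : InDual F[X] (RatFunc F) r := by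
    intro u hu
    obtain ⟨c, hc⟩ := Cv.residue_at P α hα (by
      rw [hxα, ← WithZero.exp_zero, WithZero.exp_lt_exp]; norm_num) u (Cv.le_one P u hu)
    rw [hxα] at hc
    have h_integral : IsIntegral F[X] (r * (u - algebraMap F K c)) := by
      refine Cv.isIntegral _ fun Q => ?_
      rw [map_mul]
      by_cases hQP : Q = P
      · rw [hQP, hrP]
        refine (mul_le_mul_right hc _).trans ?_
        rw [← WithZero.exp_add]; simp
      · refine mul_le_one' (hrQ Q hQP) (Cv.le_one Q _ (hu.sub ?_))
        rw [← Cv.algebraMap_C]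
        exact isIntegral_algebraMap
    obtain ⟨P₃, hP₃⟩ := trace_integral h_integral
    refine ⟨P₃, ?_⟩
    rw [hP₃, show r * u = r * (u - algebraMap F K c) + algebraMap F[X] K (C c) * r by
      rw [Cv.algebraMap_C]; ring, map_add, trace_poly_mul, htr, mul_zero, add_zero]
  have h4 := Cv.dual_le P r hrd
  rw [← hB, hbP, hrP, one_pow, mul_one, ← WithZero.exp_zero, WithZero.exp_le_exp] at h4
  norm_num at h4

end Curve

/-! ### Derivations and Wronskians in characteristic `p` -/

section Roots

variable {F K : Type*} [Field F] [Fintype F] [Field K] [Algebra F K]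
    [Algebra F[X] K] [IsScalarTower F F[X] K]
    [Algebra (RatFunc F) K] [IsScalarTower F[X] (RatFunc F) K] [FiniteDimensional (RatFunc F) K]
    [Algebra.IsSeparable (RatFunc F) K]
    {p : ℕ} [Fact p.Prime] [CharP F p] [CharP K p] (D : Derivation F K K)
    (hD : D (algebraMap F[X] K X) = 1)

variable (F K p) in
/-- Polynomials in `X` with coefficients in `K ^ p`. -/
noncomputable def frobEval : K[X] →+* K :=
  eval₂RingHom (frobenius K p) (algebraMap F[X] K X)

/-- `K` is generated by `X` over its subfield of `p`-th powers. -/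
lemma frobEval_surjective (y : K) : ∃ f : K[X], frobEval F K p f = y := by
  have hpow : ∀ z : K, z ^ p ∈ (frobEval F K p).range := by
    intro z
    refine ⟨C z, ?_⟩
    simp [frobEval, frobenius_def]
  have hX : algebraMap F[X] K X ∈ (frobEval F K p).range := ⟨X, by simp [frobEval]⟩
  have hpoly : ∀ a : F[X], algebraMap F[X] K a ∈ (frobEval F K p).range := by
    intro a
    induction a using Polynomial.induction_on' with
    | add a a' h h' => rw [map_add]; exact add_mem h h'
    | monomial n c =>
      rw [← C_mul_X_pow_eq_monomial, map_mul, map_pow]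
      refine mul_mem ?_ (pow_mem hX n)
      obtain ⟨c', rfl⟩ := PerfectRing.bijective_frobenius (R := F) (p := p) |>.2 c
      change algebraMap F[X] K (C (c' ^ p)) ∈ _
      rw [C_pow, map_pow]
      exact hpow _
  have hrat : ∀ a : RatFunc F, algebraMap (RatFunc F) K a ∈ (frobEval F K p).range := by
    intro a
    obtain ⟨f, g, hg, rfl⟩ := IsFractionRing.div_surjective (A := F[X]) a
    have hg0 : algebraMap F[X] K g ≠ 0 := by
      rw [IsScalarTower.algebraMap_apply F[X] (RatFunc F) K, Ne,
        map_eq_zero_iff _ (algebraMap (RatFunc F) K).injective,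
        map_eq_zero_iff _ (IsFractionRing.injective F[X] (RatFunc F))]
      exact nonZeroDivisors.ne_zero hg
    rw [map_div₀, ← IsScalarTower.algebraMap_apply, ← IsScalarTower.algebraMap_apply]
    have h1 : algebraMap F[X] K f / algebraMap F[X] K g =
        algebraMap F[X] K (f * g ^ (p - 1)) * ((algebraMap F[X] K g)⁻¹) ^ p := by
      have hp : p = (p - 1) + 1 := by have := (Fact.out : p.Prime).pos; omega
      rw [map_mul, map_pow]
      conv_rhs => rw [hp]
      rw [Nat.add_sub_cancel, inv_pow, pow_succ]
      field_simp
    rw [h1]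
    exact mul_mem (hpoly _) (hpow _)
  let S : Subalgebra (RatFunc F) K :=
    { (frobEval F K p).range with algebraMap_mem' := hrat }
  have hexp : ExpChar (RatFunc F) p := by
    have : CharP (RatFunc F) p := charP_of_injective_algebraMap (algebraMap F (RatFunc F)).injective p
    exact ExpChar.prime Fact.out
  have hadj := IntermediateField.adjoin_eq_adjoin_pow_expChar_pow_of_isSeparable (RatFunc F) K
    ({y} : Set K) p 1
  rw [Set.image_singleton, pow_one] at hadj
  have hy : y ∈ IntermediateField.adjoin (RatFunc F) ({y} : Set K) :=
    IntermediateField.mem_adjoin_simple_self _ y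
  rw [hadj, ← IntermediateField.mem_toSubalgebra,
    IntermediateField.adjoin_simple_toSubalgebra_of_isAlgebraic
      (Algebra.IsAlgebraic.isAlgebraic _)] at hy
  have hle : Algebra.adjoin (RatFunc F) ({y ^ p} : Set K) ≤ S := by
    rw [Algebra.adjoin_le_iff, Set.singleton_subset_iff]
    exact hpow y
  exact hle hy

include hD

lemma D_frobEval (f : K[X]) : D (frobEval F K p f) = frobEval F K p (derivative f) := by
  induction f using Polynomial.induction_on' with
  | add a a' h h' => rw [map_add, map_add, map_add, map_add, h, h']
  | monomial n c =>
    rw [derivative_monomial, frobEval]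
    simp only [coe_eval₂RingHom, eval₂_monomial]
    rw [Derivation.leibniz, Derivation.leibniz_pow, hD, frobenius_def, Derivation.leibniz_pow,
      map_mul, map_natCast, frobenius_def, nsmul_eq_mul, nsmul_eq_mul, CharP.cast_eq_zero K p]
    simp only [smul_eq_mul]
    ring

lemma frobEval_eq_zero {n : ℕ} {f : K[X]} (hn : n < p) (hf : f.natDegree ≤ n)
    (h0 : frobEval F K p f = 0) : f = 0 := by
  induction n generalizing f with
  | zero =>
    rw [eq_C_of_natDegree_le_zero hf] at h0 ⊢
    simp only [frobEval, coe_eval₂RingHom, eval₂_C, frobenius_def] at h0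
    rw [pow_eq_zero_iff (Fact.out : p.Prime).ne_zero] at h0
    rw [h0, C_0]
  | succ n ih =>
    have h1 := D_frobEval (p := p) D hD f
    rw [h0, map_zero] at h1
    have h2 := ih (f := derivative f) (by omega) ((natDegree_derivative_le f).trans (by omega)) h1.symm
    have h3 : f.natDegree ≤ 0 := by
      by_contra! hpos
      have h4 := congrArg (fun g => coeff g (f.natDegree - 1)) h2
      simp only [coeff_derivative, coeff_zero] at h4
      rw [Nat.sub_add_cancel hpos] at h4
      rcases mul_eq_zero.mp h4 with h5 | h5
      · rw [← leadingCoeff, leadingCoeff_eq_zero] at h5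
        rw [h5] at hpos; simp at hpos
      · have h6 : ((f.natDegree : ℕ) : K) = 0 := by
          rw [← h5]; conv_lhs => rw [← Nat.sub_add_cancel hpos]
          push_cast; ring
        rw [CharP.cast_eq_zero_iff K p] at h6
        have := Nat.le_of_dvd hpos h6
        omega
    rw [eq_C_of_natDegree_le_zero h3] at h0 ⊢
    simp only [frobEval, coe_eval₂RingHom, eval₂_C, frobenius_def] at h0
    rw [pow_eq_zero_iff (Fact.out : p.Prime).ne_zero] at h0
    rw [h0, C_0]

variable (p) in
/-- The kernel of `d/dX` consists of `p`-th powers. -/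
lemma exists_pth_root {y : K} (hy : D y = 0) : ∃ u : K, u ^ p = y := by
  have hp0 := (Fact.out : p.Prime).pos
  obtain ⟨f, hf⟩ := frobEval_surjective (F := F) (p := p) y
  set x := algebraMap F[X] K X
  have hm : (X ^ p - C x : K[X]).Monic := monic_X_pow_sub_C x (by omega)
  have hmz : frobEval F K p (X ^ p - C x) = 0 := by
    simp [frobEval, frobenius_def, x]
  have hf' : frobEval F K p (f %ₘ (X ^ p - C x)) = y := by
    have := congrArg (frobEval F K p) (modByMonic_add_div f (X ^ p - C x))
    rw [map_add, map_mul, hmz, zero_mul, add_zero, hf] at this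
    exact this
  set g := f %ₘ (X ^ p - C x)
  have hdeg : g.natDegree < p := by
    have := natDegree_modByMonic_lt f hm (by
      intro h; have := congrArg natDegree h; rw [natDegree_X_pow_sub_C, natDegree_one] at this; omega)
    rwa [natDegree_X_pow_sub_C] at this
  have hg' : derivative g = 0 := by
    refine frobEval_eq_zero (n := g.natDegree) D hD hdeg
      ((natDegree_derivative_le g).trans (by omega)) ?_
    rw [← D_frobEval D hD, hf', hy]
  have hconst : g = C (g.coeff 0) := by
    ext i
    rw [coeff_C]
    split_ifs with hi
    · rw [hi]
    · obtain ⟨j, rfl⟩ := Nat.exists_eq_succ_of_ne_zero hi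
      by_cases hj : j + 1 < p
      · have h4 := congrArg (fun g => coeff g j) hg'
        simp only [coeff_derivative, coeff_zero] at h4
        refine (mul_eq_zero.mp h4).resolve_right fun h5 => ?_
        have h6 : ((j + 1 : ℕ) : K) = 0 := by push_cast; exact h5
        rw [CharP.cast_eq_zero_iff K p] at h6
        have := Nat.le_of_dvd (by omega) h6
        omega
      · exact coeff_eq_zero_of_natDegree_lt (by omega)
  refine ⟨g.coeff 0, ?_⟩
  rw [← hf', hconst]
  simp [frobEval, frobenius_def]

end Roots

section Wronskian

variable {F K : Type*} [Field F] [Fintype F] [Field K] [Algebra F K]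
    {p : ℕ} [Fact p.Prime] [CharP K p] (D : Derivation F K K)

/-- A space of functions of dimension at least two that is closed under extracting `p`-th roots of
ratios contains two functions with nonzero Wronskian. -/
lemma exists_wronskian (w : Valuation K ℤᵐ⁰)
    (hres : ∀ f, w f ≤ 1 → ∃ c : F, w (f - algebraMap F K c) < 1)
    (hroot : ∀ y : K, D y = 0 → ∃ u, u ^ p = y)
    (H : Submodule F K) [FiniteDimensional F H] (hdim : 2 ≤ Module.finrank F H)
    (hH : ∀ h u : K, h ∈ H → h * u ^ p ∈ H → h * u ∈ H) :
    ∃ h₁ ∈ H, ∃ h₂ ∈ H, h₁ * D h₂ - h₂ * D h₁ ≠ 0 := by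
  by_contra! hW
  have hp2 := (Fact.out : p.Prime).two_le
  have hne : H ≠ ⊥ := by
    rintro rfl; rw [finrank_bot] at hdim; omega
  obtain ⟨h₁, hh₁, h0⟩ := Submodule.exists_mem_ne_zero_of_ne_bot hne
  have hfin : Finite H := Module.finite_of_finite F
  -- ratios of elements of `H` to `h₁`
  let Z : Submodule F K := H.comap (LinearMap.mulLeft F h₁)
  have hZ : ∀ z, z ∈ Z ↔ h₁ * z ∈ H := fun z => Iff.rfl
  have hZfin : Finite Z := Finite.of_injective (fun z : Z => (⟨h₁ * z.1, z.2⟩ : H)) (by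
    intro z z' h
    exact Subtype.ext (mul_left_cancel₀ h0 (congrArg Subtype.val h)))
  have hrootZ : ∀ z : Z, ∃ u : Z, u.1 ^ p = z.1 := by
    intro z
    have h1 := hW h₁ hh₁ (h₁ * z) z.2
    have h2 : D z.1 = 0 := by
      rw [Derivation.leibniz] at h1
      simp only [smul_eq_mul] at h1
      have : h₁ ^ 2 * D z.1 = 0 := by rw [← h1]; ring
      exact (mul_eq_zero.mp this).resolve_left (pow_ne_zero _ h0)
    obtain ⟨u, hu⟩ := hroot _ h2
    exact ⟨⟨u, hH h₁ u hh₁ (by rw [hu]; exact z.2)⟩, hu⟩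
  choose ρ hρ using hrootZ
  have hρinj : Function.Injective ρ := by
    intro z z' h
    apply Subtype.ext
    rw [← hρ z, ← hρ z', h]
  have hfix : ∀ z : Z, ∃ n : ℕ, 2 ≤ n ∧ z.1 ^ n = z.1 := by
    intro z
    obtain ⟨j, hj, hper⟩ := hρinj.mem_periodicPts z
    have hiter : ∀ (i : ℕ) (z : Z), (ρ^[i] z).1 ^ p ^ i = z.1 := by
      intro i
      induction i with
      | zero => intro z; simp
      | succ i ih =>
        intro z
        rw [Function.iterate_succ_apply', pow_succ', pow_mul, hρ, ih]
    refine ⟨p ^ j, ?_, ?_⟩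
    · exact hp2.trans (Nat.le_self_pow (by omega) p)
    · have := hiter j z
      rwa [hper] at this
  have h1Z : (1 : K) ∈ Z := by rw [hZ, mul_one]; exact hh₁
  -- every ratio is a constant
  have hconst : ∀ z ∈ Z, ∃ c : F, z = algebraMap F K c := by
    intro z hz
    have hle : w z ≤ 1 := by
      by_contra! hgt
      obtain ⟨n, hn, hzn⟩ := hfix ⟨z, hz⟩
      have h2 := congrArg w hzn
      rw [map_pow] at h2
      have h3 : w z ^ 1 < w z ^ n := pow_lt_pow_right₀ hgt (by omega)
      rw [h2, pow_one] at h3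
      exact lt_irrefl _ h3
    obtain ⟨c, hc⟩ := hres z hle
    refine ⟨c, ?_⟩
    have hz' : z - algebraMap F K c ∈ Z := by
      refine Z.sub_mem hz ?_
      rw [Algebra.algebraMap_eq_smul_one]
      exact Z.smul_mem c h1Z
    obtain ⟨n, hn, hzn⟩ := hfix ⟨_, hz'⟩
    by_contra hne
    have h2 := congrArg w hzn
    rw [map_pow] at h2
    have h3 : w (z - algebraMap F K c) ^ n < w (z - algebraMap F K c) ^ 1 :=
      pow_lt_pow_right_of_lt_one₀ (zero_lt_iff.mpr ((Valuation.ne_zero_iff w).mpr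
        (sub_ne_zero.mpr hne))) hc (by omega)
    rw [pow_one] at h3
    exact absurd h2 h3.ne
  have hle : H ≤ Submodule.span F {h₁} := by
    intro h hh
    obtain ⟨c, hc⟩ := hconst (h / h₁) (by rw [hZ, mul_div_cancel₀ _ h0]; exact hh)
    rw [Submodule.mem_span_singleton]
    refine ⟨c, ?_⟩
    rw [Algebra.smul_def, ← hc, div_mul_cancel₀ _ h0]
  have := Submodule.finrank_mono hle
  rw [finrank_span_singleton h0] at this
  omega

end Wronskian

/-! ### Enlarging the set `Y` -/

namespace Curve

variable {F K ι : Type*} [Field F] [Fintype F] [DecidableEq F] [Field K] [Algebra F K]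
    [Algebra F[X] K] [IsScalarTower F F[X] K]
    [Algebra (RatFunc F) K] [IsScalarTower F[X] (RatFunc F) K] [FiniteDimensional (RatFunc F) K]
    {v : ι → Valuation K ℤᵐ⁰} {w : Valuation K ℤᵐ⁰}
    {N s : ℕ} {e e' : ℕ → K} {D : Derivation F K K} {b : F[X]}
    (Cv : Curve v w N s e e' D b)

include Cv

lemma D_le_one {P : ι} (hP : v P (algebraMap F[X] K (pp b)) < 1) {f : K} (hf : v P f ≤ 1) :
    v P (D f) ≤ 1 := by
  obtain ⟨α, -, -, -, hb⟩ := Cv.at_point hP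
  have := Cv.deriv_le P f hf
  rwa [hb, one_pow, mul_one] at this

lemma D_lt_one {P : ι} (hP : v P (algebraMap F[X] K (pp b)) < 1) {f : K}
    (hf : v P f ≤ WithZero.exp (-2)) : v P (D f) < 1 := by
  obtain ⟨α, -, hx, -, -⟩ := Cv.at_point hP
  set t := algebraMap F[X] K (X - C α) with ht
  have ht0 : t ≠ 0 := by
    intro h; rw [h, map_zero] at hx; exact WithZero.exp_ne_zero hx.symm
  have hDt : D t = 1 := by
    rw [ht, map_sub, map_sub, Cv.D_X, Cv.algebraMap_C, Derivation.map_algebraMap, sub_zero]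
  have hft : v P (f / t) ≤ WithZero.exp (-1) := by
    rw [map_div₀, hx]
    rw [div_le_iff₀ (by simp [WithZero.exp_ne_zero, zero_lt_iff]), ← WithZero.exp_add]
    exact hf
  have hlt : (WithZero.exp (-1) : ℤᵐ⁰) < 1 := by
    rw [← WithZero.exp_zero, WithZero.exp_lt_exp]; norm_num
  have : D f = t * D (f / t) + f / t := by
    conv_lhs => rw [show f = t * (f / t) by field_simp]
    rw [Derivation.leibniz, hDt, smul_eq_mul, smul_eq_mul, mul_one]
  rw [this]
  refine ((v P).map_add _ _).trans_lt (max_lt ?_ (hft.trans_lt hlt))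
  rw [map_mul, hx]
  exact (mul_le_of_le_one_right' (Cv.D_le_one hP (hft.trans hlt.le))).trans_lt hlt

lemma residue_lt {P : ι} (hP : v P (algebraMap F[X] K (pp b)) < 1) (f : K) (hf : v P f ≤ 1) :
    ∃ c : F, v P (f - algebraMap F K c) < 1 := by
  obtain ⟨α, hα, hx, -, -⟩ := Cv.at_point hP
  have hlt : v P (algebraMap F[X] K (X - C α)) < 1 := by
    rw [hx, ← WithZero.exp_zero, WithZero.exp_lt_exp]; norm_num
  obtain ⟨c, hc⟩ := Cv.residue_at P α hα hlt f hf
  exact ⟨c, hc.trans_lt hlt⟩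

/-- If a point `P` cannot be added to `Y`, then all Wronskians of elements of `H` vanish at `P`. -/
lemma wronskian_lt_one {n l : ℤ} (hn : n = 3 * ((s ^ 2 - s : ℕ) * N) - 2) (hl : l ≤ 0)
    [DecidableEq ι] {Y : Finset ι} {P : ι} (hP : v P (algebraMap F[X] K (pp b)) < 1)
    (hA : ∀ f, InA v w b n Y f → f = 0) {H : Submodule F K}
    (hH : ∀ h, h ∈ H ↔ InH (F := F) v w l Y h)
    {f : K} (hf : InA v w b n (insert P Y) f) (hf0 : f ≠ 0) {h₁ h₂ : K} (hh₁ : h₁ ∈ H)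
    (hh₂ : h₂ ∈ H) : v P (h₁ * D h₂ - h₂ * D h₁) < 1 := by
  have hvf0 : v P f ≠ 0 := (Valuation.ne_zero_iff _).mpr hf0
  have hf3 : ¬ v P f ≤ WithZero.exp (-3) := by
    intro h3
    refine hf0 (hA f ⟨hf.1, hf.2.1, fun Q hQ => ⟨(hf.2.2 Q hQ).1, fun hQY => ?_⟩⟩)
    by_cases hQP : Q = P
    · rw [hQP]; exact h3
    · exact (hf.2.2 Q hQ).2 (by simp [hQP, hQY])
  have hres : ∀ h ∈ H, v P (f * h) ≠ WithZero.exp (-2) := by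
    intro h hh heq
    refine Cv.residue_contra hn hl hP (Y := Y) (f := f) (h := h) ?_ hf.1 hf.2.1 ((hH h).mp hh) heq
    intro Q hQP hQ
    exact ⟨(hf.2.2 Q hQ).1, fun hQY => (hf.2.2 Q hQ).2 (by simp [hQP, hQY])⟩
  have hle : ∀ h ∈ H, v P h ≤ 1 := fun h hh => Cv.dual_le_one hP ((hH h).mp hh).1
  have hcase : v P f = WithZero.exp (-1) ∨ v P f = WithZero.exp (-2) := by
    have h1 := (hf.2.2 P hP).1
    rw [← WithZero.exp_log hvf0] at h1 hf3 ⊢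
    rw [WithZero.exp_le_exp] at h1 hf3
    rw [WithZero.exp_inj, WithZero.exp_inj]
    omega
  have hsub : ∀ {a c : K}, v P a < 1 → v P c < 1 → v P (a - c) < 1 := fun ha hc =>
    ((v P).map_sub _ _).trans_lt (max_lt ha hc)
  rcases hcase with hc | hc
  · -- elements of `H` vanishing at `P` vanish twice
    have htwo : ∀ h ∈ H, v P h < 1 → v P h ≤ WithZero.exp (-2) := by
      intro h hh hlt
      by_contra! hgt
      refine hres h hh ?_
      have : v P h = WithZero.exp (-1) := by
        refine le_antisymm ?_ ?_
        · exact (Glob.lt_exp_iff (k := 0)).mp (by rwa [WithZero.exp_zero])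
        · by_contra! h2
          have := (Glob.lt_exp_iff (k := -1)).mp h2
          exact absurd hgt (not_lt.mpr this)
      rw [map_mul, hc, this, ← WithZero.exp_add]; norm_num
    have hmain : ∀ g ∈ H, ∀ h ∈ H, v P h < 1 → v P (g * D h - h * D g) < 1 := by
      intro g hg h hh hlt
      refine hsub ?_ ?_
      · rw [map_mul]
        exact (mul_le_of_le_one_left' (hle g hg)).trans_lt (Cv.D_lt_one hP (htwo h hh hlt))
      · rw [map_mul]
        exact (mul_le_of_le_one_right' (Cv.D_le_one hP (hle g hg))).trans_lt hlt
    by_cases h1 : v P h₁ < 1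
    · rw [show h₁ * D h₂ - h₂ * D h₁ = -(h₂ * D h₁ - h₁ * D h₂) by ring, Valuation.map_neg]
      exact hmain h₂ hh₂ h₁ hh₁ h1
    · have h1' : v P h₁ = 1 := le_antisymm (hle h₁ hh₁) (not_lt.mp h1)
      obtain ⟨c, hc⟩ := Cv.residue_lt hP (h₂ / h₁) (by
        rw [map_div₀, h1', div_one]; exact hle h₂ hh₂)
      have h10 : h₁ ≠ 0 := by rintro rfl; simp at h1'
      have h0 : h₂ - c • h₁ ∈ H := H.sub_mem hh₂ (H.smul_mem c hh₁)
      have := hmain h₁ hh₁ (h₂ - c • h₁) h0 (by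
        rw [Algebra.smul_def, show h₂ - algebraMap F K c * h₁ = (h₂ / h₁ - algebraMap F K c) * h₁ by
          field_simp, map_mul, h1', mul_one]
        exact hc)
      rw [map_sub D, D.map_smul, Algebra.smul_def, Algebra.smul_def] at this
      convert this using 2
      ring
  · have hone : ∀ h ∈ H, v P h < 1 := by
      intro h hh
      refine lt_of_le_of_ne (hle h hh) fun h1 => hres h hh ?_
      rw [map_mul, hc, h1, mul_one]
    refine hsub ?_ ?_
    · rw [map_mul]
      exact (mul_le_of_le_one_right' (Cv.D_le_one hP (hle _ hh₂))).trans_lt (hone _ hh₁)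
    · rw [map_mul]
      exact (mul_le_of_le_one_right' (Cv.D_le_one hP (hle _ hh₁))).trans_lt (hone _ hh₂)

/-- A Wronskian of two elements of the trace dual that vanishes at all evaluation points is zero. -/
lemma wronskian_eq_zero (hs : 7 ≤ s) {l : ℤ} (hl : l ≤ 0) {h₁ h₂ : K}
    (hd₁ : InDual F[X] (RatFunc F) h₁) (hd₂ : InDual F[X] (RatFunc F) h₂)
    (hw₁ : w h₁ ≤ WithZero.exp l) (hw₂ : w h₂ ≤ WithZero.exp l)
    (hW : ∀ P, v P (algebraMap F[X] K (pp b)) < 1 → v P (h₁ * D h₂ - h₂ * D h₁) < 1) :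
    h₁ * D h₂ - h₂ * D h₁ = 0 := by
  have hp0 := Cv.pp_ne
  have hb0 : algebraMap F[X] K b ≠ 0 := by
    rw [Ne, map_eq_zero_iff _ Cv.glob.poly_injective]; exact Cv.b_ne
  set p := algebraMap F[X] K (pp b) with hp
  set B := algebraMap F[X] K b with hB
  set W := h₁ * D h₂ - h₂ * D h₁ with hWdef
  have hg : ∀ {h}, InDual F[X] (RatFunc F) h → ∀ Q, v Q (B ^ 2 * h) ≤ 1 := by
    intro h hh Q
    rw [map_mul, map_pow, mul_comm]
    exact Cv.dual_le Q h hh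
  have hBW : B ^ 6 * W = (B ^ 2 * h₁) * (D (B ^ 2 * h₂) * B ^ 2) -
      (B ^ 2 * h₂) * (D (B ^ 2 * h₁) * B ^ 2) := by
    rw [Derivation.leibniz, Derivation.leibniz]
    simp only [smul_eq_mul, hWdef]
    ring
  have hBW1 : ∀ Q, v Q (B ^ 6 * W) ≤ 1 := by
    intro Q
    rw [hBW]
    refine ((v Q).map_sub _ _).trans (max_le ?_ ?_)
    · rw [map_mul]
      refine mul_le_one' (hg hd₁ Q) ?_
      rw [map_mul, map_pow]
      exact (Cv.deriv_le Q _ (hg hd₂ Q))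
    · rw [map_mul]
      refine mul_le_one' (hg hd₂ Q) ?_
      rw [map_mul, map_pow]
      exact (Cv.deriv_le Q _ (hg hd₁ Q))
  have h_integral : IsIntegral F[X] (B ^ 6 * W / p) := by
    refine Cv.isIntegral _ fun Q => ?_
    rw [map_div₀]
    by_cases hQ : v Q p < 1
    · obtain ⟨-, -, -, hpQ, hbQ⟩ := Cv.at_point hQ
      rw [map_mul, map_pow, hbQ, one_pow, one_mul]
      refine div_le_one_of_le₀ ?_ zero_le
      rw [hpQ]
      exact (Glob.lt_exp_iff (k := 0)).mp (by rw [WithZero.exp_zero]; exact hW Q hQ)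
    · rw [le_antisymm (Cv.poly_le Q _) (not_lt.mp hQ), div_one]
      exact hBW1 Q
  have hwW : w W ≤ WithZero.exp (2 * l - 1) := by
    have hD : ∀ {h h'}, w h ≤ WithZero.exp l → w h' ≤ WithZero.exp l →
        w (h * D h') ≤ WithZero.exp (2 * l - 1) := by
      intro h h' hh hh'
      rw [map_mul, show 2 * l - 1 = l + (l + -1) by ring, WithZero.exp_add, WithZero.exp_add]
      exact mul_le_mul' hh ((Cv.w_D h').trans (mul_le_mul_left hh' _))
    exact (w.map_sub _ _).trans (max_le (hD hw₁ hw₂) (hD hw₂ hw₁))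
  have hz := Cv.glob.eq_zero_of_lt_one h_integral (by
    rw [map_div₀, div_lt_one₀ (zero_lt_iff.mpr ((Valuation.ne_zero_iff _).mpr hp0)), map_mul,
      map_pow, hp, hB, Cv.glob.val_poly pp_monic.ne_zero, Cv.glob.val_poly Cv.b_ne, Cv.pp_deg,
      Cv.b_deg]
    refine (mul_le_mul_right hwW _).trans_lt ?_
    rw [← WithZero.exp_nsmul, ← WithZero.exp_add, WithZero.exp_lt_exp]
    have h1 : 6 * s ≤ s ^ 2 - s := by
      have : 7 * s ≤ s ^ 2 := by rw [pow_two]; exact Nat.mul_le_mul_right s hs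
      omega
    have h2 : (6 * s : ℤ) ≤ (s ^ 2 - s : ℕ) := by exact_mod_cast h1
    have h3 : (N : ℤ) * (6 * s) ≤ N * (s ^ 2 - s : ℕ) := mul_le_mul_of_nonneg_left h2 (by positivity)
    rw [nsmul_eq_mul]
    push_cast at h3 ⊢
    linarith)
  rw [div_eq_zero_iff] at hz
  exact ((mul_eq_zero.mp (hz.resolve_right hp0)).resolve_left (pow_ne_zero _ hb0))

/-- The space `H` exists and its dimension is bounded below by Riemann-Roch. -/
lemma exists_H {l g : ℤ} {Y : Finset ι} (hY : ∀ P ∈ Y, v P (algebraMap F[X] K (pp b)) < 1)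
    (hfin : FiniteDimensional F (dualSub F K ⊓ Cv.glob.ball l : Submodule F K))
    (hdim : l + 1 + g ≤ Module.finrank F (dualSub F K ⊓ Cv.glob.ball l : Submodule F K)) :
    ∃ H : Submodule F K, (∀ h, h ∈ H ↔ InH (F := F) v w l Y h) ∧ FiniteDimensional F H ∧
      l + 1 + g - 2 * Y.card ≤ Module.finrank F H := by
  obtain ⟨V₁, hV₁, hdim₁⟩ := finrank_cut v Y (fun P _ c hc => Cv.val_const P c hc)
    (fun P hP => Cv.residue_lt (hY P hP)) (dualSub F K ⊓ Cv.glob.ball l) (t := 1) one_ne_zero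
    (fun P hP f hf => by rw [map_one]; exact Cv.dual_le_one (hY P hP) hf.1)
  have hfin₁ : FiniteDimensional F V₁ :=
    Submodule.finiteDimensional_of_le (S₂ := dualSub F K ⊓ Cv.glob.ball l)
      fun f hf => ((hV₁ f).mp hf).1
  have hpv : ∀ P ∈ Y, v P (algebraMap F[X] K (pp b)) = WithZero.exp (-1) := fun P hP => by
    obtain ⟨-, -, -, h, -⟩ := Cv.at_point (hY P hP); exact h
  have hlt1 : ∀ x : ℤᵐ⁰, x < 1 ↔ x ≤ WithZero.exp (-1) := fun x => by
    have := Glob.lt_exp_iff (x := x) (k := 0)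
    rwa [WithZero.exp_zero, zero_sub] at this
  obtain ⟨V₂, hV₂, hdim₂⟩ := finrank_cut v Y (fun P _ c hc => Cv.val_const P c hc)
    (fun P hP => Cv.residue_lt (hY P hP)) V₁ (t := algebraMap F[X] K (pp b)) Cv.pp_ne
    (fun P hP f hf => by
      rw [hpv P hP, ← hlt1, ← (v P).map_one]; exact ((hV₁ f).mp hf).2 P hP)
  refine ⟨V₂, ?_, ?_, ?_⟩
  · intro h
    rw [hV₂, hV₁]
    constructor
    · rintro ⟨⟨hd, -⟩, h2⟩
      refine ⟨hd.1, hd.2, fun P hP => ?_⟩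
      have := h2 P hP
      rw [hpv P hP, Glob.lt_exp_iff] at this
      exact this
    · rintro ⟨hd, hwl, h2⟩
      refine ⟨⟨⟨hd, hwl⟩, fun P hP => ?_⟩, fun P hP => ?_⟩
      · rw [map_one]
        refine (h2 P hP).trans_lt ?_
        rw [← WithZero.exp_zero, WithZero.exp_lt_exp]; norm_num
      · rw [hpv P hP, Glob.lt_exp_iff]; exact h2 P hP
  · exact Submodule.finiteDimensional_of_le (S₂ := V₁) fun f hf => ((hV₂ f).mp hf).1
  · omega

/-- The space `H` is closed under the `p`-th root extraction `h * u ^ p ↦ h * u`; this is where the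
integral closure of `F[X]` being a Prüfer domain is used. -/
lemma H_root {l : ℤ} {Y : Finset ι} {p : ℕ} (hp : 1 ≤ p) {h u : K} (hh : InH (F := F) v w l Y h)
    (hhu : InH (F := F) v w l Y (h * u ^ p)) : InH (F := F) v w l Y (h * u) := by
  have hval : ∀ (v : Valuation K ℤᵐ⁰) (c : ℤᵐ⁰), v h ≤ c → v (h * u ^ p) ≤ c → v (h * u) ≤ c := by
    intro v c h1 h2
    rcases le_total (v u) 1 with hu | hu
    · rw [map_mul]; exact (mul_le_of_le_one_right' hu).trans h1
    · refine le_trans ?_ h2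
      rw [map_mul, map_mul, map_pow]
      exact mul_le_mul_right (le_self_pow₀ hu (by omega)) _
  refine ⟨?_, hval w _ hh.2.1 hhu.2.1, fun P hP => hval (v P) _ (hh.2.2 P hP) (hhu.2.2 P hP)⟩
  obtain ⟨a, c, ha, hc, hu⟩ := Cv.prufer u p hp
  have : h * u = a * h + c * (h * u ^ p) := by
    conv_lhs => rw [hu]
    ring
  rw [this]
  refine (dualSub F K).add_mem (?_ : InDual F[X] (RatFunc F) _) (?_ : InDual F[X] (RatFunc F) _)
  · intro r hr
    obtain ⟨P, hP⟩ := hh.1 (a * r) (ha.mul hr)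
    exact ⟨P, by rw [hP]; congr 1; ring⟩
  · intro r hr
    obtain ⟨P, hP⟩ := hhu.1 (c * r) (hc.mul hr)
    exact ⟨P, by rw [hP]; congr 1; ring⟩

/-- The set `Y` can be enlarged by a point as long as `H` has dimension at least two. -/
lemma exists_step [Algebra.IsSeparable (RatFunc F) K] {p : ℕ} [Fact p.Prime] [CharP F p]
    [CharP K p] (hs : 7 ≤ s) {n l : ℤ} (hn : n = 3 * ((s ^ 2 - s : ℕ) * N) - 2) (hl : l ≤ 0)
    [DecidableEq ι] {Y : Finset ι} (hA : ∀ f, InA v w b n Y f → f = 0) {H : Submodule F K}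
    (hH : ∀ h, h ∈ H ↔ InH (F := F) v w l Y h) [FiniteDimensional F H]
    (hdim : 2 ≤ Module.finrank F H) :
    ∃ P, v P (algebraMap F[X] K (pp b)) < 1 ∧ P ∉ Y ∧ ∀ f, InA v w b n (insert P Y) f → f = 0 := by
  by_contra! hcon
  obtain ⟨h₁, hh₁, h₂, hh₂, hne⟩ := exists_wronskian (p := p) D w Cv.glob.residue
    (fun y hy => exists_pth_root p D Cv.D_X hy) H hdim (fun h u hh hhu => by
      rw [hH] at hh hhu ⊢
      exact Cv.H_root (Fact.out : p.Prime).one_le hh hhu)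
  refine hne (Cv.wronskian_eq_zero hs hl ((hH _).mp hh₁).1 ((hH _).mp hh₂).1 ((hH _).mp hh₁).2.1
    ((hH _).mp hh₂).2.1 fun P hP => ?_)
  by_cases hPY : P ∈ Y
  · have hone : ∀ h ∈ H, v P h < 1 := by
      intro h hh
      refine (((hH h).mp hh).2.2 P hPY).trans_lt ?_
      rw [← WithZero.exp_zero, WithZero.exp_lt_exp]; norm_num
    refine ((v P).map_sub _ _).trans_lt (max_lt ?_ ?_)
    · rw [map_mul]
      exact (mul_le_of_le_one_right' (Cv.D_le_one hP (hone _ hh₂).le)).trans_lt (hone _ hh₁)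
    · rw [map_mul]
      exact (mul_le_of_le_one_right' (Cv.D_le_one hP (hone _ hh₁).le)).trans_lt (hone _ hh₂)
  · obtain ⟨f, hf, hf0⟩ := hcon P hP hPY
    exact Cv.wronskian_lt_one hn hl hP hA hH hf hf0 hh₁ hh₂

end Curve

/-! ### The evaluation code -/

namespace Curve

variable {F K ι : Type*} [Field F] [Fintype F] [DecidableEq F] [Field K] [Algebra F K]
    [Algebra F[X] K] [IsScalarTower F F[X] K]
    [Algebra (RatFunc F) K] [IsScalarTower F[X] (RatFunc F) K] [FiniteDimensional (RatFunc F) K]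
    [Algebra.IsSeparable (RatFunc F) K] [IsScalarTower F (RatFunc F) K]
    {p : ℕ} [Fact p.Prime] [CharP F p] [CharP K p]
    {v : ι → Valuation K ℤᵐ⁰} {w : Valuation K ℤᵐ⁰}
    {N s : ℕ} {e e' : ℕ → K} {D : Derivation F K K} {b : F[X]}
    (Cv : Curve v w N s e e' D b)

include Cv

lemma b_sq_val : w (algebraMap F[X] K b ^ 2) = WithZero.exp (2 * ((s : ℤ) * N)) := by
  rw [map_pow, Cv.glob.val_poly Cv.b_ne, Cv.b_deg, ← WithZero.exp_nsmul]
  congr 1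
  rw [nsmul_eq_mul]; push_cast; ring

lemma b_sq_dual (h : K) (hh : InDual F[X] (RatFunc F) h) :
    IsIntegral F[X] (algebraMap F[X] K b ^ 2 * h) := by
  refine Cv.isIntegral _ fun Q => ?_
  rw [map_mul, map_pow, mul_comm]
  exact Cv.dual_le Q h hh

lemma InA_empty {n : ℤ} (hn : n = 3 * ((s ^ 2 - s : ℕ) * N) - 2) {f : K}
    (hf : InA v w b n ∅ f) : f = 0 := by
  have hp0 := Cv.pp_ne
  have h_integral : IsIntegral F[X] (f / algebraMap F[X] K (pp b) ^ 3) := by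
    refine Cv.isIntegral _ fun Q => ?_
    rw [map_div₀, map_pow]
    by_cases hQ : v Q (algebraMap F[X] K (pp b)) < 1
    · obtain ⟨-, -, -, hpQ, -⟩ := Cv.at_point hQ
      rw [hpQ, ← WithZero.exp_nsmul]
      exact div_le_one_of_le₀ ((hf.2.2 Q hQ).2 (Finset.notMem_empty _)) zero_le
    · rw [le_antisymm (Cv.poly_le Q _) (not_lt.mp hQ), one_pow, div_one]
      exact Cv.le_one Q f hf.1
  have hz := Cv.glob.eq_zero_of_lt_one h_integral (by
    rw [map_div₀, map_pow, Cv.glob.val_poly pp_monic.ne_zero, Cv.pp_deg, ← WithZero.exp_nsmul,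
      div_lt_one₀ (zero_lt_iff.mpr WithZero.exp_ne_zero)]
    refine hf.2.1.trans_lt ?_
    rw [WithZero.exp_lt_exp, hn, nsmul_eq_mul]
    push_cast
    linarith)
  rw [div_eq_zero_iff] at hz
  exact hz.resolve_right (pow_ne_zero _ hp0)

/-- Riemann–Roch for the trace dual keeps `H` of dimension at least two until `Y` has about `g / 2`
points. -/
lemma exists_Y (p : ℕ) [Fact p.Prime] [CharP F p] [CharP K p] (hs : 7 ≤ s) {n g : ℤ}
    (hn : n = 3 * ((s ^ 2 - s : ℕ) * N) - 2)
    (hdim : ∀ l : ℤ, l + 1 + g ≤ Module.finrank F (dualSub F K ⊓ Cv.glob.ball l : Submodule F K))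
    (j : ℕ) (hj : 2 * (j : ℤ) ≤ g + 1) :
    ∃ Y : Finset ι, Y.card = j ∧ (∀ P ∈ Y, v P (algebraMap F[X] K (pp b)) < 1) ∧
      ∀ f, InA v w b n Y f → f = 0 := by
  classical
  induction j with
  | zero => exact ⟨∅, rfl, by simp, fun f hf => Cv.InA_empty hn hf⟩
  | succ j ih =>
    push_cast at hj
    obtain ⟨Y, hYc, hY, hA⟩ := ih (by omega)
    -- this `l` makes the Riemann-Roch bound for `H` equal to two
    set l : ℤ := 2 * j + 1 - g with hl
    obtain ⟨H, hH, hfin, hd⟩ := Cv.exists_H hY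
      (Cv.glob.dual_le Cv.b_sq_val Cv.b_sq_dual l).1 (hdim l)
    obtain ⟨P, hP, hPY, hA'⟩ := Cv.exists_step (p := p) hs hn (by omega) hA hH (by omega)
    refine ⟨insert P Y, by rw [Finset.card_insert_of_notMem hPY, hYc], ?_, hA'⟩
    intro Q hQ
    rcases Finset.mem_insert.mp hQ with rfl | hQ
    · exact hP
    · exact hY Q hQ

/-- The evaluation code: functions vanishing on the complement of `Y`, evaluated on `Y` and to
first order off `Y`. -/
theorem exists_code (p : ℕ) [Fact p.Prime] [CharP F p] [CharP K p] (hs : 7 ≤ s) :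
    ∃ C : Submodule F (Fin ((s ^ 2 - s) * N) → F),
      (∀ c ∈ C, c ≠ 0 → ∀ c' ∈ C, c' ≠ 0 → ∃ i, c i ≠ 0 ∧ c' i ≠ 0) ∧
      (s ^ 2 - s) * N ≤ 2 * Module.finrank F C + s * N := by
  classical
  obtain ⟨g, hg0, hgγ, hri, hrd⟩ := Cv.glob.riemann_roch Cv.b_sq_val Cv.b_sq_dual
  obtain ⟨j, hj1, hj2⟩ : ∃ j : ℕ, 2 * (j : ℤ) ≤ g + 1 ∧ g ≤ 2 * j := by
    obtain ⟨a, rfl⟩ := Int.eq_ofNat_of_zero_le hg0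
    exact ⟨(a + 1) / 2, by omega, by omega⟩
  obtain ⟨Y, hYc, hY, hA⟩ := Cv.exists_Y p hs rfl hrd j hj1
  obtain ⟨T, hTc, hT⟩ := Cv.exists_T
  have hYT : Y ⊆ T := fun P hP => (hT P).mpr (hY P hP)
  obtain ⟨n', hn'⟩ : ∃ n', (s ^ 2 - s) * N = 2 * n' := by
    have : Even (s ^ 2 - s) := by
      rw [pow_two, ← Nat.mul_sub_one]
      exact Nat.even_mul_pred_self s
    obtain ⟨c, hc⟩ := this
    exact ⟨c * N, by rw [hc]; ring⟩
  set k : ℤ := 3 * n' - 1 with hk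
  have hn'Z : ((s ^ 2 - s : ℕ) * N : ℤ) = 2 * n' := by exact_mod_cast hn'
  have hfin := Cv.glob.int_finite k
  obtain ⟨V, hV, hVd⟩ := finrank_cut v (T \ Y) (fun P _ c hc => Cv.val_const P c hc)
    (fun P hP => Cv.residue_lt ((hT P).mp (Finset.mem_sdiff.mp hP).1))
    (intSub F K ⊓ Cv.glob.ball k) (t := 1) one_ne_zero
    (fun P _ f hf => by rw [map_one]; exact Cv.le_one P f hf.1)
  have hfinV : FiniteDimensional F V :=
    Submodule.finiteDimensional_of_le (S₂ := intSub F K ⊓ Cv.glob.ball k)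
      fun f hf => ((hV f).mp hf).1
  have hlt1 : ∀ x : ℤᵐ⁰, x < 1 ↔ x ≤ WithZero.exp (-1) := fun x => by
    have := Glob.lt_exp_iff (x := x) (k := 0)
    rwa [WithZero.exp_zero, zero_sub] at this
  have hpv : ∀ P ∈ T, v P (algebraMap F[X] K (pp b)) = WithZero.exp (-1) := fun P hP => by
    obtain ⟨-, -, -, h, -⟩ := Cv.at_point ((hT P).mp hP); exact h
  have hVoff : ∀ f ∈ V, ∀ P ∈ T, P ∉ Y → v P f ≤ WithZero.exp (-1) := by
    intro f hf P hP hPY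
    rw [← hlt1, ← (v P).map_one]
    exact ((hV f).mp hf).2 P (Finset.mem_sdiff.mpr ⟨hP, hPY⟩)
  have hVle : ∀ f ∈ V, ∀ P, v P f ≤ 1 := fun f hf P => Cv.le_one P f ((hV f).mp hf).1.1
  have hφ : ∀ P : T, ∃ φ : V →ₗ[F] F, ∀ f : V, φ f = 0 ↔
      v P f.1 < if P.1 ∈ Y then 1 else WithZero.exp (-1) := by
    intro P
    by_cases hPY : P.1 ∈ Y
    · obtain ⟨φ, hφ⟩ := exists_coef (v P.1) (fun c hc => Cv.val_const P.1 c hc)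
        (Cv.residue_lt ((hT P).mp P.2)) V (t := 1) one_ne_zero
        (fun f hf => by rw [map_one]; exact hVle f hf P)
      exact ⟨φ, fun f => by rw [hφ, if_pos hPY, map_one]⟩
    · obtain ⟨φ, hφ⟩ := exists_coef (v P.1) (fun c hc => Cv.val_const P.1 c hc)
        (Cv.residue_lt ((hT P).mp P.2)) V (t := algebraMap F[X] K (pp b)) Cv.pp_ne
        (fun f hf => by rw [hpv P P.2]; exact hVoff f hf P P.2 hPY)
      exact ⟨φ, fun f => by rw [hφ, if_neg hPY, hpv P P.2]⟩
  choose φ hφ using hφ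
  -- such a product vanishes on `Y` and to order three off `Y`, hence lies in the zero space `A_Y`
  have hprod : ∀ f f' : V, (∀ P, φ P f = 0 ∨ φ P f' = 0) → f.1 * f'.1 = 0 := by
    intro f f' hff
    have hf := ((hV f).mp f.2).1
    have hf' := ((hV f').mp f'.2).1
    refine hA _ ⟨hf.1.mul hf'.1, ?_, ?_⟩
    · rw [map_mul, show (3 * ((s ^ 2 - s : ℕ) * N) - 2 : ℤ) = k + k by rw [hn'Z, hk]; ring,
        WithZero.exp_add]
      exact mul_le_mul' hf.2 hf'.2
    · intro P hP
      have hPT := (hT P).mpr hP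
      have hd := hff ⟨P, hPT⟩
      rw [hφ, hφ] at hd
      by_cases hPY : P ∈ Y
      · refine ⟨?_, fun h => absurd hPY h⟩
        simp only [if_pos hPY] at hd
        rw [← hlt1, map_mul]
        rcases hd with hd | hd
        · exact (mul_le_of_le_one_right' (hVle f' f'.2 P)).trans_lt hd
        · exact (mul_le_of_le_one_left' (hVle f f.2 P)).trans_lt hd
      · have h3 : v P (f.1 * f'.1) ≤ WithZero.exp (-3) := by
          simp only [if_neg hPY, Glob.lt_exp_iff] at hd
          rw [map_mul]
          rcases hd with hd | hd
          · rw [show (-3 : ℤ) = (-1 - 1) + -1 by norm_num, WithZero.exp_add]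
            exact mul_le_mul' hd (hVoff f' f'.2 P hPT hPY)
          · rw [show (-3 : ℤ) = -1 + (-1 - 1) by norm_num, WithZero.exp_add]
            exact mul_le_mul' (hVoff f f.2 P hPT hPY) hd
        refine ⟨h3.trans ?_, fun _ => h3⟩
        rw [WithZero.exp_le_exp]; norm_num
  obtain ⟨σ⟩ : Nonempty (T ↪ Fin ((s ^ 2 - s) * N)) := by
    refine Function.Embedding.nonempty_of_card_le ?_
    rw [Fintype.card_coe, Fintype.card_fin]; exact hTc
  let ev : V →ₗ[F] (Fin ((s ^ 2 - s) * N) → F) :=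
    (Function.ExtendByZero.linearMap F σ).comp (LinearMap.pi φ)
  have hev : ∀ f P, ev f (σ P) = φ P f := by
    intro f P
    change Function.extend σ (fun P => φ P f) 0 (σ P) = _
    rw [σ.injective.extend_apply]
  have hinj : Function.Injective ev := by
    rw [injective_iff_map_eq_zero]
    intro f hf
    have := hprod f f fun P => Or.inl (by rw [← hev, hf]; rfl)
    exact Subtype.ext (mul_self_eq_zero.mp this)
  refine ⟨LinearMap.range ev, ?_, ?_⟩
  · rintro _ ⟨f, rfl⟩ hf _ ⟨f', rfl⟩ hf'
    by_contra! hcon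
    have := hprod f f' fun P => by
      by_contra! hne
      exact hne.2 (by rw [← hev]; exact hcon (σ P) (by rw [hev]; exact hne.1))
    rcases mul_eq_zero.mp this with h | h
    · exact hf (by rw [show f = 0 from Subtype.ext h, map_zero])
    · exact hf' (by rw [show f' = 0 from Subtype.ext h, map_zero])
  · rw [LinearMap.finrank_range_of_inj hinj]
    have h1 := hri k
    have h2 : (T \ Y).card + Y.card = T.card := Finset.card_sdiff_add_card_eq_card hYT
    have h3 : g ≤ ((s * N : ℕ) : ℤ) := by push_cast; exact hgγ
    generalize s * N = γ at *
    rw [hn'] at hTc ⊢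
    omega

end Curve

/-! ### From the tower to the code -/

section Dedekind

open IsDedekindDomain

variable {R K : Type*} [CommRing R] [IsDedekindDomain R] [Field K] [Algebra R K] [IsFractionRing R K]

/-- In a Dedekind domain the fractional ideals `(1, u)` and `(1, u ^ n)` satisfy
`u ∈ (1, u ^ n)`. -/
lemma dedekind_prufer (u : K) (n : ℕ) (hn : 1 ≤ n) :
    ∃ a c : R, u = algebraMap R K a + algebraMap R K c * u ^ n := by
  obtain ⟨n, rfl⟩ : ∃ k, n = k + 1 := ⟨n - 1, by omega⟩
  let I : Ideal R :=
    { carrier := {r | ∃ a c : R, algebraMap R K r * u = algebraMap R K a + algebraMap R K c * u ^ (n + 1)}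
      zero_mem' := ⟨0, 0, by simp⟩
      add_mem' := by
        rintro r r' ⟨a, c, h⟩ ⟨a', c', h'⟩
        refine ⟨a + a', c + c', ?_⟩
        rw [map_add, map_add, map_add, add_mul, h, h']; ring
      smul_mem' := by
        rintro t r ⟨a, c, h⟩
        refine ⟨t * a, t * c, ?_⟩
        rw [smul_eq_mul, map_mul, map_mul, map_mul, mul_assoc, h]; ring }
  have htop : I = ⊤ := by
    by_contra hI
    obtain ⟨M, hM, hIM⟩ := I.exists_le_maximal hI
    by_cases hM0 : M = ⊥
    · -- then `R` is a field, and every element of `K` is integral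
      have hfield : IsField R := by
        rw [hM0] at hM
        exact Ring.isField_iff_maximal_bot.mpr hM
      obtain ⟨r, hr⟩ := (IsFractionRing.surjective_iff_isField (R := R) (K := K)).mpr hfield u
      refine hI ((Ideal.eq_top_iff_one I).mpr ⟨r, 0, ?_⟩)
      rw [hr]; simp
    · let v : HeightOneSpectrum R := ⟨M, hM.isPrime, hM0⟩
      obtain ⟨x, d, h | h⟩ := v.exists_primeCompl_mul_eq_or_mul_eq (K := K) u
      · exact d.2 (hIM ⟨x, 0, by rw [mul_comm, h]; simp⟩)
      · have hd : (d : R) ^ n ∈ I := ⟨0, x ^ n, by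
          rw [map_zero, zero_add, map_pow, map_pow, ← h, mul_pow]; ring⟩
        exact d.2 (hM.isPrime.mem_of_pow_mem _ (hIM hd))
  obtain ⟨a, c, h⟩ := (Ideal.eq_top_iff_one I).mp htop
  exact ⟨a, c, by rw [← h, map_one, one_mul]⟩

end Dedekind

section TowerCurve

open IsDedekindDomain

universe u

variable {F : Type*} {K : Type u} [Field F] [Fintype F] [DecidableEq F] [Field K] [Algebra F K]
    [Algebra F[X] K] [IsScalarTower F F[X] K]
    [Algebra (RatFunc F) K] [IsScalarTower F[X] (RatFunc F) K]
    [FiniteDimensional (RatFunc F) K] [Algebra.IsSeparable (RatFunc F) K]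
    {p a s m : ℕ} [Fact p.Prime] [CharP F p] [CharP K p]
    (T : Tower F K s m) (hs : 2 ≤ s) (hsp : s = p ^ a) (hF : Fintype.card F = s ^ 2)

include hs hsp hF in
/-- The tower yields the function field data used in the code construction, with the places of the
integral closure of `F[X]`. -/
lemma exists_curve_of_tower : ∃ (ι : Type u) (v : ι → Valuation K ℤᵐ⁰) (e e' : ℕ → K),
    Curve v T.vinf (s ^ m) s e e' T.D (X ^ s + X : F[X]) := by
  obtain ⟨e, e', h1, h2, h3, h4, h5⟩ := T.exists_dualBasis (p := p) hs hsp
  have hinj : Function.Injective (algebraMap F[X] K) := by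
    rw [IsScalarTower.algebraMap_eq F[X] (RatFunc F) K]
    exact (algebraMap (RatFunc F) K).injective.comp (IsFractionRing.injective F[X] (RatFunc F))
  have hbdeg : (X ^ s + X : F[X]).natDegree = s := by
    rw [natDegree_add_eq_left_of_natDegree_lt] <;> simp; omega
  have hb0 : (X ^ s + X : F[X]) ≠ 0 := by
    intro h; rw [h, natDegree_zero] at hbdeg; omega
  have hbx : algebraMap F[X] K (X ^ s + X) = T.x 0 ^ s + T.x 0 := by
    rw [map_add, map_pow, T.x_zero]
  have hbx0 : T.x 0 ^ s + T.x 0 ≠ 0 := by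
    rw [← hbx, Ne, map_eq_zero_iff _ hinj]; exact hb0
  have hxα : ∀ α : F, algebraMap F[X] K (X - C α) = T.x 0 - algebraMap F K α := by
    intro α
    rw [map_sub, T.x_zero, IsScalarTower.algebraMap_apply F F[X] K]; rfl
  have heval : ∀ α : F, (X ^ s + X : F[X]).eval α = α ^ s + α := fun α => by simp
  let R := integralClosure F[X] K
  have : IsDedekindDomain R := integralClosure.isDedekindDomain F[X] (RatFunc F) K
  have : IsFractionRing R K := IsIntegralClosure.isFractionRing_of_finite_extension F[X] (RatFunc F) K R
  have : Module.Finite F[X] R := IsIntegralClosure.finite F[X] (RatFunc F) K R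
  have hinjR : Function.Injective (algebraMap F[X] R) := by
    intro x y hxy
    exact hinj (by rw [IsScalarTower.algebraMap_apply F[X] R K, hxy, ← IsScalarTower.algebraMap_apply])
  have : FaithfulSMul F[X] R := (faithfulSMul_iff_algebraMap_injective _ _).mpr hinjR
  have : NoZeroSMulDivisors F[X] R := ⟨fun {c x} h => by
    rw [Algebra.smul_def, mul_eq_zero, map_eq_zero_iff _ hinjR] at h; exact h⟩
  have hRint : ∀ r : R, IsIntegral F[X] (algebraMap R K r) := fun r => r.2
  have hle : ∀ (P : HeightOneSpectrum R) f, IsIntegral F[X] f → P.valuation K f ≤ 1 :=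
    fun P f hf => P.valuation_le_one (K := K) (⟨f, hf⟩ : R)
  have hv : ∀ (P : HeightOneSpectrum R) (f : F[X]), P.valuation K (algebraMap F[X] K f) ≤ 1 :=
    fun P f => hle P _ isIntegral_algebraMap
  have hmem : ∀ (P : HeightOneSpectrum R) (f : F[X]), P.valuation K (algebraMap F[X] K f) < 1 ↔
      algebraMap F[X] R f ∈ P.asIdeal := by
    intro P f
    rw [IsScalarTower.algebraMap_apply F[X] R K]
    exact P.valuation_lt_one_iff_mem (K := K) _
  have hnt : ∀ P : HeightOneSpectrum R, ∃ f : F[X], Irreducible f ∧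
      P.valuation K (algebraMap F[X] K f) < 1 := by
    intro P
    have hprime : (P.asIdeal.under F[X]).IsPrime := inferInstance
    have hne : P.asIdeal.under F[X] ≠ ⊥ := by
      intro h
      exact P.ne_bot (Ideal.eq_bot_of_comap_eq_bot (R := F[X]) h)
    obtain ⟨f, hf⟩ := IsPrincipalIdealRing.principal (P.asIdeal.under F[X])
    have hf' : P.asIdeal.under F[X] = Ideal.span {f} := hf
    have hf0 : f ≠ 0 := by
      rintro rfl; exact hne (by rw [hf']; simp)
    refine ⟨f, ?_, ?_⟩
    · rw [hf', Ideal.span_singleton_prime hf0] at hprime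
      exact hprime.irreducible
    · rw [hmem]
      have : f ∈ P.asIdeal.under F[X] := by rw [hf']; exact Ideal.mem_span_singleton_self f
      exact this
  refine ⟨HeightOneSpectrum R, fun P => P.valuation K, e, e', ?_⟩
  exact
  { glob :=
    { pos := by positivity
      const := T.vinf_const
      residue := T.residue
      val_X := by rw [← T.x_zero, T.vinf_x 0 (Nat.zero_le _), Nat.sub_zero]; norm_cast
      dual := h1
      val := h2
      val' := h3
      zero := h4
      rank := h5 }
    isIntegral := by
      intro f hf
      obtain ⟨r, rfl⟩ := HeightOneSpectrum.mem_integers_of_valuation_le_one (R := R) K f hf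
      exact hRint r
    le_one := hle
    unif := fun P => P.valuation_exists_uniformizer K
    prufer := by
      intro u n hn
      obtain ⟨a, c, h⟩ := dedekind_prufer (R := R) u n hn
      exact ⟨_, _, hRint a, hRint c, h⟩
    dual_le := by
      intro P h hh
      rw [hbx]
      exact Tower.local_dual (p := p) hs hsp hF (hv P) hbx0 (hnt P) hh
    deriv_le := by
      intro P f hf
      rw [hbx]
      exact Tower.local_deriv (p := p) hs hsp hF (hv P) hbx0 (hnt P) hf
    residue_at := by
      intro P α hα h f hf
      rw [hxα] at h ⊢
      rw [heval] at hα
      exact Tower.local_residue (p := p) hs hsp hF (hv P) hα h hf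
    D_X := by rw [← T.x_zero]; exact T.D_x
    w_D := T.vinf_D
    b_deg := hbdeg
    b_ne := hb0
    card_good := by
      simp only [heval]
      exact _root_.card_good hs hsp hF
    places := by
      intro α _
      have hmax : (Ideal.span {(X - C α : F[X])}).IsMaximal :=
        PrincipalIdealRing.isMaximal_of_irreducible (irreducible_X_sub_C α)
      have hne : Ideal.span {(X - C α : F[X])} ≠ ⊥ := by
        rw [Ne, Ideal.span_singleton_eq_bot]; exact X_sub_C_ne_zero α
      have hinj' : Function.Injective (HeightOneSpectrum.asIdeal (R := R)) := fun P Q h =>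
        HeightOneSpectrum.ext h
      refine ⟨(IsDedekindDomain.primesOverFinset (Ideal.span {(X - C α : F[X])}) R).preimage
        HeightOneSpectrum.asIdeal hinj'.injOn, ?_, ?_⟩
      · rw [← h5]
        refine le_trans ?_ (Ideal.card_primesOverFinset_le_finrank R (RatFunc F) K hne)
        exact Finset.card_le_card_of_injOn HeightOneSpectrum.asIdeal
          (fun P hP => Finset.mem_preimage.mp hP) hinj'.injOn
      · intro P hP
        rw [Finset.mem_preimage, IsDedekindDomain.mem_primesOverFinset_iff hne]
        refine ⟨P.isPrime, ⟨?_⟩⟩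
        refine hmax.eq_of_le (Ideal.IsPrime.ne_top inferInstance) ?_
        rw [Ideal.span_singleton_le_iff_mem]
        exact (hmem P _).mp hP }

include T hsp hF in
/-- The tower of height `m` gives an intersecting code of length `n = (s ^ 2 - s) * s ^ m` and dimension
at least `(n - s * s ^ m) / 2`. -/
theorem exists_code_of_tower [IsScalarTower F (RatFunc F) K] (hs7 : 7 ≤ s) :
    ∃ C : Submodule F (Fin ((s ^ 2 - s) * s ^ m) → F),
      (∀ c ∈ C, c ≠ 0 → ∀ c' ∈ C, c' ≠ 0 → ∃ i, c i ≠ 0 ∧ c' i ≠ 0) ∧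
      (s ^ 2 - s) * s ^ m ≤ 2 * Module.finrank F C + s * s ^ m := by
  obtain ⟨ι, v, e, e', Cv⟩ := exists_curve_of_tower T (p := p) (by omega) hsp hF
  exact Cv.exists_code p hs7

end TowerCurve

/-! ### The tower in Laurent series -/

section Laurent

open scoped LaurentSeries

variable {F : Type*} [Field F]

/-- The Euler operator `t d/dt` on Laurent series in `t`. -/
noncomputable def euler (f : F⸨X⸩) : F⸨X⸩ where
  coeff n := (n : F) * f.coeff n
  isPWO_support' := f.isPWO_support.mono fun n hn h0 => hn (by simp [h0])

lemma euler_coeff (f : F⸨X⸩) (n : ℤ) : (euler f).coeff n = (n : F) * f.coeff n := rfl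

lemma support_euler (f : F⸨X⸩) : (euler f).support ⊆ f.support :=
  fun n hn h0 => hn (by simp [euler_coeff, h0])

lemma euler_add (f g : F⸨X⸩) : euler (f + g) = euler f + euler g := by
  ext n; simp [euler_coeff, mul_add]

lemma euler_mul (f g : F⸨X⸩) : euler (f * g) = f * euler g + g * euler f := by
  ext n
  rw [HahnSeries.coeff_add, euler_coeff, HahnSeries.coeff_mul,
    HahnSeries.coeff_mul_right' g.isPWO_support (support_euler g), mul_comm g,
    HahnSeries.coeff_mul_left' f.isPWO_support (support_euler f), Finset.mul_sum,
    ← Finset.sum_add_distrib]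
  refine Finset.sum_congr rfl fun ij hij => ?_
  have h := (Finset.mem_antidiagonal.mp hij).2.2
  rw [← h, euler_coeff, euler_coeff]; push_cast; ring

lemma euler_algebraMap (c : F) : euler (algebraMap F F⸨X⸩ c) = 0 := by
  ext n
  rw [euler_coeff, LaurentSeries.algebraMap_apply, HahnSeries.C_apply]
  by_cases hn : n = 0
  · simp [hn]
  · simp [HahnSeries.coeff_single_of_ne hn]

lemma euler_inv_t : euler (HahnSeries.single (-1 : ℤ) (1 : F)) = -HahnSeries.single (-1) 1 := by
  ext n
  rw [euler_coeff, HahnSeries.coeff_neg]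
  by_cases hn : n = -1
  · simp [hn]
  · simp [HahnSeries.coeff_single_of_ne hn]

lemma val_euler (f : F⸨X⸩) :
    (Valued.v : Valuation F⸨X⸩ ℤᵐ⁰) (euler f) ≤ Valued.v f := by
  by_cases h0 : (Valued.v : Valuation F⸨X⸩ ℤᵐ⁰) f = 0
  · have : euler (0 : F⸨X⸩) = 0 := by ext n; simp [euler_coeff]
    rw [(map_eq_zero _).mp h0, this]
  obtain ⟨d, hd⟩ : ∃ d : ℤ, (Valued.v : Valuation F⸨X⸩ ℤᵐ⁰) f = WithZero.exp (-d) :=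
    ⟨-WithZero.log (Valued.v f), by rw [neg_neg, WithZero.exp_log h0]⟩
  rw [hd, LaurentSeries.valuation_le_iff_coeff_lt_eq_zero]
  intro n hn
  rw [euler_coeff, (LaurentSeries.valuation_le_iff_coeff_lt_eq_zero F).mp hd.le n hn, mul_zero]

lemma val_single (n : ℤ) : (Valued.v : Valuation F⸨X⸩ ℤᵐ⁰) (HahnSeries.single n 1) =
    WithZero.exp (-n) := LaurentSeries.valuation_single_zpow F n

lemma val_C {c : F} (hc : c ≠ 0) :
    (Valued.v : Valuation F⸨X⸩ ℤᵐ⁰) (algebraMap F F⸨X⸩ c) = 1 := by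
  have key : ∀ d : F, (Valued.v : Valuation F⸨X⸩ ℤᵐ⁰) (algebraMap F F⸨X⸩ d) ≤ 1 := by
    intro d
    rw [LaurentSeries.val_le_one_iff_eq_coe]
    exact ⟨PowerSeries.C d, by rw [PowerSeries.coe_C, LaurentSeries.algebraMap_apply]⟩
  refine le_antisymm (key c) ?_
  have h := key c⁻¹
  rw [map_inv₀, map_inv₀] at h
  have h0 : (Valued.v : Valuation F⸨X⸩ ℤᵐ⁰) (algebraMap F F⸨X⸩ c) ≠ 0 := by
    rw [Valuation.ne_zero_iff]
    simpa using hc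
  exact (inv_le_one₀ (zero_lt_iff.mpr h0)).mp h

lemma laurent_residue (f : F⸨X⸩) (hf : (Valued.v : Valuation F⸨X⸩ ℤᵐ⁰) f ≤ 1) :
    ∃ c : F, (Valued.v : Valuation F⸨X⸩ ℤᵐ⁰) (f - algebraMap F F⸨X⸩ c) < 1 := by
  refine ⟨f.coeff 0, ?_⟩
  have h1 : (Valued.v : Valuation F⸨X⸩ ℤᵐ⁰) (f - algebraMap F F⸨X⸩ (f.coeff 0)) ≤
      WithZero.exp (-(1 : ℤ)) := by
    rw [LaurentSeries.valuation_le_iff_coeff_lt_eq_zero]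
    intro n hn
    rw [LaurentSeries.algebraMap_apply, HahnSeries.coeff_sub]
    rcases (show n ≤ 0 by omega).eq_or_lt with rfl | h
    · simp
    · have := (LaurentSeries.valuation_le_iff_coeff_lt_eq_zero F (D := 0)).mp
        (by simpa using hf) n h
      rw [this, HahnSeries.C_apply, HahnSeries.coeff_single_of_ne h.ne, sub_zero]
  refine h1.trans_lt ?_
  rw [← WithZero.exp_zero, WithZero.exp_lt_exp]; norm_num

/-- Hensel's lemma for the Artin–Schreier type equation `u ^ s + u = g` with `g` of positive
order. -/
lemma exists_small_root {s : ℕ} (hs : 2 ≤ s) (g : F⸨X⸩)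
    (hg : (Valued.v : Valuation F⸨X⸩ ℤᵐ⁰) g < 1) :
    ∃ u : F⸨X⸩, u ^ s + u = g ∧ (Valued.v : Valuation F⸨X⸩ ℤᵐ⁰) u < 1 := by
  have hv : ∀ g : PowerSeries F, g ∈ Ideal.span {(PowerSeries.X : PowerSeries F)} ↔
      (Valued.v : Valuation F⸨X⸩ ℤᵐ⁰) (g : F⸨X⸩) < 1 := by
    intro g
    rw [LaurentSeries.valuation_def, ← LaurentSeries.coe_algebraMap,
      IsDedekindDomain.HeightOneSpectrum.valuation_lt_one_iff_mem]
    rfl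
  obtain ⟨g, rfl⟩ := (LaurentSeries.val_le_one_iff_eq_coe F g).mp hg.le
  let P : (PowerSeries F)[X] := X ^ s + (X - C g)
  have hP : P.Monic := by
    apply monic_X_pow_add
    rw [degree_X_sub_C]
    exact_mod_cast hs
  obtain ⟨u, hu, hu0⟩ := HenselianRing.is_henselian
    (I := Ideal.span {(PowerSeries.X : PowerSeries F)}) P hP 0
    (by
      simp only [P, eval_add, eval_pow, eval_X, eval_sub, eval_C]
      rw [zero_pow (by omega), zero_add, zero_sub]
      exact neg_mem ((hv g).mpr hg))
    (by
      have h1 : eval 0 (derivative P) = 1 := by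
        have h0 : s - 1 ≠ 0 := by omega
        simp [P, derivative_X_pow, h0]
      rw [h1, map_one]
      exact isUnit_one)
  rw [sub_zero] at hu0
  refine ⟨u, ?_, (hv u).mp hu0⟩
  have : u ^ s + u = g := by
    have := hu.eq_zero
    simp only [P, eval_add, eval_pow, eval_X, eval_sub, eval_C] at this
    linear_combination this
  rw [← this, PowerSeries.coe_add, PowerSeries.coe_pow]

end Laurent

/-- The recursion is invariant under reversing the order of the generators and inverting them. -/
lemma recursion_inv {K : Type*} [Field K] {s : ℕ} (hs : 2 ≤ s) {u w : K} (hu : u ≠ 0)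
    (hw : w ≠ 0) (h : u ^ s + u = phi s w) : w⁻¹ ^ s + w⁻¹ = phi s u⁻¹ := by
  obtain ⟨r, rfl⟩ : ∃ r, s = r + 1 := ⟨s - 1, by omega⟩
  have h1 : phi (r + 1) u⁻¹ = (u ^ (r + 1) + u)⁻¹ := by
    have e1 : u⁻¹ ^ r + 1 = (u ^ r + 1) / u ^ r := by rw [inv_pow]; field_simp; ring
    have e2 : u ^ (r + 1) + u = u * (u ^ r + 1) := by ring
    rw [phi, Nat.add_sub_cancel, e1, e2, pow_succ, inv_pow, mul_inv, div_div_eq_mul_div,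
      mul_right_comm, inv_mul_cancel₀ (pow_ne_zero _ hu), one_mul, div_eq_mul_inv]
  rw [h1, h, phi, inv_div, Nat.add_sub_cancel, inv_pow]
  field_simp
  ring

/-- Solving the tower recursion downwards from the local parameter `t` at infinity of the top
level, `x m = 1 / t`. -/
lemma exists_seq {Ω : Type*} [Field Ω] (v : Valuation Ω ℤᵐ⁰) {s : ℕ} (hs : 2 ≤ s)
    (hroot : ∀ g : Ω, v g < 1 → ∃ u : Ω, u ^ s + u = g ∧ v u < 1) (t : Ω)
    (ht : v t = WithZero.exp (-1)) (m : ℕ) :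
    ∃ x : ℕ → Ω, x m = t⁻¹ ∧ (∀ i < m, x (i + 1) ^ s + x (i + 1) = phi s (x i)) ∧
      ∀ i ≤ m, v (x i) = WithZero.exp ((s : ℤ) ^ (m - i)) := by
  choose! r hr using hroot
  -- `w j` is the inverse of `x (m - j)`
  obtain ⟨w, hw0, hw⟩ : ∃ w : ℕ → Ω, w 0 = t ∧ ∀ j, w (j + 1) = r (phi s (w j)) :=
    ⟨fun j => Nat.rec t (fun _ u => r (phi s u)) j, rfl, fun _ => rfl⟩
  have hval : ∀ j, v (w j) = WithZero.exp (-(s : ℤ) ^ j) := by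
    have hlt : ∀ j, WithZero.exp (-(s : ℤ) ^ j) < (1 : ℤᵐ⁰) := by
      intro j
      rw [← WithZero.exp_zero, WithZero.exp_lt_exp, neg_lt_zero]
      positivity
    intro j
    induction j with
    | zero => rw [pow_zero, hw0, ht]
    | succ j ih =>
      have h1 : v (phi s (w j)) = WithZero.exp (-(s : ℤ) ^ (j + 1)) := by
        rw [val_phi_of_lt _ hs (ih ▸ hlt j), ih, ← WithZero.exp_nsmul]
        congr 1; rw [nsmul_eq_mul]; ring
      obtain ⟨h2, h3⟩ := hr (phi s (w j)) (h1 ▸ hlt _)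
      rw [hw, ← val_N_of_lt _ hs h3, h2, h1]
  have hlt : ∀ j, v (w j) < 1 := by
    intro j
    rw [hval, ← WithZero.exp_zero, WithZero.exp_lt_exp, neg_lt_zero]
    positivity
  have hne : ∀ j, w j ≠ 0 := fun j => by
    rw [← Valuation.ne_zero_iff v, hval]
    exact WithZero.exp_ne_zero
  refine ⟨fun i => (w (m - i))⁻¹, ?_, ?_, ?_⟩
  · simp only [Nat.sub_self, hw0]
  · intro i hi
    obtain ⟨j, hj⟩ : ∃ j, m - (i + 1) = j := ⟨_, rfl⟩
    have hj1 : m - i = j + 1 := by omega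
    simp only [hj, hj1]
    apply recursion_inv hs (hne _) (hne _)
    rw [hw]
    refine (hr _ ?_).1
    rw [val_phi_of_lt _ hs (hlt j)]
    exact pow_lt_one₀ zero_le (hlt j) (by omega)
  · intro i _
    rw [map_inv₀, hval, ← WithZero.exp_neg, neg_neg]

/-! ### Total ramification at infinity gives full degree -/

/-- If the nonzero terms of a finite sum have pairwise distinct values, then the value of a nonzero
sum is the value of one of its nonzero terms. -/
lemma exists_val_sum_eq {L Γ ι : Type*} [Field L] [LinearOrderedCommGroupWithZero Γ]
    (v : Valuation L Γ) (t : Finset ι) (f : ι → L)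
    (h : ∀ i ∈ t, ∀ j ∈ t, f i ≠ 0 → v (f i) = v (f j) → i = j) (h0 : ∑ j ∈ t, f j ≠ 0) :
    ∃ i ∈ t, f i ≠ 0 ∧ v (∑ j ∈ t, f j) = v (f i) := by
  have hne : t.Nonempty := by
    by_contra hcon
    rw [Finset.not_nonempty_iff_eq_empty] at hcon
    simp [hcon] at h0
  obtain ⟨i, hi, hmax⟩ := t.exists_max_image (fun i => v (f i)) hne
  have h1 : v (∑ j ∈ t, f j) ≤ v (f i) := Valuation.map_sum_le v hmax
  have h2 := val_term_le_sum v t f h i hi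
  refine ⟨i, hi, ?_, le_antisymm h1 h2⟩
  intro h3
  rw [h3, map_zero, le_zero_iff, map_eq_zero] at h1
  exact h0 h1

/-- All nonzero elements of `S` have value group inside `c ℤ`. -/
def ValIn {K : Type*} [Field K] (v : Valuation K ℤᵐ⁰) (S : Set K) (c : ℤ) : Prop :=
  ∀ f ∈ S, f ≠ 0 → ∃ k : ℤ, v f = WithZero.exp (k * c)

section Step

variable {k K : Type*} [Field k] [Field K] [Algebra k K] (v : Valuation K ℤᵐ⁰)
  (L : IntermediateField k K) {y : K} {s : ℕ} {c : ℤ}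

lemma step_distinct (hc : 0 < c) (hL : ValIn v (L : Set K) (s * c))
    (hy : v y = WithZero.exp c) (a : ℕ → L) (i j : ℕ) (hi : i < s) (hj : j < s)
    (h0 : (a i : K) * y ^ i ≠ 0) (h : v ((a i : K) * y ^ i) = v ((a j : K) * y ^ j)) : i = j := by
  have hai : (a i : K) ≠ 0 := left_ne_zero_of_mul h0
  have haj : (a j : K) ≠ 0 := by
    intro h1
    rw [h1, zero_mul, map_zero, map_eq_zero] at h
    exact h0 h
  obtain ⟨k₁, h1⟩ := hL _ (a i).2 hai
  obtain ⟨k₂, h2⟩ := hL _ (a j).2 haj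
  rw [map_mul, map_mul, map_pow, map_pow, h1, h2, hy, ← WithZero.exp_nsmul, ← WithZero.exp_nsmul,
    ← WithZero.exp_add, ← WithZero.exp_add, WithZero.exp_inj] at h
  simp only [nsmul_eq_mul] at h
  have h3 : ((k₁ - k₂) * s + (i - j : ℤ)) * c = 0 := by linear_combination h
  have h4 : (k₁ - k₂) * s + (i - j : ℤ) = 0 := by
    rcases mul_eq_zero.mp h3 with h | h
    · exact h
    · omega
  have h5 : (s : ℤ) ∣ (i : ℤ) - j := ⟨k₂ - k₁, by linear_combination h4⟩
  have h6 : (i : ℤ) - j = 0 := by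
    apply Int.eq_zero_of_abs_lt_dvd h5
    rw [abs_lt]; constructor <;> omega
  omega

/-- The step is totally ramified at infinity, hence of full degree `s`. -/
lemma step_deg (hs : 2 ≤ s) (hc : 0 < c) (hL : ValIn v (L : Set K) (s * c))
    (hy : v y = WithZero.exp c) (hG : y ^ s + y ∈ L) :
    stepDeg L y = s ∧ ValIn v (stepField L y : Set K) c := by
  let P : L[X] := X ^ s + (X - C ⟨_, hG⟩)
  have hP : P.Monic := by
    apply monic_X_pow_add
    rw [degree_X_sub_C]
    exact_mod_cast hs
  have hPdeg : P.natDegree = s := by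
    apply natDegree_eq_of_degree_eq_some
    rw [degree_add_eq_left_of_degree_lt] <;> rw [degree_X_pow]
    rw [degree_X_sub_C]
    exact_mod_cast hs
  have hPy : aeval y P = 0 := by
    have : algebraMap L K ⟨_, hG⟩ = y ^ s + y := rfl
    simp [P, this]
  have h_integral : IsIntegral L y := ⟨P, hP, hPy⟩
  have hle : (minpoly L y).natDegree ≤ s := by
    rw [← hPdeg]
    exact natDegree_le_of_dvd (minpoly.dvd L y hPy) hP.ne_zero
  have hy0 : y ≠ 0 := by
    rw [← Valuation.ne_zero_iff v, hy]; exact WithZero.exp_ne_zero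
  have hdeg : (minpoly L y).natDegree = s := by
    by_contra hne
    have hlt : (minpoly L y).natDegree < s := by omega
    have h1 := minpoly.aeval L y
    rw [aeval_eq_sum_range' hlt] at h1
    have h2 := val_term_le_sum v (Finset.range s)
      (fun i => (((minpoly L y).coeff i : L) : K) * y ^ i)
      (fun i hi j hj h0 h => step_distinct v L hc hL hy _ i j (Finset.mem_range.mp hi)
        (Finset.mem_range.mp hj) h0 h) _ (Finset.mem_range.mpr hlt)
    have h3 : ∑ i ∈ Finset.range s, (((minpoly L y).coeff i : L) : K) * y ^ i = 0 := h1
    have h4 : (minpoly L y).coeff (minpoly L y).natDegree = 1 := minpoly.monic h_integral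
    rw [h3, map_zero, le_zero_iff, map_eq_zero, h4] at h2
    simp [hy0] at h2
  refine ⟨?_, ?_⟩
  · change Module.finrank L (IntermediateField.adjoin L {y}) = s
    rw [IntermediateField.adjoin.finrank h_integral, hdeg]
  · intro f hf hf0
    let pb := IntermediateField.adjoin.powerBasis h_integral
    have hdim : pb.dim = s := by
      rw [← hdeg]; exact IntermediateField.adjoin.powerBasis_dim h_integral
    obtain ⟨g, hg, hfg⟩ := pb.exists_eq_aeval ⟨f, hf⟩
    rw [hdim] at hg
    have h1 : f = aeval y g := by
      have := congrArg (algebraMap (IntermediateField.adjoin L {y}) K) hfg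
      rw [← aeval_algebraMap_apply, IntermediateField.adjoin.powerBasis_gen h_integral] at this
      exact this
    rw [aeval_eq_sum_range' hg] at h1
    have h2 : f = ∑ i ∈ Finset.range s, ((g.coeff i : L) : K) * y ^ i := h1
    obtain ⟨i, hi, h0, h3⟩ := exists_val_sum_eq v (Finset.range s)
      (fun i => ((g.coeff i : L) : K) * y ^ i)
      (fun i hi j hj h0 h => step_distinct v L hc hL hy _ i j (Finset.mem_range.mp hi)
        (Finset.mem_range.mp hj) h0 h) (h2 ▸ hf0)
    obtain ⟨k₁, h4⟩ := hL _ (g.coeff i).2 (left_ne_zero_of_mul h0)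
    rw [h2, h3, map_mul, map_pow, h4, hy, ← WithZero.exp_nsmul, ← WithZero.exp_add]
    exact ⟨k₁ * s + i, by congr 1; rw [nsmul_eq_mul]; ring⟩

end Step

section Bot

variable {F K : Type*} [Field F] [Field K] [Algebra F K] [Algebra F[X] K]
    [IsScalarTower F F[X] K] [Algebra (RatFunc F) K] [IsScalarTower F[X] (RatFunc F) K]
    (v : Valuation K ℤᵐ⁰) {c : ℤ}

lemma valIn_poly (hc : 0 < c) (hconst : ∀ a : F, a ≠ 0 → v (algebraMap F K a) = 1)
    (hx : v (algebraMap F[X] K X) = WithZero.exp c) (f : F[X])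
    (hf : algebraMap F[X] K f ≠ 0) : ∃ k : ℤ, v (algebraMap F[X] K f) = WithZero.exp (k * c) := by
  have h1 : algebraMap F[X] K f = ∑ i ∈ Finset.range (f.natDegree + 1),
      algebraMap F K (f.coeff i) * algebraMap F[X] K X ^ i := by
    conv_lhs => rw [f.as_sum_range_C_mul_X_pow]
    simp [IsScalarTower.algebraMap_apply F F[X] K]
  have hval : ∀ i, f.coeff i ≠ 0 → v (algebraMap F K (f.coeff i) * algebraMap F[X] K X ^ i) =
      WithZero.exp (i * c) := by
    intro i hi
    rw [map_mul, map_pow, hx, hconst _ hi, one_mul, ← WithZero.exp_nsmul, nsmul_eq_mul]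
  rw [h1] at hf ⊢
  have hne : ∀ i, algebraMap F K (f.coeff i) * algebraMap F[X] K X ^ i ≠ 0 → f.coeff i ≠ 0 := by
    intro i h h0
    simp [h0] at h
  obtain ⟨i, hi, h0, h3⟩ := exists_val_sum_eq v _ _ (by
    intro i _ j _ h0 h
    have hj : algebraMap F K (f.coeff j) * algebraMap F[X] K X ^ j ≠ 0 := by
      rwa [← Valuation.ne_zero_iff v, ← h, Valuation.ne_zero_iff]
    rw [hval i (hne i h0), hval j (hne j hj), WithZero.exp_inj] at h
    have := mul_right_cancel₀ hc.ne' h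
    exact_mod_cast this) hf
  exact ⟨i, by rw [h3, hval i (hne i h0)]⟩

lemma valIn_bot (hc : 0 < c) (hconst : ∀ a : F, a ≠ 0 → v (algebraMap F K a) = 1)
    (hx : v (algebraMap F[X] K X) = WithZero.exp c) :
    ValIn v ((⊥ : IntermediateField (RatFunc F) K) : Set K) c := by
  rintro f hf hf0
  obtain ⟨r, rfl⟩ := IntermediateField.mem_bot.mp hf
  have h1 : algebraMap (RatFunc F) K r =
      algebraMap F[X] K r.num / algebraMap F[X] K r.denom := by
    conv_lhs => rw [← RatFunc.num_div_denom r]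
    rw [map_div₀, ← IsScalarTower.algebraMap_apply, ← IsScalarTower.algebraMap_apply]
  rw [h1] at hf0 ⊢
  rw [Ne, div_eq_zero_iff, not_or] at hf0
  obtain ⟨k₁, h2⟩ := valIn_poly v hc hconst hx _ hf0.1
  obtain ⟨k₂, h3⟩ := valIn_poly v hc hconst hx _ hf0.2
  exact ⟨k₁ - k₂, by rw [map_div₀, h2, h3, ← WithZero.exp_sub, sub_mul]⟩

end Bot

/-! ### Existence of the tower -/

/-- The element `phi s u` lies in every subfield containing `u`. -/
lemma phi_mem {k K : Type*} [Field k] [Field K] [Algebra k K] (L : IntermediateField k K) (s : ℕ)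
    {u : K} (hu : u ∈ L) : phi s u ∈ L :=
  div_mem (pow_mem hu _) (add_mem (pow_mem hu _) (one_mem _))

lemma Aq_mem {k K : Type*} [Field k] [Field K] [Algebra k K] (L : IntermediateField k K) (s : ℕ)
    {u : K} (hu : u ∈ L) : Aq s u ∈ L :=
  div_mem (pow_mem hu _) (add_mem (pow_mem hu _) (one_mem _))

/-- The counterpart of `le_stepField` and `mem_stepField` without finiteness hypotheses. -/
lemma le_and_mem_stepField {k K : Type*} [Field k] [Field K] [Algebra k K]
    (L : IntermediateField k K) (y : K) : L ≤ stepField L y ∧ y ∈ stepField L y :=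
  ⟨fun x hx => (IntermediateField.adjoin L {y}).algebraMap_mem ⟨x, hx⟩,
    IntermediateField.mem_adjoin_simple_self L y⟩

section Build

variable {F K : Type*} [Field F] [Field K] [Algebra F K] [Algebra F[X] K]
    [IsScalarTower F F[X] K] [Algebra (RatFunc F) K] [IsScalarTower F[X] (RatFunc F) K]

/-- The levels of the tower generated successively by `x 1, x 2, …`. -/
noncomputable def level (x : ℕ → K) (i : ℕ) : IntermediateField (RatFunc F) K :=
  Nat.rec ⊥ (fun i L => stepField L (x (i + 1))) i

lemma level_zero (x : ℕ → K) : level (F := F) x 0 = ⊥ := rfl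

lemma level_succ (x : ℕ → K) (i : ℕ) :
    level (F := F) x (i + 1) = stepField (level x i) (x (i + 1)) := rfl

lemma mem_level (x : ℕ → K) (hx0 : x 0 = algebraMap F[X] K X) {i j : ℕ} (hij : i ≤ j) :
    x i ∈ level (F := F) x j := by
  induction j with
  | zero =>
    obtain rfl : i = 0 := by omega
    rw [hx0, IsScalarTower.algebraMap_apply F[X] (RatFunc F) K]
    exact IntermediateField.algebraMap_mem _ _
  | succ j ih =>
    rw [level_succ]
    rcases hij.eq_or_lt with rfl | h
    · exact (le_and_mem_stepField _ _).2
    · exact (le_and_mem_stepField _ _).1 (ih (by omega))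

lemma level_deg {x : ℕ → K} (hx0 : x 0 = algebraMap F[X] K X) {s m : ℕ} (hs : 2 ≤ s)
    (hrec : ∀ i < m, x (i + 1) ^ s + x (i + 1) = phi s (x i)) (v : Valuation K ℤᵐ⁰)
    (hvx : ∀ i ≤ m, v (x i) = WithZero.exp ((s : ℤ) ^ (m - i)))
    (hconst : ∀ c : F, c ≠ 0 → v (algebraMap F K c) = 1) :
    ∀ i < m, stepDeg (level (F := F) x i) (x (i + 1)) = s := by
  have hpos : ∀ i, 0 < (s : ℤ) ^ (m - i) := fun i => by positivity
  have hstep : ∀ i < m, ValIn v (level (F := F) x i : Set K) ((s : ℤ) ^ (m - i)) →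
      stepDeg (level (F := F) x i) (x (i + 1)) = s ∧
        ValIn v (level (F := F) x (i + 1) : Set K) ((s : ℤ) ^ (m - (i + 1))) := by
    intro i hi h
    refine step_deg v _ hs (hpos (i + 1)) ?_ (hvx (i + 1) hi) ?_
    · rw [← pow_succ', show m - (i + 1) + 1 = m - i by omega]; exact h
    · rw [hrec i hi]; exact phi_mem _ _ (mem_level x hx0 le_rfl)
  have hval : ∀ i ≤ m, ValIn v (level (F := F) x i : Set K) ((s : ℤ) ^ (m - i)) := by
    intro i
    induction i with
    | zero =>
      intro _
      exact valIn_bot v (hpos 0) hconst (hx0 ▸ hvx 0 (by omega))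
    | succ i ih =>
      intro hi
      exact (hstep i (by omega) (ih (by omega))).2
  exact fun i hi => (hstep i hi (hval i hi.le)).1

end Build

section Ambient

variable {F Ω : Type*} [Field F] [Field Ω] [Algebra F Ω] [Algebra F[X] Ω]
    [IsScalarTower F F[X] Ω] [Algebra (RatFunc F) Ω] [IsScalarTower F[X] (RatFunc F) Ω]
    [IsScalarTower F (RatFunc F) Ω] {x : ℕ → Ω} {s m : ℕ}

instance (L : IntermediateField (RatFunc F) Ω) : IsScalarTower F F[X] L :=
  IsScalarTower.of_algebraMap_eq fun c =>
    Subtype.ext (IsScalarTower.algebraMap_apply F F[X] Ω c)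

/-- The subfield of an ambient field generated by `x 0, …, x m`. -/
noncomputable def towerField (F : Type*) {Ω : Type*} [Field F] [Field Ω] [Algebra (RatFunc F) Ω]
    (x : ℕ → Ω) (m : ℕ) : IntermediateField (RatFunc F) Ω :=
  IntermediateField.adjoin (RatFunc F) (x '' Set.Iic m)

lemma mem_towerField {i : ℕ} (hi : i ≤ m) : x i ∈ towerField F x m :=
  IntermediateField.subset_adjoin _ _ ⟨i, hi, rfl⟩

lemma isSeparable_x (hx0 : x 0 = algebraMap F[X] Ω X) (hc : (s : Ω) = 0)
    (hrec : ∀ i < m, x (i + 1) ^ s + x (i + 1) = phi s (x i)) :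
    ∀ i ≤ m, IsSeparable (RatFunc F) (x i) := by
  intro i
  induction i with
  | zero =>
    intro _
    rw [hx0, IsScalarTower.algebraMap_apply F[X] (RatFunc F) Ω]
    exact isSeparable_algebraMap _
  | succ i ih =>
    intro hi
    let E := separableClosure (RatFunc F) Ω
    have hmem : x i ∈ E := mem_separableClosure_iff.mpr (ih (by omega))
    have hphi : phi s (x i) ∈ E := phi_mem E s hmem
    let P : E[X] := X ^ s + (X - C ⟨_, hphi⟩)
    have hcE : (s : E) = 0 := by
      apply Subtype.ext
      simpa using hc
    have hsep : P.Separable := by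
      have hd : derivative P = 1 := by simp [P, derivative_X_pow, hcE]
      rw [separable_def, hd]
      exact isCoprime_one_right
    have hP : aeval (x (i + 1)) P = 0 := by
      have h1 : algebraMap E Ω ⟨_, hphi⟩ = x (i + 1) ^ s + x (i + 1) := (hrec i (by omega)).symm
      simp [P, h1]
    have h2 : IsSeparable E (x (i + 1)) := hsep.of_dvd (minpoly.dvd E _ hP)
    exact IsSeparable.of_algebra_isSeparable_of_isSeparable (RatFunc F) h2

/-- A derivation with `D (x 0) = 1` preserves the field generated by the tower. -/
lemma deriv_mem (D : Derivation F Ω Ω) (hD : D (x 0) = 1) (hx0 : x 0 = algebraMap F[X] Ω X)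
    (hs : 2 ≤ s) (hc : (s : Ω) = 0) (hrec : ∀ i < m, x (i + 1) ^ s + x (i + 1) = phi s (x i))
    {f : Ω} (hf : f ∈ towerField F x m) : D f ∈ towerField F x m := by
  have hx : ∀ i ≤ m, D (x i) ∈ towerField F x m := by
    intro i
    induction i with
    | zero => intro _; rw [hD]; exact one_mem _
    | succ i ih =>
      intro hi
      have h1 : D (x (i + 1)) = Aq s (x i) ^ 2 * D (x i) := by
        rw [← deriv_phi D hs hc, ← hrec i (by omega), map_add, Derivation.leibniz_pow,
          ← Nat.cast_smul_eq_nsmul Ω, hc, zero_smul, zero_add]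
      rw [h1]
      exact mul_mem (pow_mem (Aq_mem _ _ (mem_towerField (by omega))) _) (ih (by omega))
  have hpmem : ∀ g : F[X], algebraMap F[X] Ω g ∈ towerField F x m := by
    intro g
    rw [IsScalarTower.algebraMap_apply F[X] (RatFunc F) Ω]
    exact IntermediateField.algebraMap_mem _ _
  have hpoly : ∀ g : F[X], D (algebraMap F[X] Ω g) ∈ towerField F x m := by
    intro g
    have h1 : algebraMap F[X] Ω g = aeval (x 0) g := by
      rw [hx0]
      rw [aeval_algebraMap_apply, aeval_X_left_apply]
    rw [h1, Derivation.map_aeval, hD, smul_eq_mul, mul_one, hx0, aeval_algebraMap_apply]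
    exact hpmem _
  refine IntermediateField.adjoin_induction (RatFunc F)
    (p := fun f _ => D f ∈ towerField F x m) ?_ ?_ ?_ ?_ ?_ hf
  · rintro _ ⟨i, hi, rfl⟩
    exact hx i hi
  · intro r
    have h1 : algebraMap (RatFunc F) Ω r =
        algebraMap F[X] Ω r.num / algebraMap F[X] Ω r.denom := by
      conv_lhs => rw [← RatFunc.num_div_denom r]
      rw [map_div₀, ← IsScalarTower.algebraMap_apply, ← IsScalarTower.algebraMap_apply]
    rw [h1, Derivation.leibniz_div]
    exact mul_mem (pow_mem (inv_mem (hpmem _)) _)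
      (sub_mem (mul_mem (hpmem _) (hpoly _)) (mul_mem (hpmem _) (hpoly _)))
  · intro f g _ _ hf hg
    rw [map_add]; exact add_mem hf hg
  · intro f hfm hf
    rw [Derivation.leibniz_inv]
    exact mul_mem (neg_mem (pow_mem (inv_mem hfm) _)) hf
  · intro f g hfm hgm hf hg
    rw [Derivation.leibniz]
    exact add_mem (mul_mem hfm hg) (mul_mem hgm hf)

/-- The tower inside an ambient field carrying the recursion, a valuation and a derivation. -/
noncomputable def towerOfAmbient (hx0 : x 0 = algebraMap F[X] Ω X) (hs : 2 ≤ s)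
    (hc : (s : Ω) = 0) (hrec : ∀ i < m, x (i + 1) ^ s + x (i + 1) = phi s (x i))
    (v : Valuation Ω ℤᵐ⁰) (hvx : ∀ i ≤ m, v (x i) = WithZero.exp ((s : ℤ) ^ (m - i)))
    (hconst : ∀ c : F, c ≠ 0 → v (algebraMap F Ω c) = 1)
    (hres : ∀ f, v f ≤ 1 → ∃ c : F, v (f - algebraMap F Ω c) < 1)
    (D : Derivation F Ω Ω) (hD : D (x 0) = 1)
    (hvD : ∀ f, v (D f) ≤ v f * WithZero.exp (-1)) :
    Tower F (towerField F x m) s m :=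
  let y : ℕ → towerField F x m := fun i => if h : i ≤ m then ⟨x i, mem_towerField h⟩ else 0
  have hy : ∀ i ≤ m, (y i : Ω) = x i := fun i hi => by simp [y, hi]
  have hy0 : y 0 = algebraMap F[X] (towerField F x m) X :=
    Subtype.ext ((hy 0 (by omega)).trans hx0)
  have hyrec : ∀ i < m, y (i + 1) ^ s + y (i + 1) = phi s (y i) := fun i hi => by
    apply Subtype.ext
    have h1 : ((phi s (y i) : towerField F x m) : Ω) = phi s (x i) := by
      rw [phi, phi, ← hy i hi.le]; rfl
    rw [h1, ← hrec i hi, ← hy (i + 1) hi]; rfl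
  have hyv : ∀ i ≤ m, v.comap (algebraMap (towerField F x m) Ω) (y i) =
      WithZero.exp ((s : ℤ) ^ (m - i)) := fun i hi => by
    rw [Valuation.comap_apply, ← hvx i hi, ← hy i hi]; rfl
  { x := y
    L := level y
    vinf := v.comap (algebraMap (towerField F x m) Ω)
    D := Derivation.mk'
      { toFun := fun f => ⟨D f, deriv_mem D hD hx0 hs hc hrec f.2⟩
        map_add' := fun f g => Subtype.ext (map_add D (f : Ω) g)
        map_smul' := fun c f => Subtype.ext (D.map_smul c (f : Ω)) }
      fun f g => Subtype.ext (D.leibniz (f : Ω) g)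
    x_zero := hy0
    x_rec := hyrec
    L_zero := rfl
    L_succ := fun _ _ => rfl
    L_top := by
      apply IntermediateField.map_injective (towerField F x m).val
      apply le_antisymm (IntermediateField.map_mono _ le_top)
      rw [← AlgHom.fieldRange_eq_map, IntermediateField.fieldRange_val]
      refine IntermediateField.adjoin_le_iff.mpr ?_
      rintro _ ⟨i, hi, rfl⟩
      exact ⟨y i, mem_level y hy0 hi, hy i hi⟩
    deg := level_deg hy0 hs hyrec _ hyv fun c h0 => hconst c h0
    vinf_x := hyv
    vinf_const := fun c h0 => hconst c h0
    residue := fun f hf => hres f hf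
    D_x := Subtype.ext (by
      change D (y 0 : Ω) = 1
      rw [hy 0 (by omega), hD])
    vinf_D := fun f => hvD f }

end Ambient

section Code

variable {F Ω : Type*} [Field F] [Fintype F] [DecidableEq F] [Field Ω] [Algebra F Ω]

/-- The code construction with all function field data given inside an ambient field. -/
theorem exists_code_of_ambient_algebra [Algebra F[X] Ω]
    [IsScalarTower F F[X] Ω] [Algebra (RatFunc F) Ω] [IsScalarTower F[X] (RatFunc F) Ω]
    [IsScalarTower F (RatFunc F) Ω] {x : ℕ → Ω} {p a s m : ℕ} [Fact p.Prime] [CharP F p]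
    (hsp : s = p ^ a) (hF : Fintype.card F = s ^ 2) (hs7 : 7 ≤ s)
    (hx0 : x 0 = algebraMap F[X] Ω X)
    (hrec : ∀ i < m, x (i + 1) ^ s + x (i + 1) = phi s (x i))
    (v : Valuation Ω ℤᵐ⁰) (hvx : ∀ i ≤ m, v (x i) = WithZero.exp ((s : ℤ) ^ (m - i)))
    (hconst : ∀ c : F, c ≠ 0 → v (algebraMap F Ω c) = 1)
    (hres : ∀ f, v f ≤ 1 → ∃ c : F, v (f - algebraMap F Ω c) < 1)
    (D : Derivation F Ω Ω) (hD : D (x 0) = 1)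
    (hvD : ∀ f, v (D f) ≤ v f * WithZero.exp (-1)) :
    ∃ C : Submodule F (Fin ((s ^ 2 - s) * s ^ m) → F),
      (∀ c ∈ C, c ≠ 0 → ∀ c' ∈ C, c' ≠ 0 → ∃ i, c i ≠ 0 ∧ c' i ≠ 0) ∧
      (s ^ 2 - s) * s ^ m ≤ 2 * Module.finrank F C + s * s ^ m := by
  have hcharΩ : CharP Ω p := charP_of_injective_algebraMap (algebraMap F Ω).injective p
  have hc : (s : Ω) = 0 := by
    rw [hsp, Nat.cast_pow, CharP.cast_eq_zero, zero_pow]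
    rintro rfl
    simp at hsp; omega
  have hsep := isSeparable_x hx0 hc hrec
  have hchar : CharP (towerField F x m) p :=
    charP_of_injective_algebraMap (algebraMap F (towerField F x m)).injective p
  have : Algebra.IsSeparable (RatFunc F) (towerField F x m) := by
    refine (IntermediateField.isSeparable_adjoin_iff_isSeparable _ _).mpr ?_
    rintro _ ⟨i, hi, rfl⟩
    exact hsep i hi
  have : FiniteDimensional (RatFunc F) (towerField F x m) := by
    have hfin : (x '' Set.Iic m).Finite := (Set.finite_Iic m).image x
    have := hfin.to_subtype
    refine IntermediateField.finiteDimensional_adjoin ?_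
    rintro _ ⟨i, hi, rfl⟩
    exact (hsep i hi).isIntegral
  have : IsScalarTower F (RatFunc F) (towerField F x m) :=
    IsScalarTower.of_algebraMap_eq fun c =>
      Subtype.ext (IsScalarTower.algebraMap_apply F (RatFunc F) Ω c)
  exact exists_code_of_tower
    (towerOfAmbient hx0 (by omega) hc hrec v hvx hconst hres D hD hvD) hsp hF hs7

/-- The ambient field receives its `F(X)`-algebra structure from the element `x 0`, and the
derivation is normalized to `D (x 0) = 1`. -/
theorem exists_code_of_ambient {x : ℕ → Ω} {p a s m : ℕ} [Fact p.Prime] [CharP F p]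
    (hsp : s = p ^ a) (hF : Fintype.card F = s ^ 2) (hs7 : 7 ≤ s)
    (hrec : ∀ i < m, x (i + 1) ^ s + x (i + 1) = phi s (x i))
    (v : Valuation Ω ℤᵐ⁰) (hvx : ∀ i ≤ m, v (x i) = WithZero.exp ((s : ℤ) ^ (m - i)))
    (hconst : ∀ c : F, c ≠ 0 → v (algebraMap F Ω c) = 1)
    (hres : ∀ f, v f ≤ 1 → ∃ c : F, v (f - algebraMap F Ω c) < 1)
    (θ : Ω → Ω) (hadd : ∀ f g, θ (f + g) = θ f + θ g)
    (hmul : ∀ f g, θ (f * g) = f * θ g + g * θ f)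
    (hθc : ∀ c : F, θ (algebraMap F Ω c) = 0)
    (hvθ : ∀ f, v (θ f) ≤ v f) (hθx : θ (x m) = -x m) :
    ∃ C : Submodule F (Fin ((s ^ 2 - s) * s ^ m) → F),
      (∀ c ∈ C, c ≠ 0 → ∀ c' ∈ C, c' ≠ 0 → ∃ i, c i ≠ 0 ∧ c' i ≠ 0) ∧
      (s ^ 2 - s) * s ^ m ≤ 2 * Module.finrank F C + s * s ^ m := by
  have hs : 2 ≤ s := by omega
  have hcharΩ : CharP Ω p := charP_of_injective_algebraMap (algebraMap F Ω).injective p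
  have hc : (s : Ω) = 0 := by
    rw [hsp, Nat.cast_pow, CharP.cast_eq_zero, zero_pow]
    rintro rfl
    simp at hsp; omega
  let E : Derivation F Ω Ω := Derivation.mk'
    { toFun := θ
      map_add' := hadd
      map_smul' := fun c f => by
        rw [RingHom.id_apply, Algebra.smul_def, hmul, hθc, mul_zero, add_zero, Algebra.smul_def] }
    hmul
  have hE : ∀ f, E f = θ f := fun _ => rfl
  have hx1 : ∀ i ≤ m, 1 < v (x i) := by
    intro i hi
    rw [hvx i hi, ← WithZero.exp_zero, WithZero.exp_lt_exp]
    positivity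
  -- `E (x (i + 1)) = Aq s (x i) ^ 2 * E (x i)`, and `Aq s (x i)` is a unit at infinity
  have hstep : ∀ i < m, v (E (x (i + 1))) = v (E (x i)) := by
    intro i hi
    have h1 : E (x (i + 1)) = Aq s (x i) ^ 2 * E (x i) := by
      rw [← deriv_phi E hs hc, ← hrec i hi, map_add, Derivation.leibniz_pow,
        ← Nat.cast_smul_eq_nsmul Ω, hc, zero_smul, zero_add]
    rw [h1, map_mul, map_pow, val_Aq_of_gt v hs (hx1 i hi.le), one_pow, one_mul]
  have hall : ∀ i ≤ m, v (E (x i)) = v (E (x 0)) := by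
    intro i
    induction i with
    | zero => intro _; rfl
    | succ i ih => intro hi; rw [hstep i hi, ih (by omega)]
  have hE0 : v (E (x 0)) = WithZero.exp 1 := by
    rw [← hall m le_rfl, hE, hθx, Valuation.map_neg, hvx m le_rfl, Nat.sub_self, pow_zero]
  have hE0' : E (x 0) ≠ 0 := by
    rw [← Valuation.ne_zero_iff v, hE0]; exact WithZero.exp_ne_zero
  have hinj : Function.Injective (aeval (R := F) (x 0)) := by
    rw [injective_iff_map_eq_zero]
    intro f hf
    by_contra hf0
    have h1 : aeval (x 0) f = ∑ i ∈ Finset.range (f.natDegree + 1), f.coeff i • x 0 ^ i :=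
      aeval_eq_sum_range _
    have hval : ∀ i, f.coeff i ≠ 0 → v (f.coeff i • x 0 ^ i) =
        WithZero.exp (i * (s : ℤ) ^ m) := by
      intro i hi
      rw [Algebra.smul_def, map_mul, map_pow, hvx 0 (by omega), hconst _ hi, one_mul,
        ← WithZero.exp_nsmul, nsmul_eq_mul, Nat.sub_zero]
    have hne : ∀ i, f.coeff i • x 0 ^ i ≠ 0 → f.coeff i ≠ 0 := by
      intro i h h0
      simp [h0] at h
    have h2 := val_term_le_sum v (Finset.range (f.natDegree + 1)) (fun i => f.coeff i • x 0 ^ i)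
      (by
        intro i _ j _ h0 h
        have hj : f.coeff j • x 0 ^ j ≠ 0 := by
          rwa [← Valuation.ne_zero_iff v, ← h, Valuation.ne_zero_iff]
        rw [hval i (hne i h0), hval j (hne j hj), WithZero.exp_inj] at h
        have hpos : (s : ℤ) ^ m ≠ 0 := by positivity
        exact_mod_cast mul_right_cancel₀ hpos h) f.natDegree (by simp)
    rw [← h1, hf, map_zero, le_zero_iff, hval] at h2
    · exact WithZero.exp_ne_zero h2
    · rwa [coeff_natDegree, leadingCoeff_ne_zero]
  let iP : Algebra F[X] Ω := (aeval (R := F) (x 0)).toRingHom.toAlgebra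
  let iR : Algebra (RatFunc F) Ω :=
    (IsFractionRing.lift (g := (aeval (R := F) (x 0)).toRingHom) hinj).toAlgebra
  have i1 : IsScalarTower F F[X] Ω := IsScalarTower.of_algebraMap_eq fun c =>
    ((aeval (R := F) (x 0)).commutes c).symm
  have i2 : IsScalarTower F[X] (RatFunc F) Ω := IsScalarTower.of_algebraMap_eq fun f =>
    (IsFractionRing.lift_algebraMap hinj f).symm
  have i3 : IsScalarTower F (RatFunc F) Ω := IsScalarTower.of_algebraMap_eq fun c => by
    rw [IsScalarTower.algebraMap_apply F F[X] (RatFunc F),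
      ← IsScalarTower.algebraMap_apply F[X] (RatFunc F) Ω, ← IsScalarTower.algebraMap_apply]
  refine exists_code_of_ambient_algebra hsp hF hs7 (aeval_X (x 0)).symm hrec v hvx hconst hres
    ((E (x 0))⁻¹ • E) ?_ ?_
  · rw [Derivation.smul_apply, smul_eq_mul, inv_mul_cancel₀ hE0']
  · intro f
    rw [Derivation.smul_apply, smul_eq_mul, map_mul, map_inv₀, hE0, ← WithZero.exp_neg, mul_comm]
    exact mul_le_mul_left (hvθ f) _

open scoped LaurentSeries in
/-- The codes of length `(s ^ 2 - s) * s ^ m` from the tower. -/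
theorem exists_code_large {p a s : ℕ} [Fact p.Prime] [CharP F p]
    (hsp : s = p ^ a) (hF : Fintype.card F = s ^ 2) (hs7 : 7 ≤ s) (m : ℕ) :
    ∃ C : Submodule F (Fin ((s ^ 2 - s) * s ^ m) → F),
      (∀ c ∈ C, c ≠ 0 → ∀ c' ∈ C, c' ≠ 0 → ∃ i, c i ≠ 0 ∧ c' i ≠ 0) ∧
      (s ^ 2 - s) * s ^ m ≤ 2 * Module.finrank F C + s * s ^ m := by
  obtain ⟨x, hxm, hrec, hvx⟩ := exists_seq (Valued.v : Valuation F⸨X⸩ ℤᵐ⁰) (by omega : 2 ≤ s)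
    (exists_small_root (by omega)) (HahnSeries.single 1 1) (val_single 1) m
  refine exists_code_of_ambient hsp hF hs7 hrec Valued.v hvx (fun c => val_C) laurent_residue
    euler euler_add euler_mul euler_algebraMap val_euler ?_
  rw [hxm, HahnSeries.inv_single, inv_one, euler_inv_t]

end Code

/-! ### Random codes over the field with 25 elements -/

section RandomCode

variable {F : Type*} [Field F] [Fintype F] [DecidableEq F]

lemma card_hyperplane {k : ℕ} (u : Fin k → F) (hu : u ≠ 0) :
    (Finset.univ.filter fun c : Fin k → F => u ⬝ᵥ c = 0).card = Fintype.card F ^ (k - 1) := by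
  let φ : (Fin k → F) →ₗ[F] F := dotProductBilin F F u
  have hφ : ∀ c, φ c = u ⬝ᵥ c := fun c => rfl
  have hne : φ ≠ 0 := by
    intro h
    apply hu
    ext i
    have := hφ (Pi.single i 1)
    rw [h, dotProduct_single_one] at this
    simpa using this.symm
  have h1 := LinearMap.finrank_range_add_finrank_ker φ
  rw [LinearMap.range_eq_top.mpr (LinearMap.surjective hne), finrank_top, Module.finrank_self,
    Module.finrank_fin_fun] at h1
  have h2 : Nat.card (LinearMap.ker φ) = Fintype.card F ^ (k - 1) := by
    rw [Module.natCard_eq_pow_finrank (K := F), Nat.card_eq_fintype_card]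
    congr 1; omega
  rw [← h2, ← Fintype.card_subtype, ← Nat.card_eq_fintype_card]
  rfl

/-- A union bound over the columns `g i` of a random generator matrix. -/
lemma exists_good_columns {k n : ℕ}
    (h : (Fintype.card F ^ k) ^ 2 * (2 * Fintype.card F ^ (k - 1)) ^ n <
      (Fintype.card F ^ k) ^ n) :
    ∃ g : Fin n → Fin k → F, ∀ u v : Fin k → F, u ≠ 0 → v ≠ 0 →
      ∃ i, u ⬝ᵥ g i ≠ 0 ∧ v ⬝ᵥ g i ≠ 0 := by
  classical
  by_contra! hcon
  let S : Finset ((Fin k → F) × (Fin k → F)) := Finset.univ.filter fun w => w.1 ≠ 0 ∧ w.2 ≠ 0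
  let B : (Fin k → F) × (Fin k → F) → Finset (Fin k → F) := fun w =>
    Finset.univ.filter (fun c => w.1 ⬝ᵥ c = 0) ∪ Finset.univ.filter (fun c => w.2 ⬝ᵥ c = 0)
  have hsub : (Finset.univ : Finset (Fin n → Fin k → F)) ⊆
      S.biUnion fun w => Fintype.piFinset fun _ => B w := by
    intro g _
    obtain ⟨u, v, hu, hv, huv⟩ := hcon g
    simp only [Finset.mem_biUnion, Fintype.mem_piFinset]
    refine ⟨(u, v), by simp [S, hu, hv], fun i => ?_⟩
    by_cases h0 : u ⬝ᵥ g i = 0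
    · simp [B, h0]
    · simp [B, huv i h0]
  have h1 := Finset.card_le_card hsub
  have h2 : (S.biUnion fun w => Fintype.piFinset fun _ : Fin n => B w).card ≤
      S.card * (2 * Fintype.card F ^ (k - 1)) ^ n := by
    refine Finset.card_biUnion_le_card_mul _ _ _ fun w hw => ?_
    obtain ⟨hu, hv⟩ := (Finset.mem_filter.mp hw).2
    rw [Fintype.card_piFinset, Finset.prod_const, Finset.card_univ, Fintype.card_fin]
    refine Nat.pow_le_pow_left ?_ n
    refine (Finset.card_union_le _ _).trans ?_
    rw [card_hyperplane _ hu, card_hyperplane _ hv, two_mul]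
  have h3 : S.card ≤ (Fintype.card F ^ k) ^ 2 := by
    refine (Finset.card_le_univ _).trans ?_
    rw [Fintype.card_prod, Fintype.card_fun, Fintype.card_fin, sq]
  rw [Finset.card_univ, Fintype.card_fun, Fintype.card_fun, Fintype.card_fin,
    Fintype.card_fin] at h1
  exact absurd ((h1.trans h2).trans (Nat.mul_le_mul_right _ h3)) (not_le.mpr h)

/-- Over the field with `25` elements random codes of rate `3 / 8` are intersecting with positive
probability, because `2 ^ 8 < 25 ^ 2`. -/
theorem exists_code_small (hF : Fintype.card F = 25) (j : ℕ) (hj : 1 ≤ j) :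
    ∃ C : Submodule F (Fin (8 * j) → F),
      (∀ c ∈ C, c ≠ 0 → ∀ c' ∈ C, c' ≠ 0 → ∃ i, c i ≠ 0 ∧ c' i ≠ 0) ∧
      Module.finrank F C = 3 * j := by
  obtain ⟨g, hg⟩ := exists_good_columns (F := F) (k := 3 * j) (n := 8 * j) (by
    rw [hF]
    have h1 : (25 ^ (3 * j)) ^ 2 * 2 ^ (8 * j) < 25 ^ (8 * j) := by
      have e1 : (25 ^ (3 * j)) ^ 2 * 2 ^ (8 * j) = (25 ^ 6 * 2 ^ 8) ^ j := by
        rw [mul_pow, ← pow_mul, ← pow_mul, ← pow_mul]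
        congr 2; omega
      rw [e1, pow_mul]
      exact Nat.pow_lt_pow_left (by norm_num) (by omega)
    have h2 : 25 ^ (3 * j) = 25 ^ (3 * j - 1) * 25 := by
      rw [← pow_succ]; congr 1; omega
    calc (25 ^ (3 * j)) ^ 2 * (2 * 25 ^ (3 * j - 1)) ^ (8 * j)
        = ((25 ^ (3 * j)) ^ 2 * 2 ^ (8 * j)) * (25 ^ (3 * j - 1)) ^ (8 * j) := by
          rw [mul_pow, mul_assoc]
      _ < 25 ^ (8 * j) * (25 ^ (3 * j - 1)) ^ (8 * j) :=
          Nat.mul_lt_mul_of_pos_right h1 (by positivity)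
      _ = (25 ^ (3 * j)) ^ (8 * j) := by rw [h2, mul_pow, mul_comm])
  let φ : (Fin (3 * j) → F) →ₗ[F] (Fin (8 * j) → F) :=
    LinearMap.pi fun i => (dotProductBilin F F).flip (g i)
  have hφ : ∀ u i, φ u i = u ⬝ᵥ g i := fun u i => rfl
  have hinj : Function.Injective φ := by
    rw [injective_iff_map_eq_zero]
    intro u hu
    by_contra h0
    obtain ⟨i, hi, -⟩ := hg u u h0 h0
    rw [← hφ, hu] at hi
    exact hi rfl
  refine ⟨LinearMap.range φ, ?_, ?_⟩
  · rintro _ ⟨u, rfl⟩ hu _ ⟨v, rfl⟩ hv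
    refine hg u v ?_ ?_
    · rintro rfl; exact hu (map_zero φ)
    · rintro rfl; exact hv (map_zero φ)
  · rw [LinearMap.finrank_range_of_inj hinj, Module.finrank_fin_fun]

end RandomCode

/-! ### The intersecting codes -/

/-- If `q ≥ 25` is a prime power which is a perfect square and `ε > 0`, then for every
`N` there are an integer `n ≥ N` and a linear intersecting code `C ⊆ F_qⁿ` with
`dim C / n ≥ 1/2 − 1/(2(q^{1/2} − 1)) − ε`. -/
theorem exists_intersecting_code_of_rate
    (q : ℕ) (hq : IsPrimePow q) (hsq : ∃ s : ℕ, q = s ^ 2) (hq25 : 25 ≤ q)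
    (F : Type*) [Field F] [Fintype F] (hF : Fintype.card F = q)
    (ε : ℝ) (hε : 0 < ε) (N : ℕ) :
    ∃ (n : ℕ), N ≤ n ∧ ∃ C : Submodule F (Fin n → F), IsLinIntersecting C ∧
      (1 : ℝ) / 2 - 1 / (2 * (Real.sqrt q - 1)) - ε ≤ (Module.finrank F C : ℝ) / n := by
  classical
  obtain ⟨s, rfl⟩ := hsq
  have hs5 : 5 ≤ s := by nlinarith
  have hspp : IsPrimePow s := (isPrimePow_pow_iff two_ne_zero).mp hq
  have hsqrt : Real.sqrt ((s ^ 2 : ℕ) : ℝ) = s := by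
    rw [Nat.cast_pow]; exact Real.sqrt_sq (Nat.cast_nonneg s)
  rw [hsqrt]
  obtain ⟨p, a, hp, ha, hpa⟩ := hspp
  have hp' : p.Prime := hp.nat_prime
  rcases hs5.eq_or_lt with rfl | hs5
  · obtain ⟨C, hC, hdim⟩ := exists_code_small (F := F) (by rw [hF]; norm_num) (N + 1) (by omega)
    refine ⟨8 * (N + 1), by omega, C, hC, ?_⟩
    rw [hdim]
    have h0 : (0 : ℝ) < N + 1 := by positivity
    have h1 : ((3 * (N + 1) : ℕ) : ℝ) / ((8 * (N + 1) : ℕ) : ℝ) = 3 / 8 := by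
      push_cast
      rw [mul_div_mul_right _ _ h0.ne']
    rw [h1]
    norm_num
    exact hε.le
  · have hs7 : 7 ≤ s := by
      rcases (show 6 ≤ s from hs5).eq_or_lt with h6 | h6
      · -- `6` is not a prime power
        exfalso
        have h2 : 2 ∣ p ^ a := by rw [hpa, ← h6]; norm_num
        have h3 : 3 ∣ p ^ a := by rw [hpa, ← h6]; norm_num
        have e2 := (Nat.prime_dvd_prime_iff_eq Nat.prime_two hp').mp
          (Nat.prime_two.dvd_of_dvd_pow h2)
        have e3 := (Nat.prime_dvd_prime_iff_eq Nat.prime_three hp').mp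
          (Nat.prime_three.dvd_of_dvd_pow h3)
        omega
      · exact h6
    have : Fact p.Prime := ⟨hp'⟩
    have hchar : CharP F p := by
      obtain ⟨r, hr⟩ := CharP.exists F
      obtain ⟨k, hrp, hk⟩ := FiniteField.card F r
      have h1 : r ∣ p ^ (a * 2) := by
        rw [pow_mul, hpa, ← hF, hk]
        exact dvd_pow_self r k.ne_zero
      have h2 := (Nat.prime_dvd_prime_iff_eq hrp hp').mp (hrp.dvd_of_dvd_pow h1)
      exact h2 ▸ hr
    obtain ⟨C, hC, hdim⟩ := exists_code_large (F := F) hpa.symm hF hs7 N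
    have hpos : 1 ≤ s ^ 2 - s := by
      have : s + 1 ≤ s ^ 2 := by nlinarith
      omega
    have hsN : N ≤ s ^ N := (Nat.lt_pow_self (by omega)).le
    refine ⟨(s ^ 2 - s) * s ^ N, hsN.trans (Nat.le_mul_of_pos_left _ hpos), C, hC, ?_⟩
    have hsR : (7 : ℝ) ≤ s := by exact_mod_cast hs7
    have hsub : ((s ^ 2 - s : ℕ) : ℝ) = s * (s - 1) := by
      rw [Nat.cast_sub (by nlinarith)]; push_cast; ring
    have hdimR : (s * (s - 1) : ℝ) * s ^ N ≤ 2 * Module.finrank F C + s * s ^ N := by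
      rw [← hsub]; exact_mod_cast hdim
    have hn : (0 : ℝ) < s * (s - 1) * s ^ N := by
      have : (0 : ℝ) < s - 1 := by linarith
      positivity
    have hrate : (1 : ℝ) / 2 - 1 / (2 * (s - 1)) ≤
        (Module.finrank F C : ℝ) / (s * (s - 1) * s ^ N) := by
      rw [le_div_iff₀ hn]
      have h1 : (s : ℝ) - 1 ≠ 0 := by linarith
      have h2 : ((1 : ℝ) / 2 - 1 / (2 * (s - 1))) * (s * (s - 1) * s ^ N) =
          (s * (s - 1) * s ^ N - s * s ^ N) / 2 := by
        field_simp
      rw [h2]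
      linarith
    rw [Nat.cast_mul, hsub, Nat.cast_pow]
    linarith
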